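/- arXiv:1707.00038 — 3 statements merged into one kernel-verified Lean document; each statement's English description precedes it below -/
import Mathlib

section
/- (Theorem 2 (iii), Huang–Aronson) Suppose I > 1, β > 0, and γ ≠ 0 or R ≠ 0. Then there exists an integer N₀ such that for every N > N₀ the normalized discrete rotating wave solution of the Josephson junction system with LRC load is unique: if {ψ, Q} and {ψ̃, Q̃} are both normalized DRW solutions with N junctions, of periods T and T̃ respectively, then T = T̃, ψ = ψ̃ and Q' = Q̃'. -/
open Real

/-- `ψ` is a running function of period `T`: `ψ (t + T) = ψ t + 2π` for all `t`. -/
def IsRunning (ψ : ℝ → ℝ) (T : ℝ) : Prop :=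
  ∀ t : ℝ, ψ (t + T) = ψ t + 2 * Real.pi

/-- The Josephson junction system with LRC load:
`β φ_k'' + φ_k' + sin (φ_k) + Q' = I` for each junction `k`, together with the load
equation `L Q'' + R Q' + γ Q = (1/N) ∑_j φ_j'`. -/
def JJSystem (N : ℕ) (β I L R γ : ℝ) (φ : Fin N → ℝ → ℝ) (Q : ℝ → ℝ) : Prop :=
  (∀ k : Fin N, ∀ t : ℝ,
      β * deriv (deriv (φ k)) t + deriv (φ k) t + Real.sin (φ k t) + deriv Q t = I) ∧
  (∀ t : ℝ,
      L * deriv (deriv Q) t + R * deriv Q t + γ * Q t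
        = (1 / (N : ℝ)) * ∑ j : Fin N, deriv (φ j) t)

/-- `{ψ, Q}` is a normalized discrete rotating wave solution of period `T` of the
`N`-junction Josephson system with LRC load: `ψ` is a running function of period `T`
with `ψ 0 = 0`, and the tuple `φ_j(t) = ψ(t − (j−1)T/N)`, `Q` solves the system. -/
def IsNormalizedDRW (N : ℕ) (β I L R γ : ℝ) (ψ Q : ℝ → ℝ) (T : ℝ) : Prop :=
  0 < T ∧ ContDiff ℝ 2 ψ ∧ ContDiff ℝ 2 Q ∧ IsRunning ψ T ∧ ψ 0 = 0 ∧
  JJSystem N β I L R γ (fun j t => ψ (t - ((j : ℕ) : ℝ) * T / (N : ℝ))) Q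

/-!
In the time variable for which the period is `2π`, averaging over the `N` equally shifted junctions
leaves only zero-mean fluctuations of period `2π / N`. They respond linearly to the averaged
supercurrent and are of order `1 / N`, because a zero-mean function of short period is bounded by
its derivative times the period. For large `N` each junction is therefore a small perturbation of a
single junction with constant bias, and an energy argument shows that it rotates monotonically, so
that its voltage is a function of its phase. Comparing two waves in the phase plane bounds their
distance by a multiple of the discrepancy `G` of their load currents at equal phase. Conversely the
linear response bounds `G` by a multiple of that distance over `N`, whence `G ≤ C * G / N` and
`G = 0` for large `N`.
-/

open Filter Function Set Topology

section Calculus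

theorem abs_image_sub_le_of_abs_deriv_le {f : ℝ → ℝ} {C : ℝ} (hf : Differentiable ℝ f)
    (hC : ∀ x, |deriv f x| ≤ C) (x y : ℝ) : |f x - f y| ≤ C * |x - y| :=
  convex_univ.norm_image_sub_le_of_norm_deriv_le (fun _ _ => hf _) (fun _ _ => hC _)
    (mem_univ y) (mem_univ x)

theorem abs_deriv_le_of_abs_image_sub_le {f : ℝ → ℝ} {C : ℝ} (hC : 0 ≤ C)
    (hf : ∀ x y, |f x - f y| ≤ C * |x - y|) (x : ℝ) : |deriv f x| ≤ C := by
  rw [← norm_eq_abs]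
  exact norm_deriv_le_of_lip' hC (Eventually.of_forall fun y => hf y x)

theorem periodic_deriv {f : ℝ → ℝ} {c : ℝ} (hf : Periodic f c) : Periodic (deriv f) c := fun x => by
  rw [← deriv_comp_add_const, funext hf]

theorem exists_forall_le_of_periodic {f : ℝ → ℝ} {c : ℝ} (hf : Continuous f) (hp : Periodic f c)
    (hc : c ≠ 0) : ∃ x, ∀ y, f y ≤ f x := by
  obtain ⟨_, ⟨x, rfl⟩, hx⟩ := (hp.compact_of_continuous hc hf).exists_isGreatest (range_nonempty f)
  exact ⟨x, fun y => hx (mem_range_self y)⟩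

theorem exists_forall_ge_of_periodic {f : ℝ → ℝ} {c : ℝ} (hf : Continuous f) (hp : Periodic f c)
    (hc : c ≠ 0) : ∃ x, ∀ y, f x ≤ f y := by
  obtain ⟨_, ⟨x, rfl⟩, hx⟩ := (hp.compact_of_continuous hc hf).exists_isLeast (range_nonempty f)
  exact ⟨x, fun y => hx (mem_range_self y)⟩

theorem exists_forall_abs_le_of_periodic {f : ℝ → ℝ} {c : ℝ} (hf : Continuous f)
    (hp : Periodic f c) (hc : c ≠ 0) : ∃ x, ∀ y, |f y| ≤ |f x| :=
  exists_forall_le_of_periodic hf.abs (hp.comp abs) hc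

theorem deriv_eq_zero_of_forall_abs_le {f : ℝ → ℝ} {x : ℝ} (hx : ∀ y, |f y| ≤ |f x|) :
    deriv f x = 0 := by
  rcases le_total 0 (f x) with h | h
  · refine IsLocalMax.deriv_eq_zero (Eventually.of_forall fun y => ?_)
    simpa only [abs_of_nonneg h] using (le_abs_self _).trans (hx y)
  · refine IsLocalMin.deriv_eq_zero (Eventually.of_forall fun y => ?_)
    linarith [neg_abs_le (f y), hx y, abs_of_nonpos h]

theorem abs_mul_le_of_abs_mul_deriv_add_mul_le {f : ℝ → ℝ} {c d k A : ℝ} (hf : Continuous f)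
    (hp : Periodic f d) (hd : d ≠ 0) (h : ∀ x, |c * deriv f x + k * f x| ≤ A) (x : ℝ) :
    |k * f x| ≤ A := by
  obtain ⟨z, hz⟩ := exists_forall_abs_le_of_periodic hf hp hd
  calc |k * f x| ≤ |k * f z| := by
        simpa only [abs_mul] using mul_le_mul_of_nonneg_left (hz x) (abs_nonneg k)
    _ ≤ A := by simpa [deriv_eq_zero_of_forall_abs_le hz] using h z

theorem abs_le_mul_of_periodic {f : ℝ → ℝ} {c z K : ℝ} (hp : Periodic f c) (hc : 0 < c)
    (hf : Differentiable ℝ f) (hz : f z = 0) (hK : ∀ x, |deriv f x| ≤ K) (x : ℝ) :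
    |f x| ≤ c * K := by
  obtain ⟨y, hy, hxy⟩ := hp.exists_mem_Ico hc x z
  calc |f x| ≤ K * |y - z| := by
        simpa only [hxy, hz, sub_zero] using abs_image_sub_le_of_abs_deriv_le hf hK y z
    _ ≤ K * c := by
        gcongr
        · exact (abs_nonneg _).trans (hK x)
        · exact abs_le.2 ⟨by linarith [hy.1], by linarith [hy.2]⟩
    _ = c * K := mul_comm K c

end Calculus

section Fluctuations

/-- The zero-mean functions of period `h`, encoded as those possessing an `h`-periodic primitive. -/
def fluctuations (h : ℝ) : Submodule ℝ (ℝ → ℝ) where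
  carrier := {f | ∃ F : ℝ → ℝ, Periodic F h ∧ ∀ x, HasDerivAt F (f x) x}
  add_mem' := fun ⟨F, hF, hF'⟩ ⟨G, hG, hG'⟩ => ⟨F + G, hF.add hG, fun x => (hF' x).add (hG' x)⟩
  zero_mem' := ⟨0, fun _ => rfl, fun x => hasDerivAt_const x 0⟩
  smul_mem' := fun c _ ⟨F, hF, hF'⟩ => ⟨c • F, hF.smul c, fun x => (hF' x).const_smul c⟩

variable {f : ℝ → ℝ} {h : ℝ}

theorem deriv_mem_fluctuations (hf : Differentiable ℝ f) (hp : Periodic f h) :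
    deriv f ∈ fluctuations h :=
  ⟨f, hp, fun x => (hf x).hasDerivAt⟩

theorem periodic_of_mem_fluctuations (hf : f ∈ fluctuations h) : Periodic f h := by
  obtain ⟨F, hF, hF'⟩ := hf
  have hderiv : deriv F = f := funext fun x => (hF' x).deriv
  exact hderiv ▸ periodic_deriv hF

theorem comp_add_const_mem_fluctuations (hf : f ∈ fluctuations h) (δ : ℝ) :
    (fun x => f (x + δ)) ∈ fluctuations h := by
  obtain ⟨F, hF, hF'⟩ := hf
  exact ⟨fun x => F (x + δ), hF.add_const δ, fun x => (hF' (x + δ)).comp_add_const x δ⟩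

theorem exists_eq_zero_of_mem_fluctuations (hf : f ∈ fluctuations h) (hh : 0 < h) :
    ∃ z, f z = 0 := by
  obtain ⟨F, hF, hF'⟩ := hf
  have hcont : Continuous F := continuous_iff_continuousAt.2 fun y => (hF' y).continuousAt
  obtain ⟨z, -, hz⟩ :=
    exists_hasDerivAt_eq_zero hh hcont.continuousOn hF.eq.symm fun y _ => hF' y
  exact ⟨z, hz⟩

theorem abs_le_mul_of_mem_fluctuations {K : ℝ} (hf : f ∈ fluctuations h) (hh : 0 < h)
    (hd : Differentiable ℝ f) (hK : ∀ x, |deriv f x| ≤ K) (x : ℝ) : |f x| ≤ h * K :=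
  have ⟨_, hz⟩ := exists_eq_zero_of_mem_fluctuations hf hh
  abs_le_mul_of_periodic (periodic_of_mem_fluctuations hf) hh hd hz hK x

end Fluctuations

section LinearResponse

/-- The parameters of the junctions and the load: junction capacitance `β`, load inductance `L`,
load resistance `R` and inverse load capacitance `γ`. -/
structure LRCCircuit where
  (β L R γ : ℝ)
  β_pos : 0 < β
  L_nonneg : 0 ≤ L
  R_nonneg : 0 ≤ R
  γ_nonneg : 0 ≤ γ

/-- The fluctuations, of period `h`, of the averaged junction voltage `a`, of the load current `b`
and of the capacitor voltage `e`. -/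
structure IsFluctuatingState (h : ℝ) (a b e : ℝ → ℝ) : Prop where
  differentiable_a : Differentiable ℝ a
  differentiable_b : Differentiable ℝ b
  differentiable_e : Differentiable ℝ e
  a_mem : a ∈ fluctuations h
  b_mem : b ∈ fluctuations h
  e_mem : e ∈ fluctuations h

namespace IsFluctuatingState

variable {h : ℝ} {a a₁ a₂ b b₁ b₂ e e₁ e₂ : ℝ → ℝ}

theorem zero : IsFluctuatingState h 0 0 0 where
  differentiable_a := differentiable_const 0
  differentiable_b := differentiable_const 0
  differentiable_e := differentiable_const 0
  a_mem := zero_mem _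
  b_mem := zero_mem _
  e_mem := zero_mem _

theorem sub (h₁ : IsFluctuatingState h a₁ b₁ e₁) (h₂ : IsFluctuatingState h a₂ b₂ e₂) :
    IsFluctuatingState h (a₁ - a₂) (b₁ - b₂) (e₁ - e₂) where
  differentiable_a := h₁.differentiable_a.sub h₂.differentiable_a
  differentiable_b := h₁.differentiable_b.sub h₂.differentiable_b
  differentiable_e := h₁.differentiable_e.sub h₂.differentiable_e
  a_mem := sub_mem h₁.a_mem h₂.a_mem
  b_mem := sub_mem h₁.b_mem h₂.b_mem
  e_mem := sub_mem h₁.e_mem h₂.e_mem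

theorem comp_add_const (hs : IsFluctuatingState h a b e) (δ : ℝ) :
    IsFluctuatingState h (fun x => a (x + δ)) (fun x => b (x + δ)) (fun x => e (x + δ)) where
  differentiable_a := hs.differentiable_a.comp (differentiable_id.add_const δ)
  differentiable_b := hs.differentiable_b.comp (differentiable_id.add_const δ)
  differentiable_e := hs.differentiable_e.comp (differentiable_id.add_const δ)
  a_mem := comp_add_const_mem_fluctuations hs.a_mem δ
  b_mem := comp_add_const_mem_fluctuations hs.b_mem δ
  e_mem := comp_add_const_mem_fluctuations hs.e_mem δ

end IsFluctuatingState

namespace LRCCircuit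

/-- The averaged circuit equations at frequency `ω`, which become linear when the fluctuation of the
averaged supercurrent is regarded as an external forcing `f`. -/
structure IsResponse (p : LRCCircuit) (ω h : ℝ) (f a b e : ℝ → ℝ) : Prop
    extends IsFluctuatingState h a b e where
  junction : ∀ x, p.β * ω * deriv a x + a x + b x + f x = 0
  inductor : ∀ x, p.L * ω * deriv b x + p.R * b x + e x - a x = 0
  capacitor : ∀ x, ω * deriv e x - p.γ * b x = 0

/-- Solutions of the unforced linearized circuit up to an error of size `S`. The error in the
inductor equation carries the factor `L` so that this equation stays exact when it is algebraic. -/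
structure IsApproxResponse (p : LRCCircuit) (ω h S : ℝ) (a b e : ℝ → ℝ) : Prop
    extends IsFluctuatingState h a b e where
  junction : ∀ x, |p.β * ω * deriv a x + a x + b x| ≤ S
  inductor : ∀ x, |p.L * ω * deriv b x + p.R * b x + e x - a x| ≤ p.L * S
  capacitor : ∀ x, |ω * deriv e x - p.γ * b x| ≤ S

variable {p : LRCCircuit}

namespace IsApproxResponse

variable {ω h S A B E : ℝ} {a b e : ℝ → ℝ}

theorem error_nonneg (hr : p.IsApproxResponse ω h S a b e) : 0 ≤ S :=
  (abs_nonneg _).trans (hr.junction 0)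

theorem abs_a_le (hr : p.IsApproxResponse ω h S a b e) (hω : 0 < ω) (hh : 0 < h)
    (hB : ∀ x, |b x| ≤ B) (x : ℝ) : |a x| ≤ h * (2 * (S + B) / (p.β * ω)) := by
  have hβω : 0 < p.β * ω := mul_pos p.β_pos hω
  have hdamped : ∀ x, |a x| ≤ S + B := fun x => by
    have h₁ := abs_mul_le_of_abs_mul_deriv_add_mul_le (c := p.β * ω) (k := 1) (A := S + B)
      hr.differentiable_a.continuous (periodic_of_mem_fluctuations hr.a_mem) hh.ne' (fun y => ?_) x
    · simpa only [one_mul] using h₁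
    · have h₂ := abs_le.1 (hr.junction y)
      have h₃ := abs_le.1 (hB y)
      exact abs_le.2 ⟨by linarith, by linarith⟩
  refine abs_le_mul_of_mem_fluctuations hr.a_mem hh hr.differentiable_a (fun y => ?_) x
  rw [le_div_iff₀' hβω, ← abs_of_pos hβω, ← abs_mul]
  have h₂ := abs_le.1 (hr.junction y)
  have h₃ := abs_le.1 (hB y)
  have h₄ := abs_le.1 (hdamped y)
  exact abs_le.2 ⟨by linarith, by linarith⟩

theorem abs_e_le (hr : p.IsApproxResponse ω h S a b e) (hω : 0 < ω) (hh : 0 < h)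
    (hB : ∀ x, |b x| ≤ B) (x : ℝ) : |e x| ≤ h * ((S + p.γ * B) / ω) := by
  refine abs_le_mul_of_mem_fluctuations hr.e_mem hh hr.differentiable_e (fun y => ?_) x
  rw [le_div_iff₀' hω, ← abs_of_pos hω, ← abs_mul]
  have hγB : |p.γ * b y| ≤ p.γ * B := by
    rw [abs_mul, abs_of_nonneg p.γ_nonneg]
    exact mul_le_mul_of_nonneg_left (hB y) p.γ_nonneg
  have h₁ := abs_le.1 (hr.capacitor y)
  have h₂ := abs_le.1 hγB
  exact abs_le.2 ⟨by linarith, by linarith⟩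

theorem abs_inductor_le (hr : p.IsApproxResponse ω h S a b e) (hA : ∀ x, |a x| ≤ A)
    (hE : ∀ x, |e x| ≤ E) (x : ℝ) :
    |p.L * ω * deriv b x + p.R * b x| ≤ (p.L + 1) * (S + A + E) := by
  have h₁ := abs_le.1 (hr.inductor x)
  have h₂ := abs_le.1 (hA x)
  have h₃ := abs_le.1 (hE x)
  have h₄ : 0 ≤ p.L * (A + E) + S :=
    add_nonneg (mul_nonneg p.L_nonneg (by linarith)) hr.error_nonneg
  exact abs_le.2 ⟨by linarith, by linarith⟩

theorem abs_b_le_of_R_pos (hr : p.IsApproxResponse ω h S a b e) (hR : 0 < p.R) (hh : 0 < h)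
    (hA : ∀ x, |a x| ≤ A) (hE : ∀ x, |e x| ≤ E) (x : ℝ) :
    |b x| ≤ (p.L + 1) / p.R * (S + A + E) := by
  have hdamped := abs_mul_le_of_abs_mul_deriv_add_mul_le hr.differentiable_b.continuous
    (periodic_of_mem_fluctuations hr.b_mem) hh.ne' (hr.abs_inductor_le hA hE) x
  rw [abs_mul, abs_of_pos hR] at hdamped
  rwa [div_mul_eq_mul_div, le_div_iff₀' hR]

theorem abs_b_le_of_R_eq_zero {ω₀ : ℝ} (hr : p.IsApproxResponse ω h S a b e) (hR : p.R = 0)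
    (hL : 0 < p.L) (hω₀ : 0 < ω₀) (hω : ω₀ ≤ ω) (hh : 0 < h) (h1 : h ≤ 1)
    (hA : ∀ x, |a x| ≤ A) (hE : ∀ x, |e x| ≤ E) (x : ℝ) :
    |b x| ≤ (p.L + 1) / (p.L * ω₀) * (S + A + E) := by
  have hLω : 0 < p.L * ω₀ := mul_pos hL hω₀
  have hderiv : ∀ y, |deriv b y| ≤ (p.L + 1) / (p.L * ω₀) * (S + A + E) := fun y => by
    rw [div_mul_eq_mul_div, le_div_iff₀' hLω]
    calc p.L * ω₀ * |deriv b y| ≤ p.L * ω * |deriv b y| := by gcongr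
      _ = |p.L * ω * deriv b y + p.R * b y| := by
        rw [hR, zero_mul, add_zero, abs_mul, abs_of_pos (mul_pos hL (hω₀.trans_le hω))]
      _ ≤ (p.L + 1) * (S + A + E) := hr.abs_inductor_le hA hE y
  exact (abs_le_mul_of_mem_fluctuations hr.b_mem hh hr.differentiable_b hderiv x).trans
    (mul_le_of_le_one_left ((abs_nonneg _).trans (hderiv x)) h1)

theorem abs_b_le_of_L_eq_zero (hr : p.IsApproxResponse ω h S a b e) (hR : p.R = 0) (hL : p.L = 0)
    (hA : ∀ x, |a x| ≤ A) (hE : ∀ x, |e x| ≤ E) (x : ℝ) :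
    |b x| ≤ (1 + p.β) * (S + A + E) := by
  have hea : e = a := funext fun y => by simpa [hL, hR, sub_eq_zero] using hr.inductor y
  have hβ := p.β_pos
  have hβγ : 0 ≤ p.β * p.γ := mul_nonneg hβ.le p.γ_nonneg
  have hcap : |p.β * (ω * deriv a x - p.γ * b x)| ≤ p.β * S := by
    rw [abs_mul, abs_of_pos hβ, ← hea]
    exact mul_le_mul_of_nonneg_left (hr.capacitor x) hβ.le
  have hAE : 0 ≤ p.β * (A + E) + E := by
    have hA0 := (abs_nonneg _).trans (hA x)
    have hE0 := (abs_nonneg _).trans (hE x)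
    positivity
  -- eliminating `a'` between the junction and the capacitor equation
  calc |b x| ≤ |(1 + p.β * p.γ) * b x| := by
        rw [abs_mul, abs_of_nonneg (by linarith : 0 ≤ 1 + p.β * p.γ)]
        exact le_mul_of_one_le_left (abs_nonneg _) (by linarith)
    _ ≤ (1 + p.β) * (S + A + E) := by
        have h₁ := abs_le.1 (hr.junction x)
        have h₂ := abs_le.1 (hA x)
        have h₃ := abs_le.1 hcap
        exact abs_le.2 ⟨by linarith, by linarith⟩

end IsApproxResponse

theorem exists_abs_b_le (p : LRCCircuit) {ω₀ : ℝ} (hω₀ : 0 < ω₀) :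
    ∃ K > 0, ∀ ω ≥ ω₀, ∀ h ∈ Ioc (0 : ℝ) 1, ∀ {S A E : ℝ} {a b e : ℝ → ℝ},
      p.IsApproxResponse ω h S a b e → (∀ x, |a x| ≤ A) → (∀ x, |e x| ≤ E) →
      ∀ x, |b x| ≤ K * (S + A + E) := by
  have hL1 : 0 < p.L + 1 := by linarith [p.L_nonneg]
  have hβ := p.β_pos
  rcases p.R_nonneg.lt_or_eq' with hR | hR
  · exact ⟨(p.L + 1) / p.R, by positivity, fun ω _ h hh _ _ _ _ _ _ hr hA hE =>
      hr.abs_b_le_of_R_pos hR hh.1 hA hE⟩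
  rcases p.L_nonneg.lt_or_eq' with hL | hL
  · exact ⟨(p.L + 1) / (p.L * ω₀), by positivity, fun ω hω h hh _ _ _ _ _ _ hr hA hE =>
      hr.abs_b_le_of_R_eq_zero hR hL hω₀ hω hh.1 hh.2 hA hE⟩
  · exact ⟨1 + p.β, by positivity, fun ω _ h _ _ _ _ _ _ _ hr hA hE =>
      hr.abs_b_le_of_L_eq_zero hR hL hA hE⟩

theorem exists_abs_a_add_abs_e_le (p : LRCCircuit) {ω₀ : ℝ} (hω₀ : 0 < ω₀) :
    ∃ K > 0, ∀ ω ≥ ω₀, ∀ h > 0, ∀ {S B : ℝ} {a b e : ℝ → ℝ},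
      p.IsApproxResponse ω h S a b e → (∀ x, |b x| ≤ B) →
      ∀ x y, |a x| + |e y| ≤ h * (K * (S + B)) := by
  have hβ := p.β_pos
  have hγ := p.γ_nonneg
  refine ⟨2 / (p.β * ω₀) + (1 + p.γ) / ω₀, by positivity, ?_⟩
  intro ω hω h hh S B a b e hr hB x y
  have hω0 : 0 < ω := hω₀.trans_le hω
  have hB0 : 0 ≤ B := (abs_nonneg _).trans (hB 0)
  have hS0 := hr.error_nonneg
  calc |a x| + |e y| ≤ h * (2 * (S + B) / (p.β * ω)) + h * ((S + p.γ * B) / ω) :=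
        add_le_add (hr.abs_a_le hω0 hh hB x) (hr.abs_e_le hω0 hh hB y)
    _ ≤ h * (2 * (S + B) / (p.β * ω₀)) + h * ((1 + p.γ) * (S + B) / ω₀) := by
        gcongr
        nlinarith
    _ = h * ((2 / (p.β * ω₀) + (1 + p.γ) / ω₀) * (S + B)) := by ring

theorem exists_forall_isApproxResponse_le (p : LRCCircuit) {ω₀ : ℝ} (hω₀ : 0 < ω₀) :
    ∃ C > 0, ∀ᶠ h in 𝓝[>] 0, ∀ ω ≥ ω₀, ∀ {S : ℝ} {a b e : ℝ → ℝ},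
      p.IsApproxResponse ω h S a b e →
      ∀ x, |a x| ≤ C * S ∧ |b x| ≤ C * S ∧ |e x| ≤ C * S := by
  obtain ⟨K, hK, hb⟩ := p.exists_abs_b_le hω₀
  obtain ⟨K', hK', hae⟩ := p.exists_abs_a_add_abs_e_le hω₀
  refine ⟨1 + 2 * K, by positivity, ?_⟩
  have hsmall : Ioc 0 (min 1 (1 / (2 * (K' * (1 + K))))) ∈ 𝓝[>] (0 : ℝ) :=
    Ioc_mem_nhdsGT (by positivity)
  filter_upwards [hsmall] with h hh ω hω S a b e hr
  have hS0 := hr.error_nonneg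
  have hh1 : h ≤ 1 := hh.2.trans (min_le_left _ _)
  have hhK : h * (K' * (1 + K)) ≤ 1 / 2 := by
    have h₁ := hh.2.trans (min_le_right _ _)
    rw [le_div_iff₀ (by positivity)] at h₁
    linarith
  obtain ⟨za, hza⟩ := exists_forall_abs_le_of_periodic hr.differentiable_a.continuous
    (periodic_of_mem_fluctuations hr.a_mem) hh.1.ne'
  obtain ⟨ze, hze⟩ := exists_forall_abs_le_of_periodic hr.differentiable_e.continuous
    (periodic_of_mem_fluctuations hr.e_mem) hh.1.ne'
  have hbB := hb ω hω h ⟨hh.1, hh1⟩ hr hza hze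
  have hsum : |a za| + |e ze| ≤ S := by
    have h₁ := hae ω hω h hh.1 hr hbB za ze
    have h₂ : h * (K' * (S + K * (S + |a za| + |e ze|))) ≤
        h * (K' * (1 + K)) * (S + |a za| + |e ze|) := by
      have h₃ : 0 ≤ h * K' * (|a za| + |e ze|) := by have := hh.1; positivity
      linarith
    have h₃ := mul_le_mul_of_nonneg_right hhK (by positivity : 0 ≤ S + |a za| + |e ze|)
    linarith
  have hKS : 0 ≤ K * S := mul_nonneg hK.le hS0
  have hKsum := mul_le_mul_of_nonneg_left hsum hK.le
  refine fun x => ⟨?_, ?_, ?_⟩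
  · linarith [hza x, abs_nonneg (e ze)]
  · linarith [hbB x]
  · linarith [hze x, abs_nonneg (a za)]

namespace IsResponse

variable {ω ω₁ ω₂ h σ τ : ℝ} {f f₁ f₂ a a₁ a₂ b b₁ b₂ e e₁ e₂ : ℝ → ℝ}

theorem zero : p.IsResponse ω h 0 0 0 0 where
  toIsFluctuatingState := .zero
  junction := by simp
  inductor := by simp
  capacitor := by simp

theorem comp_add_const (hr : p.IsResponse ω h f a b e) (δ : ℝ) :
    p.IsResponse ω h (fun x => f (x + δ)) (fun x => a (x + δ)) (fun x => b (x + δ))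
      (fun x => e (x + δ)) where
  toIsFluctuatingState := hr.toIsFluctuatingState.comp_add_const δ
  junction x := by simpa only [deriv_comp_add_const] using hr.junction (x + δ)
  inductor x := by simpa only [deriv_comp_add_const] using hr.inductor (x + δ)
  capacitor x := by simpa only [deriv_comp_add_const] using hr.capacitor (x + δ)

theorem sub (hr₁ : p.IsResponse ω₁ h f₁ a₁ b₁ e₁) (hr₂ : p.IsResponse ω₂ h f₂ a₂ b₂ e₂)
    (hσ : ∀ x, |f₁ x - f₂ x| ≤ σ) (ha : ∀ x, |(ω₁ - ω₂) * deriv a₂ x| ≤ τ)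
    (hb : ∀ x, |(ω₁ - ω₂) * deriv b₂ x| ≤ τ) (he : ∀ x, |(ω₁ - ω₂) * deriv e₂ x| ≤ τ) :
    p.IsApproxResponse ω₁ h (σ + (p.β + 1) * τ) (a₁ - a₂) (b₁ - b₂) (e₁ - e₂) := by
  have hσ0 : 0 ≤ σ := (abs_nonneg _).trans (hσ 0)
  have hτ0 : 0 ≤ τ := (abs_nonneg _).trans (ha 0)
  have hβτ : 0 ≤ p.β * τ := mul_nonneg p.β_pos.le hτ0
  have hmul : ∀ {c t : ℝ}, 0 ≤ c → |t| ≤ τ → |c * t| ≤ c * τ := fun hc ht => by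
    rw [abs_mul, abs_of_nonneg hc]
    exact mul_le_mul_of_nonneg_left ht hc
  refine ⟨hr₁.toIsFluctuatingState.sub hr₂.toIsFluctuatingState,
    fun x => ?_, fun x => ?_, fun x => ?_⟩
  · rw [deriv_sub (hr₁.differentiable_a x) (hr₂.differentiable_a x)]
    have h₁ := abs_le.1 (hσ x)
    have h₂ := abs_le.1 (hmul p.β_pos.le (ha x))
    simp only [Pi.sub_apply]
    exact abs_le.2 ⟨by linarith [hr₁.junction x, hr₂.junction x],
      by linarith [hr₁.junction x, hr₂.junction x]⟩
  · rw [deriv_sub (hr₁.differentiable_b x) (hr₂.differentiable_b x)]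
    have h₁ := abs_le.1 (hmul p.L_nonneg (hb x))
    have h₂ : 0 ≤ p.L * (σ + p.β * τ) := mul_nonneg p.L_nonneg (by positivity)
    simp only [Pi.sub_apply]
    exact abs_le.2 ⟨by linarith [hr₁.inductor x, hr₂.inductor x],
      by linarith [hr₁.inductor x, hr₂.inductor x]⟩
  · rw [deriv_sub (hr₁.differentiable_e x) (hr₂.differentiable_e x)]
    have h₁ := abs_le.1 (he x)
    simp only [Pi.sub_apply]
    exact abs_le.2 ⟨by linarith [hr₁.capacitor x, hr₂.capacitor x],
      by linarith [hr₁.capacitor x, hr₂.capacitor x]⟩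

end IsResponse

theorem exists_forall_isResponse_le (p : LRCCircuit) {ω₀ : ℝ} (hω₀ : 0 < ω₀) :
    ∃ C > 0, ∀ᶠ h in 𝓝[>] 0, ∀ ω ≥ ω₀, ∀ {S : ℝ} {f a b e : ℝ → ℝ},
      p.IsResponse ω h f a b e → (∀ x, |f x| ≤ S) →
      ∀ x, |a x| ≤ C * S ∧ |b x| ≤ C * S ∧ |e x| ≤ C * S := by
  obtain ⟨C, hC, hbound⟩ := p.exists_forall_isApproxResponse_le hω₀
  refine ⟨C, hC, hbound.mono fun h hh ω hω S f a b e hr hf x => ?_⟩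
  have happrox := hr.sub (ω₂ := ω) (σ := S) (τ := 0) .zero (by simpa using hf)
    (by simp) (by simp) (by simp)
  simpa using hh ω hω happrox x

/-- The difference between a translate of a response and the response itself is the response to the
corresponding difference of the forcing; hence a Lipschitz bound on the forcing is inherited. -/
theorem exists_forall_isResponse_deriv_le (p : LRCCircuit) {ω₀ : ℝ} (hω₀ : 0 < ω₀) :
    ∃ C > 0, ∀ᶠ h in 𝓝[>] 0, ∀ ω ≥ ω₀, ∀ {S : ℝ} {f a b e : ℝ → ℝ},
      p.IsResponse ω h f a b e → (∀ x y, |f x - f y| ≤ S * |x - y|) → 0 ≤ S →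
      ∀ x, |deriv a x| ≤ C * S ∧ |deriv b x| ≤ C * S ∧ |deriv e x| ≤ C * S := by
  obtain ⟨C, hC, hbound⟩ := p.exists_forall_isApproxResponse_le hω₀
  refine ⟨C, hC, hbound.mono fun h hh ω hω S f a b e hr hf hS x => ?_⟩
  have hlip : ∀ x y, |a y - a x| ≤ C * S * |y - x| ∧ |b y - b x| ≤ C * S * |y - x| ∧
      |e y - e x| ≤ C * S * |y - x| := fun x y => by
    have happrox := (hr.comp_add_const (y - x)).sub hr (σ := S * |y - x|) (τ := 0)
      (fun z => by simpa using hf (z + (y - x)) z) (by simp) (by simp) (by simp)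
    simpa [mul_assoc] using hh ω hω happrox x
  have hCS : 0 ≤ C * S := by positivity
  exact ⟨abs_deriv_le_of_abs_image_sub_le hCS (fun y x => (hlip x y).1) x,
    abs_deriv_le_of_abs_image_sub_le hCS (fun y x => (hlip x y).2.1) x,
    abs_deriv_le_of_abs_image_sub_le hCS (fun y x => (hlip x y).2.2) x⟩

end LRCCircuit

end LinearResponse

section ShiftAverage

/-- The average `x ↦ (1 / N) * ∑ j < N, g (x - j * h)` of `N` successive translates of `g`. -/
noncomputable def shiftAverage (N : ℕ) (h : ℝ) : (ℝ → ℝ) →ₗ[ℝ] ℝ → ℝ where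
  toFun g x := 1 / (N : ℝ) * ∑ j : Fin N, g (x - (j : ℕ) * h)
  map_add' f g := by ext x; simp [Finset.sum_add_distrib, mul_add]
  map_smul' c g := by ext x; simp [← Finset.mul_sum, mul_left_comm]

variable {N : ℕ} {h : ℝ} {f g : ℝ → ℝ}

theorem shiftAverage_apply (N : ℕ) (h : ℝ) (g : ℝ → ℝ) (x : ℝ) :
    shiftAverage N h g x = 1 / (N : ℝ) * ∑ j : Fin N, g (x - (j : ℕ) * h) :=
  rfl

theorem hasDerivAt_shiftAverage (hg : Differentiable ℝ g) (x : ℝ) :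
    HasDerivAt (shiftAverage N h g) (shiftAverage N h (deriv g) x) x :=
  HasDerivAt.const_mul (1 / (N : ℝ)) <| HasDerivAt.fun_sum (u := Finset.univ)
    fun (j : Fin N) _ => (hg (x - (j : ℕ) * h)).hasDerivAt.comp_sub_const x ((j : ℕ) * h)

theorem differentiable_shiftAverage (hg : Differentiable ℝ g) :
    Differentiable ℝ (shiftAverage N h g) :=
  fun x => (hasDerivAt_shiftAverage hg x).differentiableAt

theorem deriv_shiftAverage (hg : Differentiable ℝ g) :
    deriv (shiftAverage N h g) = shiftAverage N h (deriv g) :=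
  funext fun x => (hasDerivAt_shiftAverage hg x).deriv

theorem shiftAverage_eq_self (hN : 0 < N) (hg : Periodic g h) : shiftAverage N h g = g := by
  ext x
  simp [shiftAverage_apply, hg.sub_nat_mul_eq, hN.ne']

theorem abs_shiftAverage_le {K : ℝ} (hN : 0 < N) (hg : ∀ x, |g x| ≤ K) (x : ℝ) :
    |shiftAverage N h g x| ≤ K := by
  have hN' : (0 : ℝ) < N := Nat.cast_pos.2 hN
  rw [shiftAverage_apply, abs_mul, abs_of_pos (one_div_pos.2 hN'), one_div, inv_mul_le_iff₀ hN']
  calc |∑ j : Fin N, g (x - (j : ℕ) * h)| ≤ ∑ j : Fin N, |g (x - (j : ℕ) * h)| :=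
        Finset.abs_sum_le_sum_abs _ _
    _ ≤ ∑ _j : Fin N, K := Finset.sum_le_sum fun j _ => hg _
    _ = N * K := by simp

theorem abs_shiftAverage_sub_le {K : ℝ} (hN : 0 < N) (hfg : ∀ x, |f x - g x| ≤ K) (x : ℝ) :
    |shiftAverage N h f x - shiftAverage N h g x| ≤ K := by
  simpa only [map_sub, Pi.sub_apply] using abs_shiftAverage_le (g := f - g) hN hfg x

theorem periodic_shiftAverage (hg : Periodic g (N * h)) : Periodic (shiftAverage N h g) h := by
  intro x
  rcases N with _ | n
  · simp [shiftAverage_apply]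
  have hlast : g (x - n * h) = g (x + h) := by
    rw [← hg (x - n * h)]
    congr 1
    push_cast
    ring
  have hshift : ∀ j : ℕ, x + h - ((j + 1 : ℕ) : ℝ) * h = x - j * h := fun j => by
    push_cast
    ring
  rw [shiftAverage_apply, shiftAverage_apply, Fin.sum_univ_succ, Fin.sum_univ_castSucc]
  simp only [Fin.val_zero, Nat.cast_zero, zero_mul, sub_zero, Fin.val_succ, hshift,
    Fin.val_castSucc, Fin.val_last, hlast]
  rw [add_comm (g (x + h))]

end ShiftAverage

namespace IsRunning

variable {ψ : ℝ → ℝ} {T : ℝ}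

theorem periodic_deriv (hψ : IsRunning ψ T) : Periodic (deriv ψ) T := fun x => by
  rw [← deriv_comp_add_const, funext hψ, deriv_add_const]

theorem periodic_comp {F : ℝ → ℝ} (hψ : IsRunning ψ T) (hF : Periodic F (2 * π)) :
    Periodic (fun x => F (ψ x)) T :=
  fun x => (congrArg F (hψ x)).trans (hF (ψ x))

theorem periodic_sub_id (hψ : IsRunning ψ (2 * π)) : Periodic (ψ - id) (2 * π) := fun x => by
  simp only [Pi.sub_apply, hψ x, id_eq, add_sub_add_right_eq_sub]

theorem shiftAverage_deriv_sub_one_mem_fluctuations {N : ℕ} (hψ : IsRunning ψ (2 * π))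
    (hN : 0 < N) (hd : Differentiable ℝ ψ) :
    (fun x => shiftAverage N (2 * π / N) (deriv ψ) x - 1) ∈ fluctuations (2 * π / N) := by
  have hN' : (N : ℝ) ≠ 0 := Nat.cast_ne_zero.2 hN.ne'
  have hd' : Differentiable ℝ (ψ - id) := hd.sub differentiable_id
  have hderiv : deriv (ψ - id) = deriv ψ - fun _ => 1 := funext fun x => by
    rw [deriv_sub (hd x) differentiableAt_id, deriv_id, Pi.sub_apply]
  have hmem : deriv (shiftAverage N (2 * π / N) (ψ - id)) ∈ fluctuations (2 * π / N) :=
    deriv_mem_fluctuations (differentiable_shiftAverage hd')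
      (periodic_shiftAverage (by rw [mul_div_cancel₀ _ hN']; exact hψ.periodic_sub_id))
  rwa [deriv_shiftAverage hd', hderiv, map_sub,
    shiftAverage_eq_self hN (g := fun _ => 1) fun _ => rfl] at hmem

end IsRunning

section ForcedRotation

theorem IsRunning.exists_turning_point {ψ : ℝ → ℝ} {T x₀ x₁ : ℝ} (hψ : IsRunning ψ T)
    (hd : Differentiable ℝ ψ) (hx₁ : x₁ ∈ Icc (x₀ - T) x₀) (hlt : ψ x₀ < ψ x₁) :
    ∃ c < x₀, ∃ d ∈ Icc x₀ (c + T), deriv ψ c = 0 ∧ ψ d = ψ c := by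
  obtain ⟨c, hc, hmax⟩ := isCompact_Icc.exists_isMaxOn ⟨x₁, hx₁⟩ hd.continuous.continuousOn
  have hle : ψ x₁ ≤ ψ c := hmax hx₁
  have hleft : x₀ - T < c := hc.1.lt_of_ne fun h => by
    have hrun := hψ (x₀ - T)
    rw [sub_add_cancel, h] at hrun
    linarith [two_pi_pos]
  have hright : c < x₀ := hc.2.lt_of_ne fun h => by
    rw [h] at hle
    linarith
  obtain ⟨d, hd', hdc⟩ : ψ c ∈ ψ '' Icc x₀ (c + T) :=
    intermediate_value_Icc (by linarith) hd.continuous.continuousOn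
      ⟨(hlt.trans_le hle).le, by rw [hψ c]; linarith [two_pi_pos]⟩
  exact ⟨c, hright, d, hd', (hmax.isLocalMax (Icc_mem_nhds hleft hright)).deriv_eq_zero, hdc⟩

theorem le_neg_half_of_abs_deriv_le {f : ℝ → ℝ} {m M x₀ : ℝ} (hf : Differentiable ℝ f)
    (hM : 0 < M) (hf' : ∀ x, |deriv f x| ≤ M) (hx₀ : f x₀ ≤ -m) :
    ∀ x ∈ Icc (x₀ - m / (2 * M)) x₀, f x ≤ -(m / 2) := fun x hx => by
  have hlip := abs_image_sub_le_of_abs_deriv_le hf hf' x x₀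
  have hdist : M * |x - x₀| ≤ m / 2 := by
    calc M * |x - x₀| ≤ M * (m / (2 * M)) := by
          gcongr
          exact abs_le.2 ⟨by linarith [hx.1], by linarith [hx.1, hx.2]⟩
      _ = m / 2 := by field_simp
  linarith [(abs_le.1 (hlip.trans hdist)).2]

theorem abs_sub_le_of_abs_deriv_deriv_le {ψ : ℝ → ℝ} {K η x₀ x : ℝ} (hψ : ContDiff ℝ 2 ψ)
    (hK : 1 ≤ K) (h₀ : |deriv ψ x₀| ≤ η)
    (h : ∀ y, |deriv (deriv ψ) y| ≤ K * max |ψ y - ψ x₀| |deriv ψ y| + η) (hx : x₀ ≤ x) :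
    |ψ x - ψ x₀| ≤ 2 * η * exp (K * (x - x₀)) := by
  have hη : 0 ≤ η := (abs_nonneg _).trans h₀
  have hd : Differentiable ℝ ψ := hψ.differentiable two_ne_zero
  have hv : ∀ y, HasDerivAt (fun y => (ψ y - ψ x₀, deriv ψ y)) (deriv ψ y, deriv (deriv ψ) y) y :=
    fun y => ((hd y).hasDerivAt.sub_const _).prodMk (hψ.differentiable_deriv_two y).hasDerivAt
  have hbound : ∀ y, ‖(deriv ψ y, deriv (deriv ψ) y)‖ ≤ K * ‖(ψ y - ψ x₀, deriv ψ y)‖ + η := by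
    intro y
    refine max_le ?_ (h y)
    calc |deriv ψ y| ≤ 1 * max |ψ y - ψ x₀| |deriv ψ y| := by simp
      _ ≤ K * max |ψ y - ψ x₀| |deriv ψ y| + η :=
        le_add_of_le_of_nonneg (by gcongr) hη
  have hgronwall := norm_le_gronwallBound_of_norm_deriv_right_le
    (continuous_iff_continuousAt.2 fun y => (hv y).continuousAt).continuousOn
    (fun y _ => (hv y).hasDerivWithinAt) (δ := η) (by simpa [Prod.norm_def] using h₀)
    (fun y _ => hbound y) x (right_mem_Icc.2 hx)
  calc |ψ x - ψ x₀| ≤ gronwallBound η K η (x - x₀) := (le_max_left _ _).trans hgronwall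
    _ = η * exp (K * (x - x₀)) + η / K * (exp (K * (x - x₀)) - 1) :=
        congrFun (gronwallBound_of_K_ne_0 (by positivity)) _
    _ ≤ η * exp (K * (x - x₀)) + η * exp (K * (x - x₀)) := by
        gcongr
        · exact sub_nonneg.2 (one_le_exp (mul_nonneg (by positivity) (sub_nonneg.2 hx)))
        · exact div_le_self hη hK
        · linarith
    _ = 2 * η * exp (K * (x - x₀)) := by ring

/-- The phase `ψ` of a junction with capacitance `β` and bias current `J` which, in time rescaled by
the frequency `ω`, advances by `2π` in time `2π` under the additional load current `b`. -/
structure IsForcedRotation (β ω J : ℝ) (b ψ : ℝ → ℝ) : Prop where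
  contDiff : ContDiff ℝ 2 ψ
  isRunning : IsRunning ψ (2 * π)
  ode : ∀ x, β * ω ^ 2 * deriv (deriv ψ) x + ω * deriv ψ x + sin (ψ x) + b x = J

namespace IsForcedRotation

variable {β ω ω₀ ω₁ J m M ε : ℝ} {b ψ : ℝ → ℝ}

theorem differentiable (hr : IsForcedRotation β ω J b ψ) : Differentiable ℝ ψ :=
  hr.contDiff.differentiable two_ne_zero

theorem differentiable_deriv (hr : IsForcedRotation β ω J b ψ) : Differentiable ℝ (deriv ψ) :=
  hr.contDiff.differentiable_deriv_two

theorem abs_mul_deriv_le (hr : IsForcedRotation β ω J b ψ) (hb : ∀ x, |b x| ≤ ε) (x : ℝ) :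
    |ω * deriv ψ x| ≤ |J| + 1 + ε :=
  abs_mul_le_of_abs_mul_deriv_add_mul_le (c := β * ω ^ 2) hr.differentiable_deriv.continuous
    hr.isRunning.periodic_deriv two_pi_pos.ne' (fun y => by
      have h₁ := abs_le.1 (abs_sin_le_one (ψ y))
      have h₂ := abs_le.1 (hb y)
      have h₃ := abs_le.1 (le_refl |J|)
      exact abs_le.2 ⟨by linarith [hr.ode y], by linarith [hr.ode y]⟩) x

theorem abs_mul_deriv_deriv_le (hr : IsForcedRotation β ω J b ψ) (hb : ∀ x, |b x| ≤ ε) (x : ℝ) :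
    |β * ω ^ 2 * deriv (deriv ψ) x| ≤ 2 * (|J| + 1 + ε) := by
  have h₁ := abs_le.1 (abs_sin_le_one (ψ x))
  have h₂ := abs_le.1 (hb x)
  have h₃ := abs_le.1 (le_refl |J|)
  have h₄ := abs_le.1 (hr.abs_mul_deriv_le hb x)
  exact abs_le.2 ⟨by linarith [hr.ode x], by linarith [hr.ode x]⟩

theorem abs_mul_deriv_deriv_le_of_deriv_deriv_eq_zero {x₀ : ℝ} (hr : IsForcedRotation β ω J b ψ)
    (hω₀ : 0 < ω) (hω : ω ≤ ω₁) (hb : ∀ x, |b x| ≤ m) (hx₀ : deriv (deriv ψ) x₀ = 0)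
    (hm : |deriv ψ x₀| ≤ m) (x : ℝ) :
    |β * ω ^ 2 * deriv (deriv ψ) x| ≤
      (1 + ω₁) * max |ψ x - ψ x₀| |deriv ψ x| + (2 + ω₁) * m := by
  have hode₀ := hr.ode x₀
  rw [hx₀, mul_zero, zero_add] at hode₀
  have hmul : ∀ {t u : ℝ}, |t| ≤ u → |ω * t| ≤ ω₁ * u := fun ht => by
    rw [abs_mul, abs_of_pos hω₀]
    exact mul_le_mul hω ht (abs_nonneg _) (hω₀.le.trans hω)
  have hsin := (abs_sin_sub_sin_le (ψ x) (ψ x₀)).trans (le_max_left _ |deriv ψ x|)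
  have h₁ := abs_le.1 hsin
  have h₂ := abs_le.1 (hmul hm)
  have h₃ := abs_le.1 (hmul (le_max_right |ψ x - ψ x₀| |deriv ψ x|))
  have h₄ := abs_le.1 (hb x)
  have h₅ := abs_le.1 (hb x₀)
  exact abs_le.2 ⟨by linarith [hr.ode x], by linarith [hr.ode x]⟩

/-- Where the velocity is critical and small the junction is almost at an equilibrium, near which it
would have to remain for a whole period. -/
theorem exists_lt_abs_deriv_of_deriv_deriv_eq_zero (hβ : 0 < β) (hω₀ : 0 < ω₀) (hω₁ : 0 < ω₁) :
    ∃ m > 0, ∀ ω ∈ Icc ω₀ ω₁, ∀ {J : ℝ} {b ψ : ℝ → ℝ}, IsForcedRotation β ω J b ψ →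
      (∀ x, |b x| ≤ m) → ∀ x, deriv (deriv ψ) x = 0 → m < |deriv ψ x| := by
  set q := β * ω₀ ^ 2
  have hq : 0 < q := by positivity
  set K := 1 + (1 + ω₁) / q
  set c := 1 + (2 + ω₁) / q
  have hK : 1 ≤ K := le_add_of_nonneg_right (by positivity)
  have hc : 0 < c := by positivity
  refine ⟨1 / (2 * c * exp (K * (2 * π))), by positivity, ?_⟩
  set m := 1 / (2 * c * exp (K * (2 * π)))
  have hm : 0 < m := by positivity
  intro ω hω J b ψ hr hb x hx
  by_contra! hle
  have hgrowth : ∀ y, |deriv (deriv ψ) y| ≤ K * max |ψ y - ψ x| |deriv ψ y| + c * m := fun y => by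
    set D := max |ψ y - ψ x| |deriv ψ y|
    have hqω : q ≤ |β * ω ^ 2| := by
      rw [abs_of_nonneg (by positivity)]
      exact mul_le_mul_of_nonneg_left (pow_le_pow_left₀ hω₀.le hω.1 2) hβ.le
    calc |deriv (deriv ψ) y| ≤ ((1 + ω₁) * D + (2 + ω₁) * m) / q := by
          rw [le_div_iff₀' hq]
          refine (mul_le_mul_of_nonneg_right hqω (abs_nonneg _)).trans ?_
          rw [← abs_mul]
          exact hr.abs_mul_deriv_deriv_le_of_deriv_deriv_eq_zero (hω₀.trans_le hω.1) hω.2 hb hx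
            hle y
      _ = (1 + ω₁) / q * D + (2 + ω₁) / q * m := by ring
      _ ≤ K * D + c * m := by gcongr <;> exact le_add_of_nonneg_left zero_le_one
  have hstuck := abs_sub_le_of_abs_deriv_deriv_le hr.contDiff hK
    (hle.trans (le_mul_of_one_le_left hm.le (le_add_of_nonneg_right (by positivity)))) hgrowth
    (le_add_of_nonneg_right two_pi_pos.le : x ≤ x + 2 * π)
  rw [hr.isRunning x, add_sub_cancel_left, add_sub_cancel_left, abs_of_pos two_pi_pos] at hstuck
  have hone : 2 * (c * m) * exp (K * (2 * π)) = 1 := by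
    simp only [m]
    field_simp
  linarith [pi_gt_three]

/-- The mechanical energy of the rotation; it is dissipated at the rate `ω * (deriv ψ x) ^ 2` up to
the work done by the load current. -/
noncomputable def energy (β ω J : ℝ) (ψ : ℝ → ℝ) (x : ℝ) : ℝ :=
  β * ω ^ 2 / 2 * deriv ψ x ^ 2 - cos (ψ x) - J * ψ x

theorem hasDerivAt_energy (hr : IsForcedRotation β ω J b ψ) (x : ℝ) :
    HasDerivAt (energy β ω J ψ) (-(ω * deriv ψ x ^ 2) - deriv ψ x * b x) x := by
  have hψ := (hr.differentiable x).hasDerivAt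
  have hψ' := (hr.differentiable_deriv x).hasDerivAt
  refine ((((hψ'.fun_pow 2).const_mul (β * ω ^ 2 / 2)).sub hψ.cos).sub
    (hψ.const_mul J)).congr_deriv ?_
  rw [← hr.ode x]
  push_cast
  ring

theorem energy_sub_le {c d v : ℝ} (hr : IsForcedRotation β ω J b ψ) (hω₀ : 0 < ω₀) (hω : ω₀ ≤ ω)
    (hb : ∀ x, |b x| ≤ ε) (hM : ∀ x, |deriv ψ x| ≤ M) (hcd : c ≤ d) (hv : 0 ≤ v)
    (hfast : ∀ x ∈ Icc c d, v ≤ |deriv ψ x|) :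
    energy β ω J ψ d - energy β ω J ψ c ≤ (M * ε - ω₀ * v ^ 2) * (d - c) := by
  have hE := hr.hasDerivAt_energy
  refine (convex_Icc c d).image_sub_le_mul_sub_of_deriv_le
    (fun x _ => (hE x).continuousAt.continuousWithinAt)
    (fun x _ => (hE x).differentiableAt.differentiableWithinAt) (fun x hx => ?_)
    c (left_mem_Icc.2 hcd) d (right_mem_Icc.2 hcd) hcd
  rw [(hE x).deriv]
  have hwork : |deriv ψ x * b x| ≤ M * ε := by
    rw [abs_mul]
    exact mul_le_mul (hM x) (hb x) (abs_nonneg _) ((abs_nonneg _).trans (hM x))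
  have hdiss : ω₀ * v ^ 2 ≤ ω * deriv ψ x ^ 2 := by
    rw [← sq_abs (deriv ψ x)]
    exact mul_le_mul hω (pow_le_pow_left₀ hv (hfast x (interior_subset hx)) 2) (sq_nonneg v)
      (hω₀.le.trans hω)
  linarith [neg_abs_le (deriv ψ x * b x)]

theorem exists_turning_point {x₀ : ℝ} (hr : IsForcedRotation β ω J b ψ) (hm : 0 < m) (hM : 0 < M)
    (hψ' : ∀ x, |deriv ψ x| ≤ M) (hψ'' : ∀ x, |deriv (deriv ψ) x| ≤ M)
    (hx₀ : deriv ψ x₀ ≤ -m) :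
    ∃ c ≤ x₀ - m / (2 * M), ∃ d ∈ Icc x₀ (c + 2 * π), deriv ψ c = 0 ∧ ψ d = ψ c := by
  set δ := m / (2 * M)
  have hδ : 0 < δ := by positivity
  have hback := le_neg_half_of_abs_deriv_le hr.differentiable_deriv hM hψ'' hx₀
  have hhigher : ψ x₀ < ψ (x₀ - δ) := by
    have hmono := (convex_Icc (x₀ - δ) x₀).image_sub_le_mul_sub_of_deriv_le
      hr.differentiable.continuous.continuousOn hr.differentiable.differentiableOn
      (fun x hx => hback x (interior_subset hx)) (x₀ - δ) (left_mem_Icc.2 (by linarith))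
      x₀ (right_mem_Icc.2 (by linarith)) (by linarith)
    have hdrop : 0 < m / 2 * δ := by positivity
    linarith
  have hδle : δ ≤ 1 := (div_le_one (by positivity)).2 <| by
    linarith [neg_abs_le (deriv ψ x₀), hψ' x₀]
  obtain ⟨c, hc, d, hd, hcrit, hdc⟩ := hr.isRunning.exists_turning_point hr.differentiable
    ⟨by linarith [pi_gt_three], by linarith⟩ hhigher
  refine ⟨c, ?_, d, hd, hcrit, hdc⟩
  by_contra! hlt
  linarith [hback c ⟨hlt.le, hc.le⟩]

/-- Between two passages through the turning point of a backward motion the energy cannot decrease,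
whereas the backward motion dissipates a definite amount. -/
theorem exists_neg_lt_deriv (hβ : 0 < β) (hω₀ : 0 < ω₀) (hm : 0 < m) (hM : 0 < M) :
    ∃ ε > 0, ∀ ω ≥ ω₀, ∀ {J : ℝ} {b ψ : ℝ → ℝ}, IsForcedRotation β ω J b ψ →
      (∀ x, |b x| ≤ ε) → (∀ x, |deriv ψ x| ≤ M) → (∀ x, |deriv (deriv ψ) x| ≤ M) →
      ∀ x, -m < deriv ψ x := by
  refine ⟨ω₀ * (m / 2) ^ 2 * (m / (2 * M)) / (4 * π * M), by positivity, ?_⟩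
  set δ := m / (2 * M)
  set ε := ω₀ * (m / 2) ^ 2 * δ / (4 * π * M)
  have hδ : 0 < δ := by positivity
  intro ω hω J b ψ hr hb hψ' hψ'' x₀
  by_contra! hx₀
  obtain ⟨c, hc, d, hd, hcrit, hdc⟩ := hr.exists_turning_point hm hM hψ' hψ'' hx₀
  have hback := le_neg_half_of_abs_deriv_le hr.differentiable_deriv hM hψ'' hx₀
  have hbefore := hr.energy_sub_le hω₀ hω hb hψ' hc le_rfl fun x _ => abs_nonneg _
  have hduring := hr.energy_sub_le hω₀ hω hb hψ' (sub_le_self x₀ hδ.le) (half_pos hm).le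
    fun x hx => le_abs.2 (Or.inr (by linarith [hback x hx]))
  have hafter := hr.energy_sub_le hω₀ hω hb hψ' hd.1 le_rfl fun x _ => abs_nonneg _
  have hreturn : energy β ω J ψ c ≤ energy β ω J ψ d := by
    have : 0 ≤ β * ω ^ 2 / 2 * deriv ψ d ^ 2 := by positivity
    simp only [energy, hcrit, hdc]
    linarith
  have hwork : M * ε * (d - c) ≤ ω₀ * (m / 2) ^ 2 * δ / 2 := by
    calc M * ε * (d - c) ≤ M * ε * (2 * π) := by gcongr; linarith [hd.2]
      _ = ω₀ * (m / 2) ^ 2 * δ / 2 := by simp only [ε]; field_simp; norm_num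
  have : 0 < ω₀ * (m / 2) ^ 2 * δ := by positivity
  linarith

theorem exists_le_deriv (hβ : 0 < β) (hω₀ : 0 < ω₀) (hω₁ : 0 < ω₁) (hM : 0 < M) :
    ∃ m > 0, ∃ ε > 0, ∀ ω ∈ Icc ω₀ ω₁, ∀ {J : ℝ} {b ψ : ℝ → ℝ}, IsForcedRotation β ω J b ψ →
      (∀ x, |b x| ≤ ε) → (∀ x, |deriv ψ x| ≤ M) → (∀ x, |deriv (deriv ψ) x| ≤ M) →
      ∀ x, m ≤ deriv ψ x := by
  obtain ⟨m, hm, hcrit⟩ := exists_lt_abs_deriv_of_deriv_deriv_eq_zero hβ hω₀ hω₁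
  obtain ⟨ε, hε, hback⟩ := exists_neg_lt_deriv hβ hω₀ hm hM
  refine ⟨m, hm, min m ε, lt_min hm hε, fun ω hω J b ψ hr hb hψ' hψ'' x => ?_⟩
  obtain ⟨z, hz⟩ := exists_forall_ge_of_periodic hr.differentiable_deriv.continuous
    hr.isRunning.periodic_deriv two_pi_pos.ne'
  have hz0 : deriv (deriv ψ) z = 0 := IsLocalMin.deriv_eq_zero (Eventually.of_forall hz)
  have hneg := hback ω hω.1 hr (fun y => (hb y).trans (min_le_right _ _)) hψ' hψ'' z
  have hlt := hcrit ω hω hr (fun y => (hb y).trans (min_le_left _ _)) z hz0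
  rcases lt_abs.1 hlt with h | h
  · exact h.le.trans (hz x)
  · linarith

end IsForcedRotation

end ForcedRotation

section PhaseOrbit

/-- A monotone forced rotation in the phase plane: the time `θ` and the voltage `V` of the junction
as functions of its phase, where `g` is the load current at that phase. -/
structure IsPhaseOrbit (β ω J v₀ v₁ : ℝ) (θ V g : ℝ → ℝ) : Prop where
  isRunning : IsRunning θ (2 * π)
  time_zero : θ 0 = 0
  hasDerivAt_time : ∀ x, HasDerivAt θ (ω / V x) x
  differentiable_voltage : Differentiable ℝ V
  periodic_voltage : Periodic V (2 * π)
  le_voltage : ∀ x, v₀ ≤ V x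
  voltage_le : ∀ x, V x ≤ v₁
  ode : ∀ x, β * (V x * deriv V x) + V x + sin x + g x = J

namespace IsPhaseOrbit

variable {β ω ω₁ ω₂ J J₁ J₂ v₀ v₁ r s δ : ℝ} {θ θ₁ θ₂ V V₁ V₂ g g₁ g₂ : ℝ → ℝ}

theorem differentiable_time (h : IsPhaseOrbit β ω J v₀ v₁ θ V g) : Differentiable ℝ θ :=
  fun x => (h.hasDerivAt_time x).differentiableAt

theorem exists_voltage_eq_frequency (h : IsPhaseOrbit β ω J v₀ v₁ θ V g) (hv₀ : 0 < v₀) :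
    ∃ x, V x = ω := by
  obtain ⟨x, -, hx⟩ := exists_hasDerivAt_eq_slope θ (fun x => ω / V x) two_pi_pos
    h.differentiable_time.continuous.continuousOn fun x _ => h.hasDerivAt_time x
  have hrun := h.isRunning 0
  rw [zero_add] at hrun
  rw [hrun, add_sub_cancel_left, sub_zero, div_self two_pi_pos.ne',
    div_eq_one_iff_eq (hv₀.trans_le (h.le_voltage x)).ne'] at hx
  exact ⟨x, hx.symm⟩

theorem frequency_mem_Icc (h : IsPhaseOrbit β ω J v₀ v₁ θ V g) (hv₀ : 0 < v₀) :
    ω ∈ Icc v₀ v₁ := by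
  obtain ⟨x, rfl⟩ := h.exists_voltage_eq_frequency hv₀
  exact ⟨h.le_voltage x, h.voltage_le x⟩

/-- At a maximum of `V₁ ^ 2 - V₂ ^ 2` the capacitive terms of the two orbits agree. -/
theorem voltage_sub_le (h₁ : IsPhaseOrbit β ω₁ J₁ v₀ v₁ θ₁ V₁ g₁)
    (h₂ : IsPhaseOrbit β ω₂ J₂ v₀ v₁ θ₂ V₂ g₂) (hv₀ : 0 < v₀) (hr : 0 ≤ r)
    (hJg : ∀ x, J₁ - J₂ - (g₁ x - g₂ x) ≤ r) (x : ℝ) : V₁ x - V₂ x ≤ v₁ / v₀ * r := by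
  have hderiv : ∀ y, HasDerivAt (fun y => V₁ y ^ 2 - V₂ y ^ 2)
      (2 * (V₁ y * deriv V₁ y - V₂ y * deriv V₂ y)) y := fun y =>
    (((h₁.differentiable_voltage y).hasDerivAt.fun_pow 2).sub
      ((h₂.differentiable_voltage y).hasDerivAt.fun_pow 2)).congr_deriv (by push_cast; ring)
  obtain ⟨z, hz⟩ := exists_forall_le_of_periodic
    (continuous_iff_continuousAt.2 fun y => (hderiv y).continuousAt)
    ((h₁.periodic_voltage.comp (· ^ 2)).sub (h₂.periodic_voltage.comp (· ^ 2))) two_pi_pos.ne'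
  have hcrit : V₁ z * deriv V₁ z = V₂ z * deriv V₂ z := by
    have := IsLocalMax.hasDerivAt_eq_zero (Eventually.of_forall hz) (hderiv z)
    linarith
  have hz_le : V₁ z - V₂ z ≤ r := by
    have h₁z := h₁.ode z
    rw [hcrit] at h₁z
    linarith [h₂.ode z, hJg z]
  rw [div_mul_eq_mul_div, le_div_iff₀' hv₀]
  by_contra! hlt
  have hpos : 0 < V₁ x - V₂ x := by
    have hv₁ : 0 ≤ v₁ := hv₀.le.trans ((h₁.le_voltage x).trans (h₁.voltage_le x))
    exact pos_of_mul_pos_right ((mul_nonneg hv₁ hr).trans_lt hlt) hv₀.le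
  have hx : 2 * v₀ * (V₁ x - V₂ x) ≤ 2 * v₁ * r := calc
    _ ≤ (V₁ x + V₂ x) * (V₁ x - V₂ x) := by
        gcongr
        linarith [h₁.le_voltage x, h₂.le_voltage x]
    _ ≤ (V₁ z + V₂ z) * (V₁ z - V₂ z) := by linarith [hz x]
    _ ≤ (V₁ z + V₂ z) * r := by
        gcongr
        linarith [h₁.le_voltage z, h₂.le_voltage z]
    _ ≤ 2 * v₁ * r := by
        gcongr
        linarith [h₁.voltage_le z, h₂.voltage_le z]
  linarith

theorem frequency_sub_le (h₁ : IsPhaseOrbit β ω₁ J₁ v₀ v₁ θ₁ V₁ g₁)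
    (h₂ : IsPhaseOrbit β ω₂ J₂ v₀ v₁ θ₂ V₂ g₂) (hv₀ : 0 < v₀) (hs : 0 ≤ s)
    (hV : ∀ x, V₁ x - V₂ x ≤ s) : ω₁ - ω₂ ≤ (v₁ / v₀) ^ 2 * s := by
  have hω₁ := h₁.frequency_mem_Icc hv₀
  have hω₂ := h₂.frequency_mem_Icc hv₀
  have hω₁0 : 0 < ω₁ := hv₀.trans_le hω₁.1
  have hω₂0 : 0 < ω₂ := hv₀.trans_le hω₂.1
  have hderiv : ∀ x, HasDerivAt (fun x => ω₂ * θ₁ x - ω₁ * θ₂ x)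
      (ω₂ * (ω₁ / V₁ x) - ω₁ * (ω₂ / V₂ x)) x := fun x =>
    ((h₁.hasDerivAt_time x).const_mul ω₂).sub ((h₂.hasDerivAt_time x).const_mul ω₁)
  obtain ⟨c, -, hc⟩ := exists_hasDerivAt_eq_slope _ _ two_pi_pos
    (continuous_iff_continuousAt.2 fun x => (hderiv x).continuousAt).continuousOn
    fun x _ => hderiv x
  have hrun₁ := h₁.isRunning 0
  have hrun₂ := h₂.isRunning 0
  rw [zero_add, h₁.time_zero, zero_add] at hrun₁
  rw [zero_add, h₂.time_zero, zero_add] at hrun₂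
  have hV₁ : 0 < V₁ c := hv₀.trans_le (h₁.le_voltage c)
  have hV₂ : 0 < V₂ c := hv₀.trans_le (h₂.le_voltage c)
  have hslope : ω₁ - ω₂ = ω₁ / V₁ c * (ω₂ / V₂ c) * (V₁ c - V₂ c) := by
    rw [hrun₁, hrun₂, h₁.time_zero, h₂.time_zero] at hc
    field_simp at hc ⊢
    linarith
  calc ω₁ - ω₂ = ω₁ / V₁ c * (ω₂ / V₂ c) * (V₁ c - V₂ c) := hslope
    _ ≤ ω₁ / V₁ c * (ω₂ / V₂ c) * s := by gcongr; exact hV c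
    _ ≤ v₁ / v₀ * (v₁ / v₀) * s := by
        have := h₁.le_voltage c
        have := h₂.le_voltage c
        have hv₁ := hω₁0.le.trans hω₁.2
        gcongr
        exacts [hω₁.2, hω₂.2]
    _ = (v₁ / v₀) ^ 2 * s := by ring

theorem abs_time_sub_le (h₁ : IsPhaseOrbit β ω₁ J₁ v₀ v₁ θ₁ V₁ g₁)
    (h₂ : IsPhaseOrbit β ω₂ J₂ v₀ v₁ θ₂ V₂ g₂) (hv₀ : 0 < v₀) (hω : |ω₁ - ω₂| ≤ δ)
    (hV : ∀ x, |V₁ x - V₂ x| ≤ s) (x : ℝ) :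
    |θ₁ x - θ₂ x| ≤ 2 * π * (v₁ * (δ + s) / v₀ ^ 2) := by
  have hω₂ := h₂.frequency_mem_Icc hv₀
  have hderiv : ∀ y, HasDerivAt (θ₁ - θ₂) (ω₁ / V₁ y - ω₂ / V₂ y) y := fun y =>
    (h₁.hasDerivAt_time y).sub (h₂.hasDerivAt_time y)
  refine abs_le_mul_of_periodic (f := θ₁ - θ₂) (z := 0) (fun y => ?_) two_pi_pos
    (fun y => (hderiv y).differentiableAt) (by simp [h₁.time_zero, h₂.time_zero]) (fun y => ?_) x
  · simp only [Pi.sub_apply, h₁.isRunning y, h₂.isRunning y, add_sub_add_right_eq_sub]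
  have hV₁ : 0 < V₁ y := hv₀.trans_le (h₁.le_voltage y)
  have hV₂ : 0 < V₂ y := hv₀.trans_le (h₂.le_voltage y)
  have hnum : |(ω₁ - ω₂) * V₂ y - ω₂ * (V₁ y - V₂ y)| ≤ v₁ * (δ + s) := calc
    _ ≤ |ω₁ - ω₂| * V₂ y + ω₂ * |V₁ y - V₂ y| := by
        refine (abs_sub _ _).trans_eq ?_
        rw [abs_mul, abs_mul, abs_of_pos hV₂, abs_of_pos (hv₀.trans_le hω₂.1)]
    _ ≤ δ * v₁ + v₁ * s := by
        gcongr
        exacts [(abs_nonneg _).trans hω, h₂.voltage_le y, (hv₀.trans_le hω₂.1).le.trans hω₂.2,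
          hω₂.2, hV y]
    _ = v₁ * (δ + s) := by ring
  rw [(hderiv y).deriv]
  calc |ω₁ / V₁ y - ω₂ / V₂ y| = |(ω₁ - ω₂) * V₂ y - ω₂ * (V₁ y - V₂ y)| / (V₁ y * V₂ y) := by
        rw [← abs_of_pos (mul_pos hV₁ hV₂), ← abs_div]
        congr 1
        field_simp
        ring
    _ ≤ v₁ * (δ + s) / v₀ ^ 2 := by
        rw [sq]
        gcongr
        exacts [(abs_nonneg _).trans hnum, h₁.le_voltage y, h₂.le_voltage y]

/-- The larger frequency comes with the smaller effective bias `I - κ * ω`, so that the bias terms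
may be dropped. -/
theorem abs_frequency_sub_le {I κ G : ℝ} (h₁ : IsPhaseOrbit β ω₁ (I - κ * ω₁) v₀ v₁ θ₁ V₁ g₁)
    (h₂ : IsPhaseOrbit β ω₂ (I - κ * ω₂) v₀ v₁ θ₂ V₂ g₂) (hκ : 0 ≤ κ) (hv₀ : 0 < v₀)
    (hG : ∀ x, |g₁ x - g₂ x| ≤ G) : |ω₁ - ω₂| ≤ (v₁ / v₀) ^ 3 * G := by
  wlog hle : ω₂ ≤ ω₁ generalizing ω₁ ω₂ θ₁ θ₂ V₁ V₂ g₁ g₂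
  · rw [abs_sub_comm]
    exact this h₂ h₁ (fun x => abs_sub_comm (g₁ x) (g₂ x) ▸ hG x) (le_of_not_ge hle)
  have hG0 : 0 ≤ G := (abs_nonneg _).trans (hG 0)
  have hω₁ := h₁.frequency_mem_Icc hv₀
  have hρ : 0 ≤ v₁ / v₀ := div_nonneg (hv₀.le.trans (hω₁.1.trans hω₁.2)) hv₀.le
  have hκω : 0 ≤ κ * (ω₁ - ω₂) := mul_nonneg hκ (sub_nonneg.2 hle)
  have hV := h₁.voltage_sub_le h₂ hv₀ hG0 fun x => by linarith [neg_abs_le (g₁ x - g₂ x), hG x]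
  calc |ω₁ - ω₂| = ω₁ - ω₂ := abs_of_nonneg (sub_nonneg.2 hle)
    _ ≤ (v₁ / v₀) ^ 2 * (v₁ / v₀ * G) := h₁.frequency_sub_le h₂ hv₀ (mul_nonneg hρ hG0) hV
    _ = (v₁ / v₀) ^ 3 * G := by ring

theorem exists_abs_sub_le {κ : ℝ} (β I : ℝ) (hκ : 0 ≤ κ) (hv₀ : 0 < v₀) (hv₁ : 0 < v₁) :
    ∃ C > 0, ∀ {ω₁ ω₂ G : ℝ} {θ₁ θ₂ V₁ V₂ g₁ g₂ : ℝ → ℝ},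
      IsPhaseOrbit β ω₁ (I - κ * ω₁) v₀ v₁ θ₁ V₁ g₁ →
      IsPhaseOrbit β ω₂ (I - κ * ω₂) v₀ v₁ θ₂ V₂ g₂ → (∀ x, |g₁ x - g₂ x| ≤ G) →
      |ω₁ - ω₂| ≤ C * G ∧ ∀ x, |V₁ x - V₂ x| ≤ C * G ∧ |θ₁ x - θ₂ x| ≤ C * G := by
  set A := (v₁ / v₀) ^ 3
  set B := v₁ / v₀ * (κ * A + 1)
  set D := 2 * π * (v₁ * (A + B) / v₀ ^ 2)
  have hA : 0 < A := by positivity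
  have hB : 0 < B := by positivity
  have hD : 0 < D := by positivity
  refine ⟨A + B + D, by positivity, fun {ω₁ ω₂ G θ₁ θ₂ V₁ V₂ g₁ g₂} h₁ h₂ hG => ?_⟩
  have hG0 : 0 ≤ G := (abs_nonneg _).trans (hG 0)
  have hω : |ω₁ - ω₂| ≤ A * G := h₁.abs_frequency_sub_le h₂ hκ hv₀ hG
  have hforce : ∀ x, |κ * (ω₁ - ω₂) + (g₁ x - g₂ x)| ≤ (κ * A + 1) * G := fun x => calc
    _ ≤ κ * |ω₁ - ω₂| + |g₁ x - g₂ x| := by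
        simpa only [abs_mul, abs_of_nonneg hκ] using abs_add_le (κ * (ω₁ - ω₂)) (g₁ x - g₂ x)
    _ ≤ κ * (A * G) + G := by gcongr; exact hG x
    _ = (κ * A + 1) * G := by ring
  have hr : 0 ≤ (κ * A + 1) * G := by positivity
  have hV : ∀ x, |V₁ x - V₂ x| ≤ B * G := fun x => by
    have hle := h₁.voltage_sub_le h₂ hv₀ hr (fun y => by linarith [(abs_le.1 (hforce y)).1]) x
    have hge := h₂.voltage_sub_le h₁ hv₀ hr (fun y => by linarith [(abs_le.1 (hforce y)).2]) x
    rw [← mul_assoc] at hle hge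
    exact abs_le.2 ⟨by linarith, by linarith⟩
  have hθ : ∀ x, |θ₁ x - θ₂ x| ≤ D * G := fun x =>
    (h₁.abs_time_sub_le h₂ hv₀ hω hV x).trans_eq (by ring)
  have hAG := mul_nonneg hA.le hG0
  have hBG := mul_nonneg hB.le hG0
  have hDG := mul_nonneg hD.le hG0
  exact ⟨by linarith, fun x => ⟨by linarith [hV x], by linarith [hθ x]⟩⟩

end IsPhaseOrbit

end PhaseOrbit

section MonotoneRotation

theorem IsRunning.surjective {ψ : ℝ → ℝ} (hψ : IsRunning ψ (2 * π)) (hc : Continuous ψ) :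
    Surjective ψ := by
  obtain ⟨z, hz⟩ := exists_forall_abs_le_of_periodic (hc.sub continuous_id) hψ.periodic_sub_id
    two_pi_pos.ne'
  have hdist : ∀ x, |ψ x - x| ≤ |ψ z - z| := hz
  exact hc.surjective
    (tendsto_atTop_mono (fun x => by rw [id_eq]; linarith [(abs_le.1 (hdist x)).1])
      (tendsto_atTop_add_const_right atTop (-|ψ z - z|) tendsto_id))
    (tendsto_atBot_mono (fun x => by rw [id_eq]; linarith [(abs_le.1 (hdist x)).2])
      (tendsto_atBot_add_const_right atBot |ψ z - z| tendsto_id))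

/-- A normalized forced rotation with velocity at least `m > 0`, and with derivatives bounded by
`M`. -/
structure IsMonotoneRotation (β ω J m M : ℝ) (b ψ : ℝ → ℝ) : Prop
    extends IsForcedRotation β ω J b ψ where
  map_zero : ψ 0 = 0
  pos : 0 < m
  le_deriv : ∀ x, m ≤ deriv ψ x
  deriv_le : ∀ x, deriv ψ x ≤ M
  abs_deriv_deriv_le : ∀ x, |deriv (deriv ψ) x| ≤ M

namespace IsMonotoneRotation

variable {β ω ω₀ ω₁ J m M : ℝ} {b ψ θ : ℝ → ℝ}

theorem deriv_pos (hr : IsMonotoneRotation β ω J m M b ψ) (x : ℝ) : 0 < deriv ψ x :=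
  hr.pos.trans_le (hr.le_deriv x)

theorem strictMono (hr : IsMonotoneRotation β ω J m M b ψ) : StrictMono ψ :=
  strictMono_of_deriv_pos hr.deriv_pos

theorem abs_deriv_le (hr : IsMonotoneRotation β ω J m M b ψ) (x : ℝ) : |deriv ψ x| ≤ M :=
  (abs_of_pos (hr.deriv_pos x)).trans_le (hr.deriv_le x)

theorem exists_inverse (hr : IsMonotoneRotation β ω J m M b ψ) :
    ∃ θ : ℝ → ℝ, LeftInverse θ ψ ∧ RightInverse θ ψ :=
  bijective_iff_has_inverse.1
    ⟨hr.strictMono.injective, hr.isRunning.surjective hr.differentiable.continuous⟩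

theorem hasDerivAt_inverse (hr : IsMonotoneRotation β ω J m M b ψ) (hleft : LeftInverse θ ψ)
    (hright : RightInverse θ ψ) (u : ℝ) : HasDerivAt θ (deriv ψ (θ u))⁻¹ u := by
  have hmono : Monotone θ := fun u v huv => hr.strictMono.le_iff_le.1 (by rwa [hright, hright])
  exact (hr.differentiable (θ u)).hasDerivAt.of_local_left_inverse
    (hmono.continuous_of_surjective hleft.surjective).continuousAt (hr.deriv_pos _).ne'
    (Eventually.of_forall hright)

theorem isRunning_inverse (hr : IsMonotoneRotation β ω J m M b ψ) (hright : RightInverse θ ψ) :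
    IsRunning θ (2 * π) := fun u =>
  hr.strictMono.injective (by rw [hright, hr.isRunning, hright])

theorem isPhaseOrbit (hr : IsMonotoneRotation β ω J m M b ψ) (hω₀ : 0 < ω₀)
    (hω : ω ∈ Icc ω₀ ω₁) (hleft : LeftInverse θ ψ) (hright : RightInverse θ ψ) :
    IsPhaseOrbit β ω J (ω₀ * m) (ω₁ * M) θ (fun u => ω * deriv ψ (θ u)) (fun u => b (θ u)) := by
  have hω0 : 0 < ω := hω₀.trans_le hω.1
  have hθ := hr.hasDerivAt_inverse hleft hright
  have hV : ∀ u, HasDerivAt (fun u => ω * deriv ψ (θ u))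
      (ω * (deriv (deriv ψ) (θ u) * (deriv ψ (θ u))⁻¹)) u := fun u =>
    ((hr.differentiable_deriv (θ u)).hasDerivAt.comp u (hθ u)).const_mul ω
  have hrun := hr.isRunning_inverse hright
  refine ⟨hrun, ?_, fun u => ?_, fun u => (hV u).differentiableAt, fun u => ?_, fun u => ?_,
    fun u => ?_, fun u => ?_⟩
  · exact (congrArg θ hr.map_zero).symm.trans (hleft 0)
  · refine (hθ u).congr_deriv ?_
    rw [div_mul_cancel_left₀ hω0.ne']
  · rw [hrun, hr.isRunning.periodic_deriv]
  · exact mul_le_mul hω.1 (hr.le_deriv _) hr.pos.le hω0.le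
  · exact mul_le_mul hω.2 (hr.deriv_le _) (hr.deriv_pos _).le (hω0.le.trans hω.2)
  · have hode := hr.ode (θ u)
    have hpos := (hr.deriv_pos (θ u)).ne'
    rw [hright u] at hode
    rw [(hV u).deriv, ← hode]
    field_simp

/-- The inverse of a rotation is its time as a function of the phase, and
`ψ₁ (θ₁ u) - ψ₂ (θ₁ u) = ψ₂ (θ₂ u) - ψ₂ (θ₁ u)`. -/
theorem abs_sub_le_of_inverse {J₁ J₂ ω₁ ω₂ D : ℝ} {b₁ b₂ ψ₁ ψ₂ θ₁ θ₂ : ℝ → ℝ}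
    (hr₁ : IsMonotoneRotation β ω₁ J₁ m M b₁ ψ₁) (hr₂ : IsMonotoneRotation β ω₂ J₂ m M b₂ ψ₂)
    (hω₀ : 0 < ω₀) (hω₁ : ω₀ ≤ ω₁) (hleft : LeftInverse θ₁ ψ₁) (hright : RightInverse θ₂ ψ₂)
    (hω : |ω₁ - ω₂| ≤ D) (hθ : ∀ u, |θ₁ u - θ₂ u| ≤ D)
    (hV : ∀ u, |ω₁ * deriv ψ₁ (θ₁ u) - ω₂ * deriv ψ₂ (θ₂ u)| ≤ D) (x : ℝ) :
    |ψ₁ x - ψ₂ x| ≤ M * D ∧ |deriv ψ₁ x - deriv ψ₂ x| ≤ (1 + M) * D / ω₀ + M * D := by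
  have hM : 0 ≤ M := (abs_nonneg _).trans (hr₁.abs_deriv_le 0)
  have hMθ : M * |θ₂ (ψ₁ x) - x| ≤ M * D := by
    have hx := hθ (ψ₁ x)
    rw [hleft, abs_sub_comm] at hx
    gcongr
  have hψ := abs_image_sub_le_of_abs_deriv_le hr₂.differentiable hr₂.abs_deriv_le (θ₂ (ψ₁ x)) x
  have hψ' := abs_image_sub_le_of_abs_deriv_le hr₂.differentiable_deriv hr₂.abs_deriv_deriv_le
    (θ₂ (ψ₁ x)) x
  rw [hright] at hψ
  refine ⟨hψ.trans hMθ, ?_⟩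
  have hsame : |deriv ψ₁ x - deriv ψ₂ (θ₂ (ψ₁ x))| ≤ (1 + M) * D / ω₀ := by
    have hVx := hV (ψ₁ x)
    rw [hleft] at hVx
    rw [le_div_iff₀' hω₀]
    calc ω₀ * |deriv ψ₁ x - deriv ψ₂ (θ₂ (ψ₁ x))|
        ≤ |ω₁ * (deriv ψ₁ x - deriv ψ₂ (θ₂ (ψ₁ x)))| := by
          rw [abs_mul, abs_of_pos (hω₀.trans_le hω₁)]
          gcongr
      _ = |(ω₁ * deriv ψ₁ x - ω₂ * deriv ψ₂ (θ₂ (ψ₁ x)))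
            - (ω₁ - ω₂) * deriv ψ₂ (θ₂ (ψ₁ x))| := by ring_nf
      _ ≤ D + D * M := by
          refine (abs_sub _ _).trans (add_le_add hVx ?_)
          rw [abs_mul]
          exact mul_le_mul hω (hr₂.abs_deriv_le _) (abs_nonneg _) ((abs_nonneg _).trans hω)
      _ = (1 + M) * D := by ring
  exact (abs_sub_le _ _ _).trans (add_le_add hsame (hψ'.trans hMθ))

theorem exists_abs_sub_le {κ : ℝ} (β I : ℝ) (hκ : 0 ≤ κ) (hω₀ : 0 < ω₀) (hω₁ : 0 < ω₁)
    (hm : 0 < m) (hM : 0 < M) :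
    ∃ C > 0, ∀ α₁ ∈ Icc ω₀ ω₁, ∀ α₂ ∈ Icc ω₀ ω₁, ∀ {b₁ b₂ ψ₁ ψ₂ : ℝ → ℝ},
      IsMonotoneRotation β α₁ (I - κ * α₁) m M b₁ ψ₁ →
      IsMonotoneRotation β α₂ (I - κ * α₂) m M b₂ ψ₂ →
      Continuous b₁ → Continuous b₂ → Periodic b₁ (2 * π) → Periodic b₂ (2 * π) →
      ∃ x₁ x₂, |x₁ - x₂| ≤ C * |b₁ x₁ - b₂ x₂| ∧ |α₁ - α₂| ≤ C * |b₁ x₁ - b₂ x₂| ∧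
        ∀ x, |ψ₁ x - ψ₂ x| ≤ C * |b₁ x₁ - b₂ x₂| ∧
          |deriv ψ₁ x - deriv ψ₂ x| ≤ C * |b₁ x₁ - b₂ x₂| := by
  obtain ⟨C, hC, horbit⟩ := IsPhaseOrbit.exists_abs_sub_le β I hκ (mul_pos hω₀ hm) (mul_pos hω₁ hM)
  refine ⟨C + (1 + M) * C / ω₀ + M * C, by positivity, ?_⟩
  intro α₁ hα₁ α₂ hα₂ b₁ b₂ ψ₁ ψ₂ hr₁ hr₂ hb₁ hb₂ hp₁ hp₂
  obtain ⟨θ₁, hleft₁, hright₁⟩ := hr₁.exists_inverse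
  obtain ⟨θ₂, hleft₂, hright₂⟩ := hr₂.exists_inverse
  have ho₁ := hr₁.isPhaseOrbit hω₀ hα₁ hleft₁ hright₁
  have ho₂ := hr₂.isPhaseOrbit hω₀ hα₂ hleft₂ hright₂
  obtain ⟨u, hu⟩ := exists_forall_abs_le_of_periodic
    ((hb₁.comp ho₁.differentiable_time.continuous).sub
      (hb₂.comp ho₂.differentiable_time.continuous))
    ((ho₁.isRunning.periodic_comp hp₁).sub (ho₂.isRunning.periodic_comp hp₂)) two_pi_pos.ne'
  refine ⟨θ₁ u, θ₂ u, ?_⟩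
  set G := |b₁ (θ₁ u) - b₂ (θ₂ u)|
  obtain ⟨hω, hVθ⟩ := horbit ho₁ ho₂ (G := G) hu
  have hsub := hr₁.abs_sub_le_of_inverse hr₂ hω₀ hα₁.1 hleft₁ hright₂ hω (fun u => (hVθ u).2)
    fun u => (hVθ u).1
  have hG : 0 ≤ G := abs_nonneg _
  have h₁ : 0 ≤ C * G := mul_nonneg hC.le hG
  have h₂ : 0 ≤ (1 + M) * (C * G) / ω₀ := by positivity
  have h₃ : 0 ≤ M * (C * G) := by positivity
  have hsum : (C + (1 + M) * C / ω₀ + M * C) * G =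
      C * G + (1 + M) * (C * G) / ω₀ + M * (C * G) := by ring
  rw [hsum]
  exact ⟨by linarith [(hVθ u).2], by linarith,
    fun x => ⟨by linarith [(hsub x).1], by linarith [(hsub x).2]⟩⟩

end IsMonotoneRotation

end MonotoneRotation

/-- The parameters of the biased array: those of the circuit and the bias current `I`. -/
structure BiasedCircuit extends LRCCircuit where
  I : ℝ
  one_lt_I : 1 < I
  γ_ne_zero_or_R_ne_zero : γ ≠ 0 ∨ R ≠ 0

namespace BiasedCircuit

/-- The conductance of the load for direct current, which is blocked by the capacitor if there is
one: the mean load current of a wave of frequency `ω` is `p.conductance * ω`. -/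
noncomputable def conductance (p : BiasedCircuit) : ℝ :=
  if p.γ = 0 then p.R⁻¹ else 0

theorem conductance_nonneg (p : BiasedCircuit) : 0 ≤ p.conductance := by
  unfold conductance
  split_ifs
  exacts [inv_nonneg.2 p.R_nonneg, le_rfl]

theorem γ_mul_conductance (p : BiasedCircuit) : p.γ * p.conductance = 0 := by
  unfold conductance
  split_ifs with hγ
  exacts [by rw [hγ, zero_mul], mul_zero _]

theorem R_mul_conductance (p : BiasedCircuit) (hγ : p.γ = 0) : p.R * p.conductance = 1 := by
  rw [conductance, if_pos hγ, mul_inv_cancel₀ (p.γ_ne_zero_or_R_ne_zero.resolve_left (absurd hγ))]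

/-- Lower bound for the frequency of a wave. -/
noncomputable def minFrequency (p : BiasedCircuit) : ℝ :=
  (p.I - 1) / (1 + p.conductance)

/-- Upper bound for the frequency of a wave. -/
noncomputable def maxFrequency (p : BiasedCircuit) : ℝ :=
  (p.I + 1) / (1 + p.conductance)

theorem minFrequency_pos (p : BiasedCircuit) : 0 < p.minFrequency :=
  div_pos (sub_pos.2 p.one_lt_I) (by linarith [p.conductance_nonneg])

theorem maxFrequency_pos (p : BiasedCircuit) : 0 < p.maxFrequency :=
  div_pos (by linarith [p.one_lt_I]) (by linarith [p.conductance_nonneg])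

end BiasedCircuit

/-- A normalized discrete rotating wave in the time variable for which its period is `2π`: `ω` is
the frequency, `b` the deviation of the load current from its mean `p.conductance * ω`, and `e` the
deviation of the capacitor voltage from its mean. -/
structure RescaledDRW (p : BiasedCircuit) (N : ℕ) where
  (ω : ℝ) (ψ b e : ℝ → ℝ)
  ω_pos : 0 < ω
  rotation : IsForcedRotation p.β ω (p.I - p.conductance * ω) b ψ
  map_zero : ψ 0 = 0
  differentiable_b : Differentiable ℝ b
  differentiable_e : Differentiable ℝ e
  b_mem : b ∈ fluctuations (2 * π / N)
  inductor : ∀ x, p.L * ω * deriv b x + p.R * b x + e x =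
    ω * (shiftAverage N (2 * π / N) (deriv ψ) x - 1)
  capacitor : ∀ x, ω * deriv e x = p.γ * b x

theorem tendsto_two_pi_div_nat : Tendsto (fun N : ℕ => 2 * π / N) atTop (𝓝[>] 0) :=
  tendsto_nhdsWithin_iff.2 ⟨tendsto_const_div_atTop_nhds_zero_nat (2 * π),
    (eventually_gt_atTop 0).mono fun _ hN => div_pos two_pi_pos (Nat.cast_pos.2 hN)⟩

namespace RescaledDRW

variable {p : BiasedCircuit} {N : ℕ}

/-- The fluctuation of the averaged junction voltage. -/
noncomputable def a (s : RescaledDRW p N) (x : ℝ) : ℝ :=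
  s.ω * (shiftAverage N (2 * π / N) (deriv s.ψ) x - 1)

/-- The fluctuation of the averaged supercurrent; its mean is determined by the averaged junction
equation. -/
noncomputable def f (s : RescaledDRW p N) (x : ℝ) : ℝ :=
  shiftAverage N (2 * π / N) (fun y => sin (s.ψ y)) x - (p.I - (1 + p.conductance) * s.ω)

theorem hasDerivAt_a (s : RescaledDRW p N) (x : ℝ) :
    HasDerivAt s.a (s.ω * shiftAverage N (2 * π / N) (deriv (deriv s.ψ)) x) x :=
  ((hasDerivAt_shiftAverage s.rotation.differentiable_deriv x).sub_const 1).const_mul s.ω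

theorem isResponse (s : RescaledDRW p N) (hN : 0 < N) :
    p.IsResponse s.ω (2 * π / N) s.f s.a s.b s.e := by
  have ha : s.a ∈ fluctuations (2 * π / N) := Submodule.smul_mem _ s.ω
    (s.rotation.isRunning.shiftAverage_deriv_sub_one_mem_fluctuations hN s.rotation.differentiable)
  have he : s.e = s.a - (p.L * s.ω) • deriv s.b - p.R • s.b := funext fun x => by
    simp only [Pi.sub_apply, Pi.smul_apply, smul_eq_mul]
    rw [a]
    linarith [s.inductor x]
  have he_mem : s.e ∈ fluctuations (2 * π / N) := by
    rw [he]
    exact sub_mem (sub_mem ha (Submodule.smul_mem _ _ (deriv_mem_fluctuations s.differentiable_b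
      (periodic_of_mem_fluctuations s.b_mem)))) (Submodule.smul_mem _ _ s.b_mem)
  refine ⟨⟨fun x => (s.hasDerivAt_a x).differentiableAt, s.differentiable_b, s.differentiable_e, ha,
    s.b_mem, he_mem⟩, fun x => ?_, fun x => ?_, fun x => ?_⟩
  · have hode : (p.β * s.ω ^ 2) • deriv (deriv s.ψ) + s.ω • deriv s.ψ + (fun y => sin (s.ψ y)) + s.b
        = fun _ => p.I - p.conductance * s.ω := funext s.rotation.ode
    have havg := congrFun (congrArg (shiftAverage N (2 * π / N)) hode) x
    simp only [map_add, map_smul, shiftAverage_eq_self hN (periodic_of_mem_fluctuations s.b_mem),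
      shiftAverage_eq_self hN (g := fun _ => p.I - p.conductance * s.ω) fun _ => rfl,
      Pi.add_apply, Pi.smul_apply, smul_eq_mul] at havg
    rw [(s.hasDerivAt_a x).deriv, a, f]
    linarith
  · rw [a, s.inductor x, sub_self]
  · rw [s.capacitor x, sub_self]

theorem f_mem_fluctuations (s : RescaledDRW p N) (hN : 0 < N) :
    s.f ∈ fluctuations (2 * π / N) := by
  have hr := s.isResponse hN
  have hf : s.f = -((p.β * s.ω) • deriv s.a + s.a + s.b) := funext fun x => by
    simp only [Pi.neg_apply, Pi.add_apply, Pi.smul_apply, smul_eq_mul]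
    linarith [hr.junction x]
  rw [hf]
  exact neg_mem (add_mem (add_mem (Submodule.smul_mem _ _ (deriv_mem_fluctuations
    hr.differentiable_a (periodic_of_mem_fluctuations hr.a_mem))) hr.a_mem) hr.b_mem)

theorem hasDerivAt_f (s : RescaledDRW p N) (x : ℝ) :
    HasDerivAt s.f (shiftAverage N (2 * π / N) (fun y => cos (s.ψ y) * deriv s.ψ y) x) x := by
  have hsin : ∀ y, HasDerivAt (fun y => sin (s.ψ y)) (cos (s.ψ y) * deriv s.ψ y) y := fun y =>
    (s.rotation.differentiable y).hasDerivAt.sin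
  have havg := hasDerivAt_shiftAverage (N := N) (h := 2 * π / N)
    (fun y => (hsin y).differentiableAt) x
  rw [funext fun y => (hsin y).deriv] at havg
  exact havg.sub_const _

theorem abs_mean_supercurrent_le (s : RescaledDRW p N) (hN : 0 < N) :
    |p.I - (1 + p.conductance) * s.ω| ≤ 1 := by
  obtain ⟨z, hz⟩ := exists_eq_zero_of_mem_fluctuations (s.f_mem_fluctuations hN)
    (div_pos two_pi_pos (Nat.cast_pos.2 hN))
  rw [← sub_eq_zero.1 hz]
  exact abs_shiftAverage_le hN (fun y => abs_sin_le_one (s.ψ y)) z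

theorem abs_f_le (s : RescaledDRW p N) (hN : 0 < N) (x : ℝ) : |s.f x| ≤ 2 := calc
  |s.f x| ≤ 1 + 1 := (abs_sub _ _).trans <| add_le_add
    (abs_shiftAverage_le hN (fun y => abs_sin_le_one (s.ψ y)) x) (s.abs_mean_supercurrent_le hN)
  _ = 2 := one_add_one_eq_two

theorem frequency_mem_Icc (s : RescaledDRW p N) (hN : 0 < N) :
    s.ω ∈ Icc p.minFrequency p.maxFrequency := by
  have hκ : 0 < 1 + p.conductance := by linarith [p.conductance_nonneg]
  have hmean := abs_le.1 (s.abs_mean_supercurrent_le hN)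
  exact ⟨(div_le_iff₀' hκ).2 (by linarith), (le_div_iff₀' hκ).2 (by linarith)⟩

theorem abs_bias_le (s : RescaledDRW p N) (hN : 0 < N) :
    |p.I - p.conductance * s.ω| ≤ 1 + p.maxFrequency := by
  have hω := s.frequency_mem_Icc hN
  have hmean := abs_le.1 (s.abs_mean_supercurrent_le hN)
  exact abs_le.2 ⟨by linarith [s.ω_pos, hω.2], by linarith [hω.2]⟩

theorem exists_abs_deriv_le (p : BiasedCircuit) :
    ∃ M > 0, ∀ᶠ N in atTop, ∀ s : RescaledDRW p N,
      ∀ x, |deriv s.ψ x| ≤ M ∧ |deriv (deriv s.ψ) x| ≤ M := by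
  obtain ⟨C, hC, hbound⟩ := p.exists_forall_isResponse_le p.minFrequency_pos
  have hω₀ := p.minFrequency_pos
  have hω₁ := p.maxFrequency_pos
  have hβ := p.β_pos
  set K := 1 + p.maxFrequency + 1 + C * 2
  set q := p.β * p.minFrequency ^ 2
  have hq : 0 < q := by positivity
  refine ⟨K / p.minFrequency + 2 * K / q, by positivity, ?_⟩
  filter_upwards [tendsto_two_pi_div_nat.eventually hbound, eventually_gt_atTop 0]
    with N hN hN0 s x
  have hω := s.frequency_mem_Icc hN0
  have hb : ∀ x, |s.b x| ≤ C * 2 := fun x =>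
    (hN s.ω hω.1 (s.isResponse hN0) (s.abs_f_le hN0) x).2.1
  have hJ : |p.I - p.conductance * s.ω| + 1 + C * 2 ≤ K := by
    linarith [s.abs_bias_le hN0]
  have h₁ : |deriv s.ψ x| ≤ K / p.minFrequency := by
    rw [le_div_iff₀' hω₀]
    calc p.minFrequency * |deriv s.ψ x| ≤ |s.ω * deriv s.ψ x| := by
          rw [abs_mul, abs_of_pos s.ω_pos]
          exact mul_le_mul_of_nonneg_right hω.1 (abs_nonneg _)
      _ ≤ K := (s.rotation.abs_mul_deriv_le hb x).trans hJ
  have h₂ : |deriv (deriv s.ψ) x| ≤ 2 * K / q := by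
    rw [le_div_iff₀' hq]
    calc q * |deriv (deriv s.ψ) x| ≤ |p.β * s.ω ^ 2 * deriv (deriv s.ψ) x| := by
          rw [abs_mul, abs_of_nonneg (by positivity : 0 ≤ p.β * s.ω ^ 2)]
          simp only [q]
          gcongr
          exact hω.1
      _ ≤ 2 * K := (s.rotation.abs_mul_deriv_deriv_le hb x).trans
          (mul_le_mul_of_nonneg_left hJ zero_le_two)
  have h₃ : 0 ≤ K / p.minFrequency := (abs_nonneg _).trans h₁
  have h₄ : 0 ≤ 2 * K / q := (abs_nonneg _).trans h₂
  exact ⟨by linarith, by linarith⟩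

/-- Not only `f` but also its derivative is a fluctuation of period `2 * π / N`, hence small. -/
theorem abs_deriv_f_le {M : ℝ} (s : RescaledDRW p N) (hN : 0 < N)
    (hM : ∀ x, |deriv s.ψ x| ≤ M ∧ |deriv (deriv s.ψ) x| ≤ M) (x : ℝ) :
    |deriv s.f x| ≤ 2 * π / N * (M ^ 2 + M) := by
  have hcos : ∀ y, HasDerivAt (fun y => cos (s.ψ y) * deriv s.ψ y)
      (-sin (s.ψ y) * deriv s.ψ y * deriv s.ψ y + cos (s.ψ y) * deriv (deriv s.ψ) y) y := fun y =>
    (s.rotation.differentiable y).hasDerivAt.cos.mul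
      (s.rotation.differentiable_deriv y).hasDerivAt
  have hcosd : Differentiable ℝ fun y => cos (s.ψ y) * deriv s.ψ y :=
    fun y => (hcos y).differentiableAt
  have hderiv : deriv s.f = shiftAverage N (2 * π / N) (fun y => cos (s.ψ y) * deriv s.ψ y) :=
    funext fun y => (s.hasDerivAt_f y).deriv
  have hmem : deriv s.f ∈ fluctuations (2 * π / N) := deriv_mem_fluctuations
    (fun y => (s.hasDerivAt_f y).differentiableAt)
    (periodic_of_mem_fluctuations (s.f_mem_fluctuations hN))
  refine abs_le_mul_of_mem_fluctuations hmem (div_pos two_pi_pos (Nat.cast_pos.2 hN))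
    (hderiv ▸ differentiable_shiftAverage hcosd) (fun y => ?_) x
  rw [hderiv, deriv_shiftAverage hcosd]
  refine abs_shiftAverage_le hN (fun z => ?_) y
  obtain ⟨h₁, h₂⟩ := hM z
  rw [(hcos z).deriv]
  calc _ ≤ |sin (s.ψ z)| * |deriv s.ψ z| * |deriv s.ψ z| +
        |cos (s.ψ z)| * |deriv (deriv s.ψ) z| := by
        refine (abs_add_le _ _).trans_eq ?_
        simp only [abs_mul, abs_neg]
    _ ≤ 1 * M * M + 1 * M := by
        have hM0 : 0 ≤ M := (abs_nonneg _).trans h₁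
        gcongr
        exacts [abs_sin_le_one _, abs_cos_le_one _]
    _ = M ^ 2 + M := by ring

theorem exists_abs_deriv_response_le (p : BiasedCircuit) :
    ∃ C > 0, ∀ᶠ N in atTop, ∀ s : RescaledDRW p N, ∀ x,
      |deriv s.a x| ≤ C * (2 * π / N) ∧ |deriv s.b x| ≤ C * (2 * π / N) ∧
        |deriv s.e x| ≤ C * (2 * π / N) := by
  obtain ⟨M, hM, hψ⟩ := exists_abs_deriv_le p
  obtain ⟨C, hC, hbound⟩ := p.exists_forall_isResponse_deriv_le p.minFrequency_pos
  refine ⟨C * (M ^ 2 + M), by positivity, ?_⟩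
  filter_upwards [hψ, tendsto_two_pi_div_nat.eventually hbound, eventually_gt_atTop 0]
    with N hψN hN hN0 s
  have hlip := abs_image_sub_le_of_abs_deriv_le (fun y => (s.hasDerivAt_f y).differentiableAt)
    (s.abs_deriv_f_le hN0 (hψN s))
  have hcomm : C * (M ^ 2 + M) * (2 * π / N) = C * (2 * π / N * (M ^ 2 + M)) := by ring
  rw [hcomm]
  exact hN s.ω (s.frequency_mem_Icc hN0).1 (s.isResponse hN0) hlip (by positivity)

theorem eventually_abs_b_le (p : BiasedCircuit) {ε : ℝ} (hε : 0 < ε) :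
    ∀ᶠ N in atTop, ∀ s : RescaledDRW p N, ∀ x, |s.b x| ≤ ε := by
  obtain ⟨C, -, hbound⟩ := exists_abs_deriv_response_le p
  have htendsto : Tendsto (fun N : ℕ => 2 * π / N * (C * (2 * π / N))) atTop (𝓝 0) := by
    have h := tendsto_const_div_atTop_nhds_zero_nat (2 * π)
    simpa only [mul_zero] using h.mul (h.const_mul C)
  filter_upwards [hbound, htendsto.eventually (eventually_le_nhds hε), eventually_gt_atTop 0]
    with N hN hNε hN0 s x
  exact (abs_le_mul_of_mem_fluctuations s.b_mem (div_pos two_pi_pos (Nat.cast_pos.2 hN0))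
    s.differentiable_b (fun y => (hN s y).2.1) x).trans hNε

theorem exists_isMonotoneRotation (p : BiasedCircuit) :
    ∃ m > 0, ∃ M > 0, ∀ᶠ N in atTop, ∀ s : RescaledDRW p N,
      IsMonotoneRotation p.β s.ω (p.I - p.conductance * s.ω) m M s.b s.ψ := by
  obtain ⟨M, hM, hψ⟩ := exists_abs_deriv_le p
  obtain ⟨m, hm, ε, hε, hderiv⟩ := IsForcedRotation.exists_le_deriv p.β_pos p.minFrequency_pos
    p.maxFrequency_pos hM
  refine ⟨m, hm, M, hM, ?_⟩
  filter_upwards [hψ, eventually_abs_b_le p hε, eventually_gt_atTop 0] with N hψN hbN hN0 s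
  exact ⟨s.rotation, s.map_zero, hm, hderiv s.ω (s.frequency_mem_Icc hN0) s.rotation (hbN s)
    (fun x => (hψN s x).1) (fun x => (hψN s x).2), fun x => (le_abs_self _).trans (hψN s x).1,
    fun x => (hψN s x).2⟩

theorem abs_cos_mul_sub_le {α₁ α₂ v₁ v₂ M D : ℝ} (hv₁ : |v₁| ≤ M) (hα : |α₁ - α₂| ≤ D)
    (hv : |v₁ - v₂| ≤ D) : |cos α₁ * v₁ - cos α₂ * v₂| ≤ (M + 1) * D := calc
  _ = |(cos α₁ - cos α₂) * v₁ + cos α₂ * (v₁ - v₂)| := by ring_nf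
  _ ≤ |cos α₁ - cos α₂| * |v₁| + |cos α₂| * |v₁ - v₂| := by
      simpa only [abs_mul] using abs_add_le ((cos α₁ - cos α₂) * v₁) (cos α₂ * (v₁ - v₂))
  _ ≤ D * M + 1 * D := by
      have hD : 0 ≤ D := (abs_nonneg _).trans hα
      gcongr
      exacts [(abs_cos_sub_cos_le α₁ α₂).trans hα, abs_cos_le_one α₂]
  _ = (M + 1) * D := by ring

theorem abs_f_sub_le {M D : ℝ} (s₁ s₂ : RescaledDRW p N) (hN : 0 < N)
    (hM : ∀ x, |deriv s₁.ψ x| ≤ M) (hψ : ∀ x, |s₁.ψ x - s₂.ψ x| ≤ D)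
    (hψ' : ∀ x, |deriv s₁.ψ x - deriv s₂.ψ x| ≤ D) (x : ℝ) :
    |s₁.f x - s₂.f x| ≤ 2 * π / N * ((M + 1) * D) := by
  have hderiv := fun y => (s₁.hasDerivAt_f y).sub (s₂.hasDerivAt_f y)
  refine abs_le_mul_of_mem_fluctuations
    (sub_mem (s₁.f_mem_fluctuations hN) (s₂.f_mem_fluctuations hN))
    (div_pos two_pi_pos (Nat.cast_pos.2 hN)) (fun y => (hderiv y).differentiableAt) (fun y => ?_) x
  rw [(hderiv y).deriv]
  exact abs_shiftAverage_sub_le hN (fun z => abs_cos_mul_sub_le (hM z) (hψ z) (hψ' z)) y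

theorem exists_abs_b_sub_le (p : BiasedCircuit) :
    ∃ K > 0, ∀ᶠ N in atTop, ∀ (s₁ s₂ : RescaledDRW p N) (D : ℝ), |s₁.ω - s₂.ω| ≤ D →
      (∀ x, |s₁.ψ x - s₂.ψ x| ≤ D ∧ |deriv s₁.ψ x - deriv s₂.ψ x| ≤ D) →
      ∀ x, |s₁.b x - s₂.b x| ≤ K * (2 * π / N) * D := by
  obtain ⟨M, hM, hψ⟩ := exists_abs_deriv_le p
  obtain ⟨C, hC, hresp⟩ := exists_abs_deriv_response_le p
  obtain ⟨A, hA, happrox⟩ := p.exists_forall_isApproxResponse_le p.minFrequency_pos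
  have hβ := p.β_pos
  refine ⟨A * (M + 1 + (p.β + 1) * C), by positivity, ?_⟩
  filter_upwards [hψ, hresp, tendsto_two_pi_div_nat.eventually happrox, eventually_gt_atTop 0]
    with N hψN hrespN happroxN hN0 s₁ s₂ D hω hψD x
  have hdetuning : ∀ {t : ℝ}, |t| ≤ C * (2 * π / N) →
      |(s₁.ω - s₂.ω) * t| ≤ D * (C * (2 * π / N)) := fun ht => by
    rw [abs_mul]
    exact mul_le_mul hω ht (abs_nonneg _) ((abs_nonneg _).trans hω)
  have hsub := (s₁.isResponse hN0).sub (s₂.isResponse hN0)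
    (s₁.abs_f_sub_le s₂ hN0 (fun y => (hψN s₁ y).1) (fun y => (hψD y).1) fun y => (hψD y).2)
    (fun y => hdetuning (hrespN s₂ y).1) (fun y => hdetuning (hrespN s₂ y).2.1)
    fun y => hdetuning (hrespN s₂ y).2.2
  calc |s₁.b x - s₂.b x|
      ≤ A * (2 * π / N * ((M + 1) * D) + (p.β + 1) * (D * (C * (2 * π / N)))) :=
        (happroxN s₁.ω (s₁.frequency_mem_Icc hN0).1 hsub x).2.1
    _ = A * (M + 1 + (p.β + 1) * C) * (2 * π / N) * D := by ring

theorem exists_abs_sub_le (p : BiasedCircuit) :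
    ∃ C > 0, ∀ᶠ N in atTop, ∀ s₁ s₂ : RescaledDRW p N, ∃ x₁ x₂,
      |x₁ - x₂| ≤ C * |s₁.b x₁ - s₂.b x₂| ∧ |s₁.ω - s₂.ω| ≤ C * |s₁.b x₁ - s₂.b x₂| ∧
        ∀ x, |s₁.ψ x - s₂.ψ x| ≤ C * |s₁.b x₁ - s₂.b x₂| ∧
          |deriv s₁.ψ x - deriv s₂.ψ x| ≤ C * |s₁.b x₁ - s₂.b x₂| := by
  obtain ⟨m, hm, M, hM, hmono⟩ := exists_isMonotoneRotation p
  obtain ⟨C, hC, hsub⟩ := IsMonotoneRotation.exists_abs_sub_le p.β p.I p.conductance_nonneg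
    p.minFrequency_pos p.maxFrequency_pos hm hM
  refine ⟨C, hC, ?_⟩
  filter_upwards [hmono, eventually_gt_atTop 0] with N hN hN0 s₁ s₂
  have hper : ∀ s : RescaledDRW p N, Periodic s.b (2 * π) := fun s => by
    simpa only [mul_div_cancel₀ (2 * π) (Nat.cast_ne_zero.2 hN0.ne')] using
      (periodic_of_mem_fluctuations s.b_mem).nat_mul N
  exact hsub s₁.ω (s₁.frequency_mem_Icc hN0) s₂.ω (s₂.frequency_mem_Icc hN0) (hN s₁) (hN s₂)
    s₁.differentiable_b.continuous s₂.differentiable_b.continuous (hper s₁) (hper s₂)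

/-- The waves differ by at most a multiple of the load current discrepancy `G`, and `G` is in turn
at most a multiple of `G / N`. -/
theorem eventually_unique (p : BiasedCircuit) :
    ∀ᶠ N in atTop, ∀ s₁ s₂ : RescaledDRW p N, s₁.ω = s₂.ω ∧ s₁.ψ = s₂.ψ ∧ s₁.b = s₂.b := by
  obtain ⟨C, -, hwave⟩ := exists_abs_sub_le p
  obtain ⟨K, -, hload⟩ := exists_abs_b_sub_le p
  obtain ⟨A, hA, hresp⟩ := exists_abs_deriv_response_le p
  have hsmall : ∀ᶠ N : ℕ in atTop, (K + A) * C * (2 * π / N) < 1 := by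
    have h := (tendsto_const_div_atTop_nhds_zero_nat (2 * π)).const_mul ((K + A) * C)
    rw [mul_zero] at h
    exact h.eventually (eventually_lt_nhds one_pos)
  filter_upwards [hwave, hload, hresp, hsmall] with N hwaveN hloadN hrespN hsmallN s₁ s₂
  obtain ⟨x₁, x₂, hx, hω, hψ⟩ := hwaveN s₁ s₂
  have hb := hloadN s₁ s₂ _ hω hψ
  set G := |s₁.b x₁ - s₂.b x₂|
  have hG_le : G ≤ (K + A) * C * (2 * π / N) * G := calc
    G ≤ |s₁.b x₁ - s₂.b x₁| + |s₂.b x₁ - s₂.b x₂| := abs_sub_le _ _ _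
    _ ≤ K * (2 * π / N) * (C * G) + A * (2 * π / N) * (C * G) := by
        refine add_le_add (hb x₁) ?_
        exact (abs_image_sub_le_of_abs_deriv_le s₂.differentiable_b (fun y => (hrespN s₂ y).2.1)
          x₁ x₂).trans (mul_le_mul_of_nonneg_left hx (by positivity))
    _ = (K + A) * C * (2 * π / N) * G := by ring
  have hG : G = 0 := by
    by_contra hne
    have hpos : 0 < G := (abs_nonneg _).lt_of_ne' hne
    exact (mul_lt_of_lt_one_left hpos hsmallN).not_ge hG_le
  rw [hG, mul_zero] at hω
  simp only [hG, mul_zero, abs_nonpos_iff, sub_eq_zero] at hω hψ hb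
  exact ⟨hω, funext fun x => (hψ x).1, funext hb⟩

end RescaledDRW

namespace IsNormalizedDRW

section Equations

variable {N : ℕ} {β I L R γ T : ℝ} {ψ Q : ℝ → ℝ}

theorem junction_eq (h : IsNormalizedDRW N β I L R γ ψ Q T) {k : ℕ} (hk : k < N) (t : ℝ) :
    β * deriv (deriv ψ) t + deriv ψ t + sin (ψ t) + deriv Q (t + k * T / N) = I := by
  obtain ⟨-, -, -, -, -, hjunction, -⟩ := h
  have hderiv : deriv (fun t => ψ (t - k * T / N)) = fun t => deriv ψ (t - k * T / N) :=
    funext fun t => deriv_comp_sub_const ψ _ t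
  simpa only [hderiv, deriv_comp_sub_const, add_sub_cancel_right] using
    hjunction ⟨k, hk⟩ (t + k * T / N)

theorem load_eq (h : IsNormalizedDRW N β I L R γ ψ Q T) (t : ℝ) :
    L * deriv (deriv Q) t + R * deriv Q t + γ * Q t = shiftAverage N (T / N) (deriv ψ) t := by
  obtain ⟨-, -, -, -, -, -, hload⟩ := h
  simpa only [deriv_comp_sub_const, shiftAverage_apply, mul_div_assoc] using hload t

/-- Neighbouring junctions see the same load current, but with a time lag of `T / N`. -/
theorem periodic_deriv_load (h : IsNormalizedDRW N β I L R γ ψ Q T) (hN : 2 ≤ N) :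
    Periodic (deriv Q) (T / N) := fun t => by
  have h₀ := h.junction_eq (two_pos.trans_le hN) t
  have h₁ := h.junction_eq (one_lt_two.trans_le hN) t
  simp only [Nat.cast_zero, Nat.cast_one, zero_mul, zero_div, add_zero, one_mul] at h₀ h₁
  linarith

end Equations

section Rescaling

variable {p : BiasedCircuit} {N : ℕ} {T : ℝ} {ψ Q : ℝ → ℝ}

/-- The deviation of the load current from its mean, in the time variable of period `2π`. -/
noncomputable def currentFluctuation (p : BiasedCircuit) (Q : ℝ → ℝ) (T x : ℝ) : ℝ :=
  deriv Q (T / (2 * π) * x) - p.conductance * (2 * π / T)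

/-- The deviation of the capacitor voltage from its mean, in the time variable of period `2π`. The
mean voltage is that of the junctions less the voltage drop at the resistor. -/
noncomputable def capacitorFluctuation (p : BiasedCircuit) (Q : ℝ → ℝ) (T x : ℝ) : ℝ :=
  p.γ * Q (T / (2 * π) * x) - (1 - p.R * p.conductance) * (2 * π / T)

theorem hasDerivAt_currentFluctuation (h : IsNormalizedDRW N p.β p.I p.L p.R p.γ ψ Q T) (x : ℝ) :
    HasDerivAt (currentFluctuation p Q T)
      (T / (2 * π) * deriv (deriv Q) (T / (2 * π) * x)) x := by
  obtain ⟨-, -, hQ, -⟩ := h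
  exact (((hQ.differentiable_deriv_two _).hasDerivAt.scomp x
    ((hasDerivAt_id x).const_mul _)).sub_const _).congr_deriv
      (by simp only [id_eq, mul_one, smul_eq_mul])

theorem hasDerivAt_capacitorFluctuation (h : IsNormalizedDRW N p.β p.I p.L p.R p.γ ψ Q T) (x : ℝ) :
    HasDerivAt (capacitorFluctuation p Q T)
      (p.γ * (T / (2 * π) * deriv Q (T / (2 * π) * x))) x := by
  obtain ⟨-, -, hQ, -⟩ := h
  exact ((((hQ.differentiable two_ne_zero _).hasDerivAt.scomp x
    ((hasDerivAt_id x).const_mul _)).const_mul _).sub_const _).congr_deriv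
      (by simp only [id_eq, mul_one, smul_eq_mul])

theorem isForcedRotation (h : IsNormalizedDRW N p.β p.I p.L p.R p.γ ψ Q T) (hN : 0 < N) :
    IsForcedRotation p.β (2 * π / T) (p.I - p.conductance * (2 * π / T))
      (currentFluctuation p Q T) fun x => ψ (T / (2 * π) * x) := by
  obtain ⟨hT, hψ, -, hrun, -⟩ := id h
  refine ⟨hψ.comp (contDiff_const.mul contDiff_id), fun x => ?_, fun x => ?_⟩
  · rw [mul_add, div_mul_cancel₀ T two_pi_pos.ne', hrun]
  · have hode := h.junction_eq hN (T / (2 * π) * x)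
    have hderiv : deriv (fun x => ψ (T / (2 * π) * x)) =
        fun x => T / (2 * π) * deriv ψ (T / (2 * π) * x) :=
      funext fun x => deriv_comp_mul_left _ ψ x
    have hderiv₂ : deriv (deriv fun x => ψ (T / (2 * π) * x)) x =
        T / (2 * π) * (T / (2 * π) * deriv (deriv ψ) (T / (2 * π) * x)) := by
      rw [hderiv, deriv_const_mul_field, deriv_comp_mul_left, smul_eq_mul]
    have hω : 2 * π / T * (T / (2 * π)) = 1 := by field_simp
    simp only [Nat.cast_zero, zero_mul, zero_div, add_zero] at hode
    rw [hderiv₂, hderiv, currentFluctuation]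
    linear_combination hode + (p.β * deriv (deriv ψ) (T / (2 * π) * x) *
      (2 * π / T * (T / (2 * π)) + 1) + deriv ψ (T / (2 * π) * x)) * hω

theorem inductor_eq (h : IsNormalizedDRW N p.β p.I p.L p.R p.γ ψ Q T) (x : ℝ) :
    p.L * (2 * π / T) * deriv (currentFluctuation p Q T) x + p.R * currentFluctuation p Q T x +
        capacitorFluctuation p Q T x =
      2 * π / T * (shiftAverage N (2 * π / N) (deriv fun x => ψ (T / (2 * π) * x)) x - 1) := by
  obtain ⟨hT, -⟩ := id h
  have hω : 2 * π / T * (T / (2 * π)) = 1 := by field_simp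
  have hload := h.load_eq (T / (2 * π) * x)
  have hshift : ∀ j : Fin N, T / (2 * π) * (x - (j : ℕ) * (2 * π / N)) =
      T / (2 * π) * x - (j : ℕ) * (T / N) := fun j => by field_simp
  have havg : shiftAverage N (2 * π / N) (deriv fun x => ψ (T / (2 * π) * x)) x =
      T / (2 * π) * shiftAverage N (T / N) (deriv ψ) (T / (2 * π) * x) := by
    simp only [shiftAverage_apply, deriv_comp_mul_left, smul_eq_mul, hshift, ← Finset.mul_sum]
    ring
  rw [(h.hasDerivAt_currentFluctuation x).deriv, havg, ← hload, currentFluctuation,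
    capacitorFluctuation]
  linear_combination -(p.R * deriv Q (T / (2 * π) * x) + p.γ * Q (T / (2 * π) * x)) * hω

theorem capacitor_eq (h : IsNormalizedDRW N p.β p.I p.L p.R p.γ ψ Q T) (x : ℝ) :
    2 * π / T * deriv (capacitorFluctuation p Q T) x = p.γ * currentFluctuation p Q T x := by
  obtain ⟨hT, -⟩ := id h
  have hω : 2 * π / T * (T / (2 * π)) = 1 := by field_simp
  rw [(h.hasDerivAt_capacitorFluctuation x).deriv, currentFluctuation]
  linear_combination p.γ * deriv Q (T / (2 * π) * x) * hω + 2 * π / T * p.γ_mul_conductance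

theorem periodic_currentFluctuation (h : IsNormalizedDRW N p.β p.I p.L p.R p.γ ψ Q T)
    (hN : 2 ≤ N) : Periodic (currentFluctuation p Q T) (2 * π / N) := fun x => by
  have hshift : T / (2 * π) * (x + 2 * π / N) = T / (2 * π) * x + T / N := by field_simp
  rw [currentFluctuation, currentFluctuation, hshift, h.periodic_deriv_load hN]

theorem resistor_add_capacitor_mem_fluctuations
    (h : IsNormalizedDRW N p.β p.I p.L p.R p.γ ψ Q T) (hN : 2 ≤ N) :
    p.R • currentFluctuation p Q T + capacitorFluctuation p Q T ∈ fluctuations (2 * π / N) := by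
  have hrot := h.isForcedRotation (two_pos.trans_le hN)
  have hsum : p.R • currentFluctuation p Q T + capacitorFluctuation p Q T =
      (2 * π / T) • (shiftAverage N (2 * π / N) (deriv fun x => ψ (T / (2 * π) * x)) - 1) -
        (p.L * (2 * π / T)) • deriv (currentFluctuation p Q T) := funext fun x => by
    simp only [Pi.add_apply, Pi.sub_apply, Pi.smul_apply, Pi.one_apply, smul_eq_mul]
    linarith [h.inductor_eq x]
  rw [hsum]
  exact sub_mem
    (Submodule.smul_mem _ _ (hrot.isRunning.shiftAverage_deriv_sub_one_mem_fluctuations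
      (two_pos.trans_le hN) hrot.differentiable))
    (Submodule.smul_mem _ _ (deriv_mem_fluctuations
      (fun x => (h.hasDerivAt_currentFluctuation x).differentiableAt)
      (h.periodic_currentFluctuation hN)))

/-- If there is a capacitor, the current is the derivative of its periodic charge; otherwise the
current is determined by the inductor equation, all other terms of which are fluctuations. -/
theorem currentFluctuation_mem_fluctuations
    (h : IsNormalizedDRW N p.β p.I p.L p.R p.γ ψ Q T) (hN : 2 ≤ N) :
    currentFluctuation p Q T ∈ fluctuations (2 * π / N) := by
  have hsum := h.resistor_add_capacitor_mem_fluctuations hN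
  by_cases hγ : p.γ = 0
  · have hR : p.R ≠ 0 := p.γ_ne_zero_or_R_ne_zero.resolve_left (absurd hγ)
    have hcapacitor : capacitorFluctuation p Q T = 0 := funext fun x => by
      rw [capacitorFluctuation, hγ, p.R_mul_conductance hγ, sub_self, zero_mul, zero_mul, sub_zero,
        Pi.zero_apply]
    rwa [hcapacitor, add_zero, Submodule.smul_mem_iff _ hR] at hsum
  · have hcurrent : p.γ • currentFluctuation p Q T =
        (2 * π / T) • deriv (capacitorFluctuation p Q T) :=
      funext fun x => (h.capacitor_eq x).symm
    have hper : Periodic (capacitorFluctuation p Q T) (2 * π / N) := by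
      simpa only [add_sub_cancel_left] using (periodic_of_mem_fluctuations hsum).sub
        ((h.periodic_currentFluctuation hN).smul p.R)
    rw [← Submodule.smul_mem_iff _ hγ, hcurrent]
    exact Submodule.smul_mem _ _ (deriv_mem_fluctuations
      (fun x => (h.hasDerivAt_capacitorFluctuation x).differentiableAt) hper)

/-- The discrete rotating wave in the time variable for which its period is `2π`. -/
noncomputable def rescale (h : IsNormalizedDRW N p.β p.I p.L p.R p.γ ψ Q T) (hN : 2 ≤ N) :
    RescaledDRW p N where
  ω := 2 * π / T
  ψ x := ψ (T / (2 * π) * x)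
  b := currentFluctuation p Q T
  e := capacitorFluctuation p Q T
  ω_pos := div_pos two_pi_pos h.1
  rotation := h.isForcedRotation (two_pos.trans_le hN)
  map_zero := by
    obtain ⟨-, -, -, -, hzero, -⟩ := h
    rw [mul_zero, hzero]
  differentiable_b x := (h.hasDerivAt_currentFluctuation x).differentiableAt
  differentiable_e x := (h.hasDerivAt_capacitorFluctuation x).differentiableAt
  b_mem := h.currentFluctuation_mem_fluctuations hN
  inductor := h.inductor_eq
  capacitor := h.capacitor_eq

theorem period_eq (h : IsNormalizedDRW N p.β p.I p.L p.R p.γ ψ Q T) (hN : 2 ≤ N) :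
    T = 2 * π / (h.rescale hN).ω :=
  (div_div_cancel₀ two_pi_pos.ne').symm

theorem wave_eq (h : IsNormalizedDRW N p.β p.I p.L p.R p.γ ψ Q T) (hN : 2 ≤ N) :
    ψ = fun t => (h.rescale hN).ψ ((h.rescale hN).ω * t) := funext fun t => by
  obtain ⟨hT, -⟩ := id h
  simp only [rescale]
  congr 1
  field_simp

theorem deriv_load_eq (h : IsNormalizedDRW N p.β p.I p.L p.R p.γ ψ Q T) (hN : 2 ≤ N) :
    deriv Q = fun t => (h.rescale hN).b ((h.rescale hN).ω * t) +
      p.conductance * (h.rescale hN).ω := funext fun t => by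
  obtain ⟨hT, -⟩ := id h
  simp only [rescale, currentFluctuation, sub_add_cancel]
  congr 1
  field_simp

end Rescaling

end IsNormalizedDRW

/-- **Theorem 2 (iii) (Huang–Aronson).** For `I > 1`, `β > 0` and `γ ≠ 0` or `R ≠ 0`,
there is an `N₀` such that for every `N > N₀` the normalized discrete rotating wave
solution of the `N`-junction Josephson system with LRC load is unique: any two such
solutions have the same period, the same waveform and the same load current. -/
theorem drw_unique_for_large_N (β I L R γ : ℝ) (hI : 1 < I) (hβ : 0 < β)
    (hL : 0 ≤ L) (hR : 0 ≤ R) (hγ : 0 ≤ γ) (hRγ : γ ≠ 0 ∨ R ≠ 0) :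
    ∃ N₀ : ℕ, ∀ N : ℕ, N₀ < N →
      ∀ (ψ Q ψ' Q' : ℝ → ℝ) (T T' : ℝ),
        IsNormalizedDRW N β I L R γ ψ Q T →
        IsNormalizedDRW N β I L R γ ψ' Q' T' →
        T = T' ∧ ψ = ψ' ∧ deriv Q = deriv Q' := by
  let p : BiasedCircuit := ⟨⟨β, L, R, γ, hβ, hL, hR, hγ⟩, I, hI, hRγ⟩
  obtain ⟨N₀, hunique⟩ := eventually_atTop.1 (RescaledDRW.eventually_unique p)
  refine ⟨max N₀ 2, fun N hN ψ Q ψ' Q' T T' h h' => ?_⟩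
  have hN₂ : 2 ≤ N := (le_max_right N₀ 2).trans hN.le
  replace h : IsNormalizedDRW N p.β p.I p.L p.R p.γ ψ Q T := h
  replace h' : IsNormalizedDRW N p.β p.I p.L p.R p.γ ψ' Q' T' := h'
  obtain ⟨hω, hψ, hb⟩ := hunique N ((le_max_left N₀ 2).trans hN.le) (h.rescale hN₂) (h'.rescale hN₂)
  refine ⟨?_, ?_, ?_⟩
  · rw [h.period_eq hN₂, h'.period_eq hN₂, hω]
  · rw [h.wave_eq hN₂, h'.wave_eq hN₂, hω, hψ]
  · rw [h.deriv_load_eq hN₂, h'.deriv_load_eq hN₂, hω, hb]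
end

section
/- (Theorem 5, resistive case, Huang) Let N ≥ 2, β > 0, R > 0, and consider the Josephson junction array with pure resistive load: β φ_k'' + φ_k' + sin(φ_k) + (1/(NR)) Σ_{j=1}^N φ_j' = I for k = 1, …, N. If I > 2/R + 1, then this system admits no semirotor solution: there is no solution in which some nonempty proper subset of the junctions follows a running function ψ₁ of period T while the remaining junctions follow a genuinely T-periodic function ψ₂. -/
open Real

/-- The family of junction waveforms of a semirotor: the junctions in `S` follow `ψ₁`
and the remaining junctions follow `ψ₂`. -/
def semiFam (N : ℕ) (S : Finset (Fin N)) (ψ₁ ψ₂ : ℝ → ℝ) : Fin N → ℝ → ℝ :=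
  fun j t => if j ∈ S then ψ₁ t else ψ₂ t

/-!
Write `c j` for the advance `φ j (t + T) - φ j t` of junction `j`, and `κ = 1 / (N R)`. Integrating
the equation of junction `k` over a period, where the sine is at most `1`, gives
`(I - 1) T ≤ c k + κ ∑ j, c j`. Subtracting the equations of two junctions cancels the load, and the
difference of two sines is at most `2`, so `c j - c k ≤ 2 T`. In a semirotor, take `k` outside the
running block `S`: then `c k = 0`, the second estimate reads `2π ≤ 2 T`, and the first becomes
`(I - 1) T ≤ κ |S| 2π ≤ 2 κ |S| T ≤ (2 / R) T`.
-/

theorem deriv_add_period {ψ : ℝ → ℝ} {T c : ℝ} (hψ : ∀ t, ψ (t + T) = ψ t + c) (t : ℝ) :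
    deriv ψ (t + T) = deriv ψ t := by
  rw [← deriv_comp_add_const, funext hψ, deriv_add_const]

/-- The primitive `β ψ' + ψ` of the linear part `β ψ'' + ψ'` of the junction equation. It turns
bounds on that linear part into bounds on the advance of `ψ` over a period. -/
noncomputable def inertialPhase (β : ℝ) (ψ : ℝ → ℝ) (t : ℝ) : ℝ :=
  β * deriv ψ t + ψ t

/-- The current `β ψ'' + ψ' + sin ψ` through a junction with phase `ψ`. As `deriv` is total, it is
meaningful only for twice differentiable `ψ`. -/
noncomputable def junctionCurrent (β : ℝ) (ψ : ℝ → ℝ) (t : ℝ) : ℝ :=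
  β * deriv (deriv ψ) t + deriv ψ t + sin (ψ t)

theorem inertialPhase_add_period {β T c : ℝ} {ψ : ℝ → ℝ} (hψ : ∀ t, ψ (t + T) = ψ t + c)
    (t : ℝ) : inertialPhase β ψ (t + T) = inertialPhase β ψ t + c := by
  rw [inertialPhase, inertialPhase, deriv_add_period hψ, hψ, add_assoc]

theorem hasDerivAt_inertialPhase {β : ℝ} {ψ : ℝ → ℝ} (hψ : Differentiable ℝ ψ)
    (hψ' : Differentiable ℝ (deriv ψ)) (t : ℝ) :
    HasDerivAt (inertialPhase β ψ) (junctionCurrent β ψ t - sin (ψ t)) t := by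
  rw [junctionCurrent, add_sub_cancel_right]
  exact ((hψ' t).hasDerivAt.const_mul β).add (hψ t).hasDerivAt

theorem advance_sub_advance_le_of_junctionCurrent_eq {β T c₁ c₂ : ℝ} {ψ₁ ψ₂ : ℝ → ℝ}
    (hT : 0 ≤ T)
    (hψ₁ : Differentiable ℝ ψ₁) (hψ₁' : Differentiable ℝ (deriv ψ₁))
    (hψ₂ : Differentiable ℝ ψ₂) (hψ₂' : Differentiable ℝ (deriv ψ₂))
    (hc₁ : ∀ t, ψ₁ (t + T) = ψ₁ t + c₁) (hc₂ : ∀ t, ψ₂ (t + T) = ψ₂ t + c₂)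
    (hcurrent : ∀ t, junctionCurrent β ψ₁ t = junctionCurrent β ψ₂ t) :
    c₁ - c₂ ≤ 2 * T := by
  have hderiv (t : ℝ) : HasDerivAt (inertialPhase β ψ₁ - inertialPhase β ψ₂)
      (sin (ψ₂ t) - sin (ψ₁ t)) t :=
    ((hasDerivAt_inertialPhase hψ₁ hψ₁' t).sub
      (hasDerivAt_inertialPhase hψ₂ hψ₂' t)).congr_deriv <| by
        rw [hcurrent, sub_sub_sub_cancel_left]
  have hderiv_le (t : ℝ) : deriv (inertialPhase β ψ₁ - inertialPhase β ψ₂) t ≤ 2 := by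
    rw [(hderiv t).deriv]
    linarith [sin_le_one (ψ₂ t), neg_one_le_sin (ψ₁ t)]
  have hadvance := image_sub_le_mul_sub_of_deriv_le
    (fun t => (hderiv t).differentiableAt) hderiv_le hT
  have hend₁ := inertialPhase_add_period (β := β) hc₁ 0
  have hend₂ := inertialPhase_add_period (β := β) hc₂ 0
  rw [zero_add] at hend₁ hend₂
  simp only [Pi.sub_apply] at hadvance
  linarith

/-- The phases `φ` solve the equations of an array with bias current `I` and resistive load:
each junction current plus the common load current `κ ∑ j, φ j'` equals `I`. The coupling `κ` is
`1 / (N * R)` for `N` junctions and load resistance `R`. -/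
def IsArraySolution {ι : Type*} [Fintype ι] (β κ I : ℝ) (φ : ι → ℝ → ℝ) : Prop :=
  ∀ k t, junctionCurrent β (φ k) t + κ * ∑ j, deriv (φ j) t = I

namespace IsArraySolution

variable {ι : Type*} [Fintype ι] {β κ I T : ℝ} {φ : ι → ℝ → ℝ} {c : ι → ℝ}

theorem sub_one_mul_period_le (hsol : IsArraySolution β κ I φ) (hT : 0 ≤ T)
    (hφ : ∀ j, Differentiable ℝ (φ j)) (hc : ∀ j t, φ j (t + T) = φ j t + c j)
    {k : ι} (hφ' : Differentiable ℝ (deriv (φ k))) :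
    (I - 1) * T ≤ c k + κ * ∑ j, c j := by
  have hderiv (t : ℝ) : HasDerivAt (fun t => inertialPhase β (φ k) t + κ * ∑ j, φ j t)
      (I - sin (φ k t)) t :=
    ((hasDerivAt_inertialPhase (hφ k) hφ' t).add
      ((HasDerivAt.fun_sum fun j _ => (hφ j t).hasDerivAt).const_mul κ)).congr_deriv <| by
        rw [← hsol k t, add_sub_right_comm]
  have hle_deriv (t : ℝ) :
      I - 1 ≤ deriv (fun t => inertialPhase β (φ k) t + κ * ∑ j, φ j t) t := by
    rw [(hderiv t).deriv]
    exact sub_le_sub_left (sin_le_one _) I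
  have hadvance := mul_sub_le_image_sub_of_le_deriv
    (fun t => (hderiv t).differentiableAt) hle_deriv hT
  have hend := inertialPhase_add_period (β := β) (hc k) 0
  have hsum : ∑ j, φ j T = ∑ j, φ j 0 + ∑ j, c j := by
    simp only [← Finset.sum_add_distrib, ← hc, zero_add]
  rw [zero_add] at hend
  rw [hend, hsum] at hadvance
  linarith

theorem advance_sub_advance_le (hsol : IsArraySolution β κ I φ) (hT : 0 ≤ T)
    (hφ : ∀ j, Differentiable ℝ (φ j)) (hφ' : ∀ j, Differentiable ℝ (deriv (φ j)))
    (hc : ∀ j t, φ j (t + T) = φ j t + c j) (j k : ι) :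
    c j - c k ≤ 2 * T :=
  advance_sub_advance_le_of_junctionCurrent_eq hT (hφ j) (hφ' j) (hφ k) (hφ' k) (hc j) (hc k)
    fun t => add_right_cancel ((hsol j t).trans (hsol k t).symm)

theorem current_le_of_running_of_periodic (hsol : IsArraySolution β κ I φ) (hκ : 0 ≤ κ)
    (hT : 0 < T) (hφ : ∀ j, Differentiable ℝ (φ j)) (hφ' : ∀ j, Differentiable ℝ (deriv (φ j)))
    {S : Finset ι} (hS : S ≠ Finset.univ) (hrun : ∀ j ∈ S, IsRunning (φ j) T)
    (hper : ∀ j ∉ S, Function.Periodic (φ j) T) :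
    I ≤ 2 * κ * S.card + 1 := by
  classical
  obtain ⟨k, hk⟩ : ∃ k, k ∉ S := by simpa [Finset.eq_univ_iff_forall] using hS
  have hc (j : ι) (t : ℝ) : φ j (t + T) = φ j t + if j ∈ S then 2 * π else 0 := by
    split_ifs with hj
    · exact hrun j hj t
    · rw [hper j hj t, add_zero]
  have hadvance : ∑ j, (if j ∈ S then 2 * π else 0) ≤ S.card * (2 * T) := by
    rw [Finset.sum_ite_mem, Finset.univ_inter, ← nsmul_eq_mul]
    refine Finset.sum_le_card_nsmul S _ _ fun j hj => ?_
    simpa [hj, hk] using hsol.advance_sub_advance_le hT.le hφ hφ' hc j k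
  have hperiod : (I - 1) * T ≤ 2 * κ * S.card * T :=
    calc (I - 1) * T
      _ ≤ κ * ∑ j, (if j ∈ S then 2 * π else 0) := by
        simpa only [if_neg hk, zero_add] using
          hsol.sub_one_mul_period_le hT.le hφ hc (hφ' k)
      _ ≤ κ * (S.card * (2 * T)) := by gcongr
      _ = 2 * κ * S.card * T := by ring
  exact sub_le_iff_le_add.mp (le_of_mul_le_mul_right hperiod hT)

end IsArraySolution

theorem mul_card_div_card_univ_le {ι : Type*} [Fintype ι] {a : ℝ} (ha : 0 ≤ a) (S : Finset ι) :
    a * (S.card / Fintype.card ι) ≤ a :=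
  mul_le_of_le_one_right ha <|
    div_le_one_of_le₀ (mod_cast S.card_le_univ) (Nat.cast_nonneg _)

theorem semiFam_of_mem {N : ℕ} {S : Finset (Fin N)} {j : Fin N} (hj : j ∈ S) (ψ₁ ψ₂ : ℝ → ℝ) :
    semiFam N S ψ₁ ψ₂ j = ψ₁ :=
  funext fun _ => if_pos hj

theorem semiFam_of_notMem {N : ℕ} {S : Finset (Fin N)} {j : Fin N} (hj : j ∉ S)
    (ψ₁ ψ₂ : ℝ → ℝ) : semiFam N S ψ₁ ψ₂ j = ψ₂ :=
  funext fun _ => if_neg hj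

theorem contDiff_semiFam {N : ℕ} {ψ₁ ψ₂ : ℝ → ℝ} {n : WithTop ℕ∞} (hψ₁ : ContDiff ℝ n ψ₁)
    (hψ₂ : ContDiff ℝ n ψ₂) (S : Finset (Fin N)) (j : Fin N) :
    ContDiff ℝ n (semiFam N S ψ₁ ψ₂ j) := by
  by_cases hj : j ∈ S
  · rwa [semiFam_of_mem hj]
  · rwa [semiFam_of_notMem hj]

theorem huang_no_semirotor_resistive_general {ι : Type*} [Fintype ι] {β R I T : ℝ}
    {S : Finset ι} (hR : 0 < R) (hI : 2 / R * (S.card / Fintype.card ι) + 1 < I)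
    (hS : S ≠ Finset.univ) (hT : 0 < T) :
    ¬ ∃ φ : ι → ℝ → ℝ,
        (∀ j, Differentiable ℝ (φ j)) ∧ (∀ j, Differentiable ℝ (deriv (φ j))) ∧
        (∀ j ∈ S, IsRunning (φ j) T) ∧ (∀ j ∉ S, Function.Periodic (φ j) T) ∧
        IsArraySolution β (1 / (Fintype.card ι * R)) I φ := by
  rintro ⟨φ, hφ, hφ', hrun, hper, hsol⟩
  have hcurrent := hsol.current_le_of_running_of_periodic (by positivity) hT hφ hφ' hS hrun hper
  have hthreshold : 2 * (1 / (Fintype.card ι * R)) * S.card =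
      2 / R * (S.card / Fintype.card ι) := by
    rw [mul_one_div, div_mul_div_comm, div_mul_eq_mul_div, mul_comm R]
  linarith

/-- **Theorem 5, resistive case (Huang).** For the Josephson junction array with pure
resistive load, `β φ_k'' + φ_k' + sin (φ_k) + (1/(NR)) ∑_j φ_j' = I`, if
`I > 2/R + 1` then no semirotor solution exists: there is no solution in which the
junctions in some nonempty proper subset follow a running function `ψ₁` of period `T`
while the remaining junctions follow a `T`-periodic function `ψ₂`. -/
theorem huang_no_semirotor_resistive (N : ℕ) (hN : 2 ≤ N) (β R I : ℝ)
    (hβ : 0 < β) (hR : 0 < R) (hI : 2 / R + 1 < I) :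
    ¬ ∃ (S : Finset (Fin N)) (ψ₁ ψ₂ : ℝ → ℝ) (T : ℝ),
        S.Nonempty ∧ S ≠ Finset.univ ∧ 0 < T ∧
        ContDiff ℝ 2 ψ₁ ∧ ContDiff ℝ 2 ψ₂ ∧
        IsRunning ψ₁ T ∧ (∀ t : ℝ, ψ₂ (t + T) = ψ₂ t) ∧
        (∀ k : Fin N, ∀ t : ℝ,
          β * deriv (deriv (semiFam N S ψ₁ ψ₂ k)) t + deriv (semiFam N S ψ₁ ψ₂ k) t +
            Real.sin (semiFam N S ψ₁ ψ₂ k t) +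
            (1 / ((N : ℝ) * R)) * ∑ j : Fin N, deriv (semiFam N S ψ₁ ψ₂ j) t = I) := by
  rintro ⟨S, ψ₁, ψ₂, T, -, hS, hT, hψ₁, hψ₂, hrun, hper, hsol⟩
  have hφ (j : Fin N) := contDiff_semiFam hψ₁ hψ₂ S j
  have harray : IsArraySolution β (1 / (Fintype.card (Fin N) * R)) I (semiFam N S ψ₁ ψ₂) := by
    rw [Fintype.card_fin]
    exact hsol
  have hthreshold := mul_card_div_card_univ_le (div_nonneg zero_le_two hR.le) S
  exact huang_no_semirotor_resistive_general hR ((add_le_add_left hthreshold 1).trans_lt hI) hS hT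
    ⟨semiFam N S ψ₁ ψ₂, fun j => (hφ j).differentiable two_ne_zero,
      fun j => (hφ j).differentiable_deriv_two, fun j hj => by rwa [semiFam_of_mem hj],
      fun j hj => by rwa [semiFam_of_notMem hj], harray⟩
end

section
/- (Mirollo) Let N ≥ 1 and I > 1, and consider the zero-capacitance (β = 0) Josephson junction array with pure resistive load: φ_k' + sin(φ_k) + (1/N) Σ_{j=1}^N φ_j' = I for k = 1, …, N. Then this system admits a splay-phase (discrete rotating wave) solution: there exist T > 0 and a running function ψ of period T such that φ_j(t) = ψ(t − (j−1)T/N), j = 1, …, N, is a solution. -/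
open Real

/-!
In the phases `x = φ - π / 2` the array reads `x_k' = a - cos x_k` with a drive `a` common to all
junctions, so the flow acts on the phases by Möbius transformations of the circle, and the
half-angle chords `sin ((x_j - x_k) / 2)` only change by one positive factor per endpoint. The flow
is also reversed by the reflections `x_j ↦ -x_{-j}` and `x_j ↦ -x_{rev j}` (modulo `2 * π`). An
orbit that is symmetric under the first at time `0` and under the second at a time `t₁ > 0` is a
rotating wave, because the composition of the two reflections shifts time by `2 * t₁` and the index
by one.

Such an orbit is found by shooting. The initial phases run through a path of Möbius images of the
evenly spaced configuration that are symmetric under the first reflection, and each orbit is stopped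
when its mean phase reaches `π`. At the two ends of the path the sum of the first and the last phase
is then below and above `2 * π`, so it equals `2 * π` somewhere in between. There the chord
relations put all the sums `x_j + x_{rev j}` on the same side of `2 * π`; their mean is `2 * π`, so
all of them equal it, which is the second symmetry.
-/

open Set
open scoped NNReal BigOperators

section LipschitzFlow

variable {E : Type*} [NormedAddCommGroup E] [NormedSpace ℝ E] {V : E → E} {K : ℝ≥0}

theorem dist_le_of_isIntegralCurve_of_nonneg {f g : ℝ → E} (hV : LipschitzWith K V)
    (hf : IsIntegralCurve f fun _ ↦ V) (hg : IsIntegralCurve g fun _ ↦ V) {t : ℝ} (ht : 0 ≤ t) :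
    dist (f t) (g t) ≤ dist (f 0) (g 0) * exp (K * t) := by
  simpa only [sub_zero] using dist_le_of_trajectories_ODE (fun _ ↦ hV)
    hf.continuous.continuousOn (fun s _ ↦ (hf s).hasDerivWithinAt)
    hg.continuous.continuousOn (fun s _ ↦ (hg s).hasDerivWithinAt) le_rfl t ⟨ht, le_rfl⟩

theorem isIntegralCurve_comp_neg {f : ℝ → E} (hf : IsIntegralCurve f fun _ ↦ V) :
    IsIntegralCurve (fun t ↦ f (-t)) fun _ ↦ -V := fun t ↦ by
  simpa only [Pi.neg_apply, Function.comp_def, neg_one_smul] using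
    (hf (-t)).scomp t (hasDerivAt_neg t)

theorem dist_le_of_isIntegralCurve {f g : ℝ → E} (hV : LipschitzWith K V)
    (hf : IsIntegralCurve f fun _ ↦ V) (hg : IsIntegralCurve g fun _ ↦ V) (t : ℝ) :
    dist (f t) (g t) ≤ dist (f 0) (g 0) * exp (K * |t|) := by
  rcases le_total 0 t with ht | ht
  · simpa only [abs_of_nonneg ht] using dist_le_of_isIntegralCurve_of_nonneg hV hf hg ht
  · simpa only [abs_of_nonpos ht, neg_neg, neg_zero] using
      dist_le_of_isIntegralCurve_of_nonneg hV.neg (isIntegralCurve_comp_neg hf)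
        (isIntegralCurve_comp_neg hg) (neg_nonneg.2 ht)

theorem eq_of_isIntegralCurve {v : ℝ → E → E} {f g : ℝ → E} (hv : ∀ t, LipschitzWith K (v t))
    (hf : IsIntegralCurve f v) (hg : IsIntegralCurve g v) {t₀ : ℝ} (h : f t₀ = g t₀) : f = g :=
  ODE_solution_unique_univ (s := fun _ ↦ univ) (fun t ↦ (hv t).lipschitzOnWith)
    (fun t ↦ ⟨hf t, mem_univ _⟩) (fun t ↦ ⟨hg t, mem_univ _⟩) h

theorem continuous_uncurry_of_isIntegralCurve {φ : E → ℝ → E} (hV : LipschitzWith K V)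
    (hφ₀ : ∀ x, φ x 0 = x) (hφ : ∀ x, IsIntegralCurve (φ x) fun _ ↦ V) :
    Continuous (Function.uncurry φ) := by
  have continuousOn_strip (R : ℝ) :
      ContinuousOn (Function.uncurry φ) (univ ×ˢ Ioo (-R) R) := by
    refine continuousOn_prod_of_continuousOn_lipschitzOnWith _ (exp (K * R)).toNNReal
      (fun x _ ↦ (hφ x).continuous.continuousOn) fun t ht ↦ LipschitzWith.lipschitzOnWith <|
        .of_dist_le_mul fun x y ↦ ?_
    calc dist (φ x t) (φ y t) ≤ dist (φ x 0) (φ y 0) * exp (K * |t|) :=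
          dist_le_of_isIntegralCurve hV (hφ x) (hφ y) t
      _ ≤ (exp (K * R)).toNNReal * dist x y := by
          rw [hφ₀, hφ₀, mul_comm, Real.coe_toNNReal _ (exp_pos _).le]
          gcongr
          exact (abs_lt.2 ht).le
  refine continuous_iff_continuousAt.2 fun ⟨x, t⟩ ↦
    (continuousOn_strip (|t| + 1)).continuousAt (prod_mem_nhds Filter.univ_mem (Ioo_mem_nhds ?_ ?_))
  · linarith [neg_abs_le t]
  · linarith [le_abs_self t]

variable [CompleteSpace E]

/-- The existence time `1 / (K + 1)` does not depend on `x`, because `V` grows at most linearly. -/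
theorem exists_hasDerivAt_Ioo_of_lipschitzWith (hV : LipschitzWith K V) (x : E) :
    ∃ γ : ℝ → E, γ 0 = x ∧
      ∀ t ∈ Ioo (-(1 / (K + 1 : ℝ))) (1 / (K + 1 : ℝ)), HasDerivAt γ (V (γ t)) t := by
  set ε : ℝ := 1 / (K + 1 : ℝ) with hε
  have hε_pos : 0 < ε := by positivity
  have norm_le : ∀ z ∈ Metric.closedBall x ‖V x‖₊, ‖V z‖ ≤ ((K + 1) * ‖V x‖₊ : ℝ≥0) := by
    intro z hz
    calc ‖V z‖ ≤ ‖V z - V x‖ + ‖V x‖ := norm_le_norm_sub_add _ _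
      _ ≤ K * ‖V x‖ + ‖V x‖ := by
          gcongr
          exact (hV.norm_sub_le z x).trans (by gcongr; exact mem_closedBall_iff_norm.1 hz)
      _ = ((K + 1) * ‖V x‖₊ : ℝ≥0) := by push_cast; ring
  have picard : IsPicardLindelof (fun _ ↦ V) (⟨0, by simp [hε_pos.le]⟩ : Icc (-ε) ε) x
      ‖V x‖₊ 0 ((K + 1) * ‖V x‖₊) K := by
    refine .of_time_independent norm_le hV.lipschitzOnWith (le_of_eq ?_)
    push_cast
    rw [sub_zero, zero_sub, neg_neg, max_self, hε]
    field_simp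
    ring
  obtain ⟨γ, hγ₀, hγ⟩ := picard.exists_eq_forall_mem_Icc_hasDerivWithinAt₀
  exact ⟨γ, hγ₀, fun t ht ↦
    (hγ t (Ioo_subset_Icc_self ht)).hasDerivAt (Icc_mem_nhds ht.1 ht.2)⟩

open scoped Manifold in
theorem exists_isIntegralCurve_of_lipschitzWith (hV : LipschitzWith K V) (hV₁ : ContDiff ℝ 1 V)
    (x : E) : ∃ γ : ℝ → E, γ 0 = x ∧ IsIntegralCurve γ fun _ ↦ V := by
  have hasMFDerivAt_iff (γ : ℝ → E) (t : ℝ) : HasMFDerivAt 𝓘(ℝ, ℝ) 𝓘(ℝ, E) γ t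
      ((1 : ℝ →L[ℝ] ℝ).smulRight (V (γ t))) ↔ HasDerivAt γ (V (γ t)) t :=
    hasMFDerivAt_iff_hasFDerivAt
  obtain ⟨γ, hγ₀, hγ⟩ := exists_isMIntegralCurve_of_isMIntegralCurveOn (I := 𝓘(ℝ, E)) (v := V)
    (contMDiff_vectorSpace_iff_contDiff.2 hV₁) (ε := 1 / (K + 1 : ℝ)) (by positivity)
    (fun y ↦ by
      obtain ⟨γ, hγ₀, hγ⟩ := exists_hasDerivAt_Ioo_of_lipschitzWith hV y
      exact ⟨γ, hγ₀, fun t ht ↦ ((hasMFDerivAt_iff γ t).2 (hγ t ht)).hasMFDerivWithinAt⟩) x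
  exact ⟨γ, hγ₀, fun t ↦ (hasMFDerivAt_iff γ t).1 (hγ t)⟩

theorem exists_continuous_flow_of_lipschitzWith (hV : LipschitzWith K V) (hV₁ : ContDiff ℝ 1 V) :
    ∃ φ : E → ℝ → E, (∀ x, φ x 0 = x) ∧ (∀ x, IsIntegralCurve (φ x) fun _ ↦ V) ∧
      Continuous (Function.uncurry φ) := by
  choose φ hφ₀ hφ using exists_isIntegralCurve_of_lipschitzWith hV hV₁
  exact ⟨φ, hφ₀, hφ, continuous_uncurry_of_isIntegralCurve hV hφ₀ hφ⟩

end LipschitzFlow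

theorem continuous_of_strictMono_of_eq {Λ : Type*} [TopologicalSpace Λ] {F : Λ → ℝ → ℝ} {τ : Λ → ℝ}
    {c : ℝ} (hF : ∀ t, Continuous fun l ↦ F l t) (hmono : ∀ l, StrictMono (F l))
    (hτ : ∀ l, F l (τ l) = c) : Continuous τ := by
  refine continuous_iff_continuousAt.2 fun l₀ ↦ tendsto_order.2 ⟨fun a ha ↦ ?_, fun b hb ↦ ?_⟩
  · have hlt : F l₀ a < c := hτ l₀ ▸ hmono l₀ ha
    filter_upwards [(hF a).continuousAt.eventually_lt_const hlt] with l hl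
    exact (hmono l).lt_iff_lt.1 (hl.trans_eq (hτ l).symm)
  · have hlt : c < F l₀ b := hτ l₀ ▸ hmono l₀ hb
    filter_upwards [(hF b).continuousAt.eventually_const_lt hlt] with l hl
    exact (hmono l).lt_iff_lt.1 ((hτ l).trans_lt hl)

/-- A phase oscillator with time-dependent drive `a`. Shifting phases by `π / 2`, which replaces
`sin` by `cos`, makes the symmetries of the array reflections `x ↦ 2 * π * m - x`. -/
noncomputable def drivenField (a : ℝ → ℝ) (t x : ℝ) : ℝ := a t - cos x

section Driven

variable {a f g : ℝ → ℝ}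

theorem lipschitzWith_drivenField (a : ℝ → ℝ) (t : ℝ) : LipschitzWith 1 (drivenField a t) := by
  refine .of_dist_le_mul fun x y ↦ ?_
  rw [drivenField, drivenField, dist_sub_left]
  exact LipschitzWith.dist_le_mul lipschitzWith_cos x y

theorem isIntegralCurve_drivenField_add_two_pi (hf : IsIntegralCurve f (drivenField a)) :
    IsIntegralCurve (fun t ↦ f t + 2 * π) (drivenField a) := fun t ↦ by
  simpa only [drivenField, cos_add_two_pi] using (hf t).add_const (2 * π)

theorem lt_of_isIntegralCurve_drivenField (hf : IsIntegralCurve f (drivenField a))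
    (hg : IsIntegralCurve g (drivenField a)) {t₀ : ℝ} (h : f t₀ < g t₀) (t : ℝ) : f t < g t := by
  by_contra! hle
  obtain ⟨s, hs⟩ := mem_range_of_exists_le_of_exists_ge (hg.continuous.sub hf.continuous)
    ⟨t, sub_nonpos.2 hle⟩ ⟨t₀, sub_nonneg.2 h.le⟩
  have hfg : f = g :=
    eq_of_isIntegralCurve (lipschitzWith_drivenField a) hf hg (sub_eq_zero.1 hs).symm
  exact h.ne (congrFun hfg t₀)

theorem le_of_isIntegralCurve_drivenField (hf : IsIntegralCurve f (drivenField a))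
    (hg : IsIntegralCurve g (drivenField a)) {t₀ : ℝ} (h : f t₀ ≤ g t₀) (t : ℝ) : f t ≤ g t := by
  rcases h.eq_or_lt with heq | hlt
  · exact (congrFun (eq_of_isIntegralCurve (lipschitzWith_drivenField a) hf hg heq) t).le
  · exact (lt_of_isIntegralCurve_drivenField hf hg hlt t).le

/-- The factor by which the flow stretches half-angle chords at the end that follows `f`. -/
noncomputable def chordGrowth (f : ℝ → ℝ) (t : ℝ) : ℝ := exp (∫ s in (0 : ℝ)..t, sin (f s) / 2)

theorem hasDerivAt_chordGrowth (hf : Continuous f) (t : ℝ) :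
    HasDerivAt (chordGrowth f) (chordGrowth f t * (sin (f t) / 2)) t :=
  ((by fun_prop : Continuous fun s ↦ sin (f s) / 2).integral_hasStrictDerivAt 0 t).hasDerivAt.exp

theorem cos_sub_cos_mul_cos_half_sub (x y : ℝ) :
    (cos y - cos x) * cos ((x - y) / 2) = (sin x + sin y) * sin ((x - y) / 2) := by
  obtain ⟨u, v, rfl, rfl⟩ : ∃ u v, x = u + v ∧ y = u - v :=
    ⟨(x + y) / 2, (x - y) / 2, by ring, by ring⟩
  rw [show (u + v - (u - v)) / 2 = v by ring, cos_add, cos_sub, sin_add, sin_sub]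
  ring

theorem sin_half_sub_eq_mul_chordGrowth (hf : IsIntegralCurve f (drivenField a))
    (hg : IsIntegralCurve g (drivenField a)) (t : ℝ) :
    sin ((f t - g t) / 2) = sin ((f 0 - g 0) / 2) * chordGrowth f t * chordGrowth g t := by
  have growth_ne_zero (u : ℝ → ℝ) (s : ℝ) : chordGrowth u s ≠ 0 := (exp_pos _).ne'
  let ratio : ℝ → ℝ := fun s ↦ sin ((f s - g s) / 2) / (chordGrowth f s * chordGrowth g s)
  have hasDerivAt_ratio (s : ℝ) : HasDerivAt ratio 0 s := by
    refine ((((hf s).sub (hg s)).div_const 2).sin.div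
      ((hasDerivAt_chordGrowth hf.continuous s).mul (hasDerivAt_chordGrowth hg.continuous s))
      (mul_ne_zero (growth_ne_zero f s) (growth_ne_zero g s))).congr_deriv ?_
    simp only [Pi.sub_apply, Pi.mul_apply, drivenField, div_eq_zero_iff]
    left
    linear_combination (chordGrowth f s * chordGrowth g s / 2) *
      cos_sub_cos_mul_cos_half_sub (f s) (g s)
  have ratio_eq : ratio t = ratio 0 := is_const_of_deriv_eq_zero
    (fun s ↦ (hasDerivAt_ratio s).differentiableAt) (fun s ↦ (hasDerivAt_ratio s).deriv) t 0
  have growth_zero (u : ℝ → ℝ) : chordGrowth u 0 = 1 := by simp [chordGrowth]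
  rw [mul_assoc, ← div_eq_iff (mul_ne_zero (growth_ne_zero f t) (growth_ne_zero g t))]
  simpa only [ratio, growth_zero, mul_one, div_one] using ratio_eq

end Driven

theorem expect_add_perm {ι : Type*} [Fintype ι] (x : ι → ℝ) (σ : Equiv.Perm ι) :
    𝔼 j, (x j + x (σ j)) = 2 * 𝔼 j, x j := by
  have expect_reindex : 𝔼 j, x (σ j) = 𝔼 j, x j := Fintype.expect_equiv σ _ _ fun _ ↦ rfl
  rw [Finset.expect_add_distrib, expect_reindex, two_mul]

theorem sin_mul_sin_half_add (a x y : ℝ) :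
    sin a * sin ((x + y) / 2) = sin ((2 * π - a - x) / 2) * sin ((2 * π - a - y) / 2) -
      sin ((x - a) / 2) * sin ((y - a) / 2) := by
  obtain ⟨b, rfl⟩ : ∃ b, a = 2 * b := ⟨a / 2, by ring⟩
  rw [show (2 * π - 2 * b - x) / 2 = π - (b + x / 2) by ring,
    show (2 * π - 2 * b - y) / 2 = π - (b + y / 2) by ring, sin_pi_sub, sin_pi_sub,
    show (x - 2 * b) / 2 = x / 2 - b by ring, show (y - 2 * b) / 2 = y / 2 - b by ring,
    add_div, sin_two_mul, sin_add, sin_add, sin_add, sin_sub, sin_sub]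
  ring

/-- Two families of phases whose half-angle chords differ by one positive factor per endpoint.
This is how configurations of points on the circle related by a Möbius transformation of the disc
look in angular coordinates. -/
def ChordSimilar {ι : Type*} (x y : ι → ℝ) : Prop :=
  ∃ W : ι → ℝ, (∀ j, 0 < W j) ∧ ∀ j k, sin ((x j - x k) / 2) = sin ((y j - y k) / 2) * W j * W k

namespace ChordSimilar

variable {ι : Type*} {x y z : ι → ℝ}

theorem trans (hxy : ChordSimilar x y) (hyz : ChordSimilar y z) : ChordSimilar x z := by
  obtain ⟨U, hU, hxy⟩ := hxy
  obtain ⟨W, hW, hyz⟩ := hyz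
  refine ⟨fun j ↦ W j * U j, fun j ↦ mul_pos (hW j) (hU j), fun j k ↦ ?_⟩
  rw [hxy, hyz]
  ring

theorem sub_mem_Ioo (h : ChordSimilar x y) {j k : ι} (hy : y j - y k ∈ Ioo 0 (2 * π))
    (hx : x j - x k ∈ Icc (-(2 * π)) (2 * π)) : x j - x k ∈ Ioo 0 (2 * π) := by
  obtain ⟨W, hW, hxy⟩ := h
  have sin_pos : 0 < sin ((x j - x k) / 2) := by
    rw [hxy]
    exact mul_pos (mul_pos (sin_pos_of_pos_of_lt_pi (by linarith [hy.1]) (by linarith [hy.2]))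
      (hW j)) (hW k)
  refine ⟨?_, hx.2.lt_of_ne fun heq ↦ ?_⟩
  · by_contra! hle
    exact sin_pos.not_ge (sin_nonpos_of_nonpos_of_neg_pi_le (by linarith) (by linarith [hx.1]))
  · rw [heq, mul_div_cancel_left₀ _ two_ne_zero, sin_pi] at sin_pos
    exact lt_irrefl _ sin_pos

theorem exists_sin_mul_sin_half_add_eq (h : ChordSimilar x y) (σ : Equiv.Perm ι) {o : ι} {C : ℝ}
    (hy : ∀ j, y j + y (σ j) = C) (hyo : ∀ j, y j - y o ∈ Icc 0 (2 * π))
    (hends : x o + x (σ o) = 2 * π) :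
    ∃ D, ∀ j, ∃ c, 0 ≤ c ∧ sin (x o) * sin ((x j + x (σ j)) / 2) = c * D := by
  obtain ⟨W, hW, hxy⟩ := h
  have sin_nonneg (j : ι) : 0 ≤ sin ((y j - y o) / 2) :=
    sin_nonneg_of_nonneg_of_le_pi (by linarith [(hyo j).1]) (by linarith [(hyo j).2])
  refine ⟨W (σ o) ^ 2 - W o ^ 2, fun j ↦
    ⟨sin ((y j - y o) / 2) * sin ((y (σ j) - y o) / 2) * W j * W (σ j), ?_, ?_⟩⟩
  · have := sin_nonneg j
    have := sin_nonneg (σ j)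
    have := hW j
    have := hW (σ j)
    positivity
  · have chord_last : sin ((2 * π - x o - x j) / 2) =
        sin ((y (σ j) - y o) / 2) * W (σ o) * W j := by
      rw [show 2 * π - x o - x j = x (σ o) - x j by linarith, hxy,
        show y (σ o) - y j = y (σ j) - y o by linarith [hy o, hy j]]
    have chord_last' : sin ((2 * π - x o - x (σ j)) / 2) =
        sin ((y j - y o) / 2) * W (σ o) * W (σ j) := by
      rw [show 2 * π - x o - x (σ j) = x (σ o) - x (σ j) by linarith, hxy,
        show y (σ o) - y (σ j) = y j - y o by linarith [hy o, hy j]]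
    rw [sin_mul_sin_half_add, chord_last, chord_last', hxy j o, hxy (σ j) o]
    ring

theorem add_perm_eq_two_pi [Fintype ι] (h : ChordSimilar x y) (σ : Equiv.Perm ι) {o : ι} {C : ℝ}
    (hy : ∀ j, y j + y (σ j) = C) (hyo : ∀ j, y j - y o ∈ Icc 0 (2 * π))
    (hx : ∀ j, x j ∈ Icc (x o) (x (σ o))) (hlt : x (σ o) < x o + 2 * π)
    (hends : x o + x (σ o) = 2 * π) (hmean : 𝔼 j, x j = π) (j : ι) : x j + x (σ j) = 2 * π := by
  obtain ⟨D, hD⟩ := h.exists_sin_mul_sin_half_add_eq σ hy hyo hends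
  have : Nonempty ι := ⟨o⟩
  have expect_eq_zero : 𝔼 j, (x j + x (σ j) - 2 * π) = 0 := by
    rw [Finset.expect_sub_distrib, expect_add_perm, hmean, Fintype.expect_const, sub_self]
  have le_of_nonneg (i : ι) (hsin : 0 ≤ sin (x o) * sin ((x i + x (σ i)) / 2)) :
      x i + x (σ i) - 2 * π ≤ 0 := by
    by_contra! hgt
    refine hsin.not_gt (mul_neg_of_pos_of_neg (sin_pos_of_pos_of_lt_pi ?_ ?_) ?_)
    · linarith
    · linarith [(hx i).2, (hx (σ i)).2]
    · rw [← neg_pos, ← sin_sub_pi]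
      exact sin_pos_of_pos_of_lt_pi (by linarith) (by linarith [(hx i).2, (hx (σ i)).2])
  have ge_of_nonpos (i : ι) (hsin : sin (x o) * sin ((x i + x (σ i)) / 2) ≤ 0) :
      0 ≤ x i + x (σ i) - 2 * π := by
    by_contra! hlt
    refine hsin.not_gt (mul_pos (sin_pos_of_pos_of_lt_pi ?_ ?_) (sin_pos_of_pos_of_lt_pi ?_ ?_)) <;>
      linarith [(hx i).1, (hx (σ i)).1]
  suffices (fun j ↦ x j + x (σ j) - 2 * π) = 0 from sub_eq_zero.1 (congrFun this j)
  rcases le_total 0 D with hD₀ | hD₀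
  · refine (Fintype.expect_eq_zero_iff_of_nonpos fun i ↦ le_of_nonneg i ?_).1 expect_eq_zero
    obtain ⟨c, hc, heq⟩ := hD i
    exact heq ▸ mul_nonneg hc hD₀
  · refine (Fintype.expect_eq_zero_iff_of_nonneg fun i ↦ ge_of_nonpos i ?_).1 expect_eq_zero
    obtain ⟨c, hc, heq⟩ := hD i
    exact heq ▸ mul_nonpos_of_nonneg_of_nonpos hc hD₀

end ChordSimilar

/-- The Josephson array solved for the derivatives, in the phases `x = φ - π / 2`: averaging the
equations gives `𝔼 φ' = (I - 𝔼 sin φ) / 2`. -/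
noncomputable def arrayField {ι : Type*} [Fintype ι] (I : ℝ) (x : ι → ℝ) (k : ι) : ℝ :=
  I / 2 + (𝔼 j, cos (x j)) / 2 - cos (x k)

section ArrayField

variable {ι : Type*} [Fintype ι] {I : ℝ} {y : ℝ → ι → ℝ}

theorem contDiff_arrayField : ContDiff ℝ 1 (arrayField I : (ι → ℝ) → ι → ℝ) := by
  unfold arrayField
  simp only [Fintype.expect_eq_sum_div_card]
  fun_prop

theorem lipschitzWith_arrayField : LipschitzWith 2 (arrayField I : (ι → ℝ) → ι → ℝ) := by
  refine .of_dist_le_mul fun x y ↦ (dist_pi_le_iff (by positivity)).2 fun k ↦ ?_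
  have cos_sub_le (j : ι) : |cos (x j) - cos (y j)| ≤ dist x y :=
    (by simpa [Real.dist_eq] using lipschitzWith_cos.dist_le_mul (x j) (y j) :
      |cos (x j) - cos (y j)| ≤ dist (x j) (y j)).trans (dist_le_pi_dist x y j)
  have expect_sub_le : |𝔼 j, (cos (x j) - cos (y j))| ≤ dist x y :=
    have : Nonempty ι := ⟨k⟩
    (Finset.abs_expect_le _ _).trans (Finset.expect_le Finset.univ_nonempty fun j _ ↦ cos_sub_le j)
  calc dist (arrayField I x k) (arrayField I y k)
      = |(𝔼 j, (cos (x j) - cos (y j))) / 2 - (cos (x k) - cos (y k))| := by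
        rw [Real.dist_eq, Finset.expect_sub_distrib, arrayField, arrayField]
        ring_nf
    _ ≤ |𝔼 j, (cos (x j) - cos (y j))| / 2 + |cos (x k) - cos (y k)| :=
        (abs_sub _ _).trans_eq (by rw [abs_div, abs_two])
    _ ≤ (2 : ℝ≥0) * dist x y := by
        rw [NNReal.coe_ofNat]
        linarith [cos_sub_le k, dist_nonneg (x := x) (y := y)]

theorem exists_isIntegralCurve_drivenField (hy : IsIntegralCurve y fun _ ↦ arrayField I) :
    ∃ a, ∀ j, IsIntegralCurve (fun t ↦ y t j) (drivenField a) :=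
  ⟨fun t ↦ I / 2 + (𝔼 j, cos (y t j)) / 2, fun j t ↦ hasDerivAt_pi.1 (hy t) j⟩

theorem chordSimilar_of_isIntegralCurve (hy : IsIntegralCurve y fun _ ↦ arrayField I) (t : ℝ) :
    ChordSimilar (y t) (y 0) := by
  obtain ⟨a, ha⟩ := exists_isIntegralCurve_drivenField hy
  exact ⟨fun j ↦ chordGrowth (fun s ↦ y s j) t, fun j ↦ exp_pos _,
    fun j k ↦ sin_half_sub_eq_mul_chordGrowth (ha j) (ha k) t⟩

theorem lt_of_isIntegralCurve_arrayField (hy : IsIntegralCurve y fun _ ↦ arrayField I) {j k : ι}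
    (h : y 0 j < y 0 k) (t : ℝ) : y t j < y t k := by
  obtain ⟨a, ha⟩ := exists_isIntegralCurve_drivenField hy
  exact lt_of_isIntegralCurve_drivenField (ha j) (ha k) h t

theorem le_of_isIntegralCurve_arrayField (hy : IsIntegralCurve y fun _ ↦ arrayField I) {j k : ι}
    (h : y 0 j ≤ y 0 k) (t : ℝ) : y t j ≤ y t k := by
  obtain ⟨a, ha⟩ := exists_isIntegralCurve_drivenField hy
  exact le_of_isIntegralCurve_drivenField (ha j) (ha k) h t

theorem lt_add_two_pi_of_isIntegralCurve_arrayField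
    (hy : IsIntegralCurve y fun _ ↦ arrayField I) {j k : ι} (h : y 0 j < y 0 k + 2 * π) (t : ℝ) :
    y t j < y t k + 2 * π := by
  obtain ⟨a, ha⟩ := exists_isIntegralCurve_drivenField hy
  exact lt_of_isIntegralCurve_drivenField (ha j)
    (isIntegralCurve_drivenField_add_two_pi (ha k)) h t

theorem eq_add_two_pi_of_isIntegralCurve_arrayField
    (hy : IsIntegralCurve y fun _ ↦ arrayField I) {j k : ι} (h : y 0 j = y 0 k + 2 * π) (t : ℝ) :
    y t j = y t k + 2 * π := by
  obtain ⟨a, ha⟩ := exists_isIntegralCurve_drivenField hy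
  exact congrFun (eq_of_isIntegralCurve (lipschitzWith_drivenField a) (ha j)
    (isIntegralCurve_drivenField_add_two_pi (ha k)) h) t

theorem eq_sub_of_isIntegralCurve_arrayField (hy : IsIntegralCurve y fun _ ↦ arrayField I)
    (σ : Equiv.Perm ι) {c : ι → ℝ} (hc : ∀ j x, cos (c j - x) = cos x) {s : ℝ}
    (hs : ∀ j, y s j = c j - y s (σ j)) (t : ℝ) (j : ι) : y t j = c j - y (2 * s - t) (σ j) := by
  have reflected : IsIntegralCurve (fun t j ↦ c j - y (2 * s - t) (σ j)) fun _ ↦ arrayField I := by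
    refine fun t ↦ hasDerivAt_pi.2 fun j ↦ (((hasDerivAt_pi.1 (hy (2 * s - t)) (σ j)).comp t
      ((hasDerivAt_id t).const_sub (2 * s))).const_sub (c j)).congr_deriv ?_
    have expect_reindex : 𝔼 j, cos (y (2 * s - t) (σ j)) = 𝔼 j, cos (y (2 * s - t) j) :=
      Fintype.expect_equiv σ _ _ fun _ ↦ rfl
    simp only [arrayField, hc, expect_reindex]
    ring
  refine congrFun (congrFun (eq_of_isIntegralCurve (fun _ ↦ lipschitzWith_arrayField) hy reflected
    (t₀ := s) (funext fun j ↦ ?_)) t) j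
  simpa only [two_mul, add_sub_cancel_left] using hs j

variable [Nonempty ι]

theorem expect_arrayField (x : ι → ℝ) : 𝔼 j, arrayField I x j = (I - 𝔼 j, cos (x j)) / 2 := by
  simp only [arrayField, Finset.expect_sub_distrib, Fintype.expect_const]
  ring

theorem hasDerivAt_expect (hy : IsIntegralCurve y fun _ ↦ arrayField I) (t : ℝ) :
    HasDerivAt (fun t ↦ 𝔼 j, y t j) ((I - 𝔼 j, cos (y t j)) / 2) t := by
  rw [← expect_arrayField]
  simp only [Fintype.expect_eq_sum_div_card]
  exact (HasDerivAt.fun_sum fun j _ ↦ hasDerivAt_pi.1 (hy t) j).div_const _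

theorem mul_sub_le_expect_sub_expect (hy : IsIntegralCurve y fun _ ↦ arrayField I) {s t : ℝ}
    (hst : s ≤ t) : (I - 1) / 2 * (t - s) ≤ 𝔼 j, y t j - 𝔼 j, y s j := by
  refine mul_sub_le_image_sub_of_le_deriv
    (fun t ↦ (hasDerivAt_expect hy t).differentiableAt) (fun t ↦ ?_) hst
  have expect_cos_le_one : 𝔼 j, cos (y t j) ≤ 1 :=
    Finset.expect_le Finset.univ_nonempty fun j _ ↦ cos_le_one _
  rw [(hasDerivAt_expect hy t).deriv]
  linarith

theorem strictMono_expect (hI : 1 < I) (hy : IsIntegralCurve y fun _ ↦ arrayField I) :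
    StrictMono fun t ↦ 𝔼 j, y t j := fun s t hst ↦ by
  have hpos : 0 < (I - 1) / 2 * (t - s) := mul_pos (by linarith) (sub_pos.2 hst)
  linarith [mul_sub_le_expect_sub_expect hy hst.le]

theorem exists_pos_expect_eq (hI : 1 < I) (hy : IsIntegralCurve y fun _ ↦ arrayField I) {c : ℝ}
    (hc : 𝔼 j, y 0 j < c) : ∃ t, 0 < t ∧ 𝔼 j, y t j = c := by
  set m := 𝔼 j, y 0 j
  set t₁ := (c - m) / ((I - 1) / 2)
  have ht₁ : 0 < t₁ := div_pos (sub_pos.2 hc) (by linarith)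
  have hle : c ≤ 𝔼 j, y t₁ j := by
    have := mul_sub_le_expect_sub_expect hy ht₁.le
    rw [sub_zero, mul_div_cancel₀ _ (by linarith : (I - 1) / 2 ≠ 0)] at this
    linarith
  obtain ⟨t, ht, hct⟩ := intermediate_value_Ioc ht₁.le
    (fun t _ ↦ (hasDerivAt_expect hy t).continuousAt.continuousWithinAt) ⟨hc, hle⟩
  exact ⟨t, ht.1, hct⟩

end ArrayField

/-- A point of the complex plane whose argument encodes `mobiusPhase`. -/
noncomputable def mobiusVec (l x : ℝ) : ℂ := ⟨(1 - l) * sin (x / 2), l * cos (x / 2)⟩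

/-- The action on phases of the hyperbolic Möbius transformation of the circle that fixes `0` and
`π`: its half-angle tangent is `(1 - l) / l * tan (x / 2)`. At `l = 1 / 2` it is the identity of
`[0, 2 * π]`; as `l` tends to `0` or `1` it collapses the phases onto `π` or `0`. -/
noncomputable def mobiusPhase (l x : ℝ) : ℝ := π - 2 * (mobiusVec l x).arg

section MobiusPhase

variable {l x : ℝ}

theorem sin_half_nonneg_of_mem_Icc (hx : x ∈ Icc 0 (2 * π)) : 0 ≤ sin (x / 2) :=
  sin_nonneg_of_nonneg_of_le_pi (by linarith [hx.1]) (by linarith [hx.2])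

theorem abs_arg_mobiusVec_le (hl : l ≤ 1) (hx : x ∈ Icc 0 (2 * π)) :
    |(mobiusVec l x).arg| ≤ π / 2 :=
  Complex.abs_arg_le_pi_div_two_iff.2
    (mul_nonneg (sub_nonneg.2 hl) (sin_half_nonneg_of_mem_Icc hx))

theorem mobiusPhase_mem_Icc (hl : l ≤ 1) (hx : x ∈ Icc 0 (2 * π)) :
    mobiusPhase l x ∈ Icc 0 (2 * π) := by
  obtain ⟨hge, hle⟩ := abs_le.1 (abs_arg_mobiusVec_le hl hx)
  constructor <;> rw [mobiusPhase] <;> linarith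

theorem mobiusPhase_two_pi_sub (hl : l ≤ 1) (hx : x ∈ Icc 0 (2 * π)) :
    mobiusPhase l (2 * π - x) = 2 * π - mobiusPhase l x := by
  have vec_eq : mobiusVec l (2 * π - x) = starRingEnd ℂ (mobiusVec l x) := by
    apply Complex.ext <;>
      simp only [mobiusVec, Complex.conj_re, Complex.conj_im,
        show (2 * π - x) / 2 = π - x / 2 by ring, sin_pi_sub, cos_pi_sub, mul_neg]
  have arg_ne_pi : (mobiusVec l x).arg ≠ π := by
    intro h
    linarith [pi_pos, le_abs_self (mobiusVec l x).arg, abs_arg_mobiusVec_le hl hx]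
  rw [mobiusPhase, mobiusPhase, vec_eq, Complex.arg_conj, if_neg arg_ne_pi]
  ring

theorem mobiusPhase_zero_left (hx : x ∈ Icc 0 (2 * π)) : mobiusPhase 0 x = π := by
  have arg_eq_zero : (mobiusVec 0 x).arg = 0 := Complex.arg_eq_zero_iff.2
    ⟨by simpa [mobiusVec] using sin_half_nonneg_of_mem_Icc hx, by simp [mobiusVec]⟩
  rw [mobiusPhase, arg_eq_zero, mul_zero, sub_zero]

theorem mobiusPhase_one_left (hx : 0 < cos (x / 2)) : mobiusPhase 1 x = 0 := by
  have arg_eq : (mobiusVec 1 x).arg = π / 2 :=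
    Complex.arg_eq_pi_div_two_iff.2 (by simpa [mobiusVec] using hx)
  rw [mobiusPhase, arg_eq]
  ring

theorem mobiusPhase_zero_right (hl : 0 < l) : mobiusPhase l 0 = 0 := by
  have arg_eq : (mobiusVec l 0).arg = π / 2 :=
    Complex.arg_eq_pi_div_two_iff.2 (by simpa [mobiusVec] using hl)
  rw [mobiusPhase, arg_eq]
  ring

theorem mobiusPhase_le_pi (hl : 0 ≤ l) (hx : 0 ≤ cos (x / 2)) : mobiusPhase l x ≤ π := by
  have arg_nonneg : 0 ≤ (mobiusVec l x).arg := Complex.arg_nonneg_iff.2 (mul_nonneg hl hx)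
  rw [mobiusPhase]
  linarith

theorem continuous_mobiusPhase (hx : 0 < sin (x / 2)) :
    Continuous fun l : unitInterval ↦ mobiusPhase l x := by
  have re_nonneg (l : unitInterval) : 0 ≤ (mobiusVec l x).re :=
    mul_nonneg (sub_nonneg.2 l.2.2) hx.le
  simp only [mobiusPhase]
  by_cases hcos : cos (x / 2) = 0
  · have arg_eq_zero (l : unitInterval) : (mobiusVec l x).arg = 0 :=
      Complex.arg_eq_zero_iff.2 ⟨re_nonneg l, by simp [mobiusVec, hcos]⟩
    simp only [arg_eq_zero]
    exact continuous_const
  · have vec_mem_slitPlane (l : unitInterval) : mobiusVec l x ∈ Complex.slitPlane := by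
      refine Complex.mem_slitPlane_iff.2 (or_iff_not_imp_right.2 fun him ↦ ?_)
      have hl : (l : ℝ) = 0 := (mul_eq_zero.1 (not_not.1 him)).resolve_right hcos
      simpa [mobiusVec, hl] using hx
    have continuous_vec : Continuous fun l : unitInterval ↦ mobiusVec l x := by
      simp only [mobiusVec, Complex.mk_eq_add_mul_I]
      fun_prop
    have continuous_arg : Continuous fun l : unitInterval ↦ (mobiusVec l x).arg :=
      continuous_iff_continuousAt.2 fun l ↦ ContinuousAt.comp
        (f := fun l : unitInterval ↦ mobiusVec l x)
        (Complex.continuousAt_arg (vec_mem_slitPlane l)) continuous_vec.continuousAt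
    fun_prop

theorem mobiusVec_ne_zero (hl : l ∈ Ioo 0 1) (x : ℝ) : mobiusVec l x ≠ 0 := by
  intro h
  have hsin : sin (x / 2) = 0 :=
    (mul_eq_zero.1 (congrArg Complex.re h)).resolve_left (sub_pos.2 hl.2).ne'
  have hcos : cos (x / 2) = 0 := (mul_eq_zero.1 (congrArg Complex.im h)).resolve_left hl.1.ne'
  simpa [hsin, hcos] using sin_sq_add_cos_sq (x / 2)

theorem sin_half_sub_mobiusPhase (hl : l ∈ Ioo 0 1) (x y : ℝ) :
    sin ((mobiusPhase l x - mobiusPhase l y) / 2) =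
      sin ((x - y) / 2) * (l * (1 - l)) / (‖mobiusVec l x‖ * ‖mobiusVec l y‖) := by
  have hx := mobiusVec_ne_zero hl x
  have hy := mobiusVec_ne_zero hl y
  rw [show (mobiusPhase l x - mobiusPhase l y) / 2 =
      (mobiusVec l y).arg - (mobiusVec l x).arg by rw [mobiusPhase, mobiusPhase]; ring,
    sin_sub, Complex.sin_arg, Complex.sin_arg, Complex.cos_arg hx, Complex.cos_arg hy,
    sub_div x, sin_sub]
  have := norm_pos_iff.2 hx
  have := norm_pos_iff.2 hy
  field_simp
  simp only [mobiusVec]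
  ring

theorem chordSimilar_mobiusPhase {ι : Type*} (hl : l ∈ Ioo 0 1) (x : ι → ℝ) :
    ChordSimilar (fun j ↦ mobiusPhase l (x j)) x := by
  have hpos : 0 < l * (1 - l) := mul_pos hl.1 (sub_pos.2 hl.2)
  refine ⟨fun j ↦ √(l * (1 - l)) / ‖mobiusVec l (x j)‖, fun j ↦
    div_pos (sqrt_pos.2 hpos) (norm_pos_iff.2 (mobiusVec_ne_zero hl _)), fun j k ↦ ?_⟩
  rw [sin_half_sub_mobiusPhase hl, mul_assoc, div_mul_div_comm, mul_self_sqrt hpos.le,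
    mul_div_assoc]

end MobiusPhase

/-- `n + 1` phases evenly spaced around the circle. -/
noncomputable def splayPhases (n : ℕ) (j : Fin (n + 1)) : ℝ := 2 * π * j / (n + 1)

section SplayPhases

variable {n : ℕ}

theorem splayPhases_sub_mem_Ioo {j k : Fin (n + 1)} (hkj : k < j) :
    splayPhases n j - splayPhases n k ∈ Ioo 0 (2 * π) := by
  have hlt : (k : ℝ) < j := mod_cast hkj
  have hj : (j : ℝ) < n + 1 := mod_cast j.2
  rw [splayPhases, splayPhases, ← sub_div, ← mul_sub]
  refine ⟨by have := sub_pos.2 hlt; positivity, ?_⟩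
  rw [div_lt_iff₀ (by positivity)]
  gcongr
  linarith [k.val.cast_nonneg (α := ℝ)]

theorem splayPhases_zero : splayPhases n 0 = 0 := by simp [splayPhases]

theorem splayPhases_mem_Ioo {j : Fin (n + 1)} (hj : j ≠ 0) : splayPhases n j ∈ Ioo 0 (2 * π) := by
  simpa only [splayPhases_zero, sub_zero] using splayPhases_sub_mem_Ioo (Fin.pos_of_ne_zero hj)

theorem splayPhases_mem_Icc (j : Fin (n + 1)) : splayPhases n j ∈ Icc 0 (2 * π) := by
  rcases eq_or_ne j 0 with rfl | hj
  · simp [splayPhases_zero, pi_pos.le]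
  · exact Ioo_subset_Icc_self (splayPhases_mem_Ioo hj)

theorem splayPhases_neg {j : Fin (n + 1)} (hj : j ≠ 0) :
    splayPhases n (-j) = 2 * π - splayPhases n j := by
  have val_neg : ((-j : Fin (n + 1)) : ℝ) = n + 1 - j := by
    have hpos : 0 < (j : ℕ) := Fin.pos_of_ne_zero hj
    rw [Fin.val_neg', Nat.mod_eq_of_lt (by omega), Nat.cast_sub j.2.le]
    push_cast
    rfl
  rw [splayPhases, splayPhases, val_neg]
  field_simp

theorem splayPhases_add_rev (j : Fin (n + 1)) :
    splayPhases n j + splayPhases n j.rev = 2 * π * n / (n + 1) := by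
  have val_rev : (j.rev : ℝ) = n - j := by
    rw [Fin.val_rev, Nat.cast_sub (by omega)]
    push_cast
    ring
  rw [splayPhases, splayPhases, val_rev]
  ring

theorem cos_half_splayPhases_nonneg {j : Fin (n + 1)} (hj : 2 * (j : ℕ) ≤ n + 1) :
    0 ≤ cos (splayPhases n j / 2) := by
  have hle : (2 * j : ℝ) ≤ n + 1 := mod_cast hj
  have half_le : splayPhases n j / 2 ≤ π / 2 := by
    gcongr
    rw [splayPhases, div_le_iff₀ (by positivity)]
    nlinarith [pi_pos]
  exact cos_nonneg_of_neg_pi_div_two_le_of_le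
    (by linarith [pi_pos, (splayPhases_mem_Icc j).1]) half_le

theorem cos_half_splayPhases_pos {j : Fin (n + 1)} (hj : 2 * (j : ℕ) < n + 1) :
    0 < cos (splayPhases n j / 2) := by
  have hlt : (2 * j : ℝ) < n + 1 := mod_cast hj
  have half_lt : splayPhases n j / 2 < π / 2 := by
    gcongr
    rw [splayPhases, div_lt_iff₀ (by positivity)]
    nlinarith [pi_pos]
  exact cos_pos_of_mem_Ioo ⟨by linarith [pi_pos, (splayPhases_mem_Icc j).1], half_lt⟩

end SplayPhases

/-- The initial phases of the shooting argument: Möbius images of the splay phases, with the phase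
`0` pinned separately because `mobiusPhase l 0` jumps from `0` to `π` at `l = 0`. -/
noncomputable def initialPhases (n : ℕ) (l : ℝ) (j : Fin (n + 1)) : ℝ :=
  if j = 0 then 0 else mobiusPhase l (splayPhases n j)

section InitialPhases

variable {n : ℕ} {l : ℝ}

theorem initialPhases_zero : initialPhases n l 0 = 0 := if_pos rfl

theorem initialPhases_of_ne_zero {j : Fin (n + 1)} (hj : j ≠ 0) :
    initialPhases n l j = mobiusPhase l (splayPhases n j) := if_neg hj

theorem initialPhases_mem_Icc (hl : l ≤ 1) (j : Fin (n + 1)) :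
    initialPhases n l j ∈ Icc 0 (2 * π) := by
  rcases eq_or_ne j 0 with rfl | hj
  · simp [initialPhases_zero, pi_pos.le]
  · exact initialPhases_of_ne_zero hj ▸ mobiusPhase_mem_Icc hl (splayPhases_mem_Icc j)

theorem initialPhases_eq_sub_neg (hl : l ≤ 1) (j : Fin (n + 1)) :
    initialPhases n l j = (if j = 0 then 0 else 2 * π) - initialPhases n l (-j) := by
  rcases eq_or_ne j 0 with rfl | hj
  · simp [initialPhases_zero]
  · rw [if_neg hj, initialPhases_of_ne_zero hj, initialPhases_of_ne_zero (neg_ne_zero.2 hj),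
      splayPhases_neg hj, mobiusPhase_two_pi_sub hl (splayPhases_mem_Icc j), sub_sub_cancel]

theorem expect_initialPhases_lt_pi (hl : l ≤ 1) : 𝔼 j, initialPhases n l j < π := by
  have pair_eq (j : Fin (n + 1)) :
      initialPhases n l j + initialPhases n l (-j) = if j = 0 then 0 else 2 * π := by
    linarith [initialPhases_eq_sub_neg hl j]
  have expect_pair : 𝔼 j, (initialPhases n l j + initialPhases n l (-j)) =
      2 * 𝔼 j, initialPhases n l j := expect_add_perm (initialPhases n l) (Equiv.neg _)
  have expect_lt : 𝔼 j, (initialPhases n l j + initialPhases n l (-j)) < 2 * π := by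
    refine Finset.expect_lt (fun j _ ↦ ?_) ⟨0, Finset.mem_univ _, ?_⟩
    · rw [pair_eq]
      split_ifs <;> linarith [pi_pos]
    · simpa [initialPhases_zero] using pi_pos
  linarith

theorem chordSimilar_initialPhases (hl : l ∈ Ioo 0 1) :
    ChordSimilar (initialPhases n l) (splayPhases n) := by
  have initialPhases_eq : initialPhases n l = fun j ↦ mobiusPhase l (splayPhases n j) := by
    funext j
    rcases eq_or_ne j 0 with rfl | hj
    · rw [initialPhases_zero, splayPhases_zero, mobiusPhase_zero_right hl.1]
    · exact initialPhases_of_ne_zero hj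
  exact initialPhases_eq ▸ chordSimilar_mobiusPhase hl _

theorem initialPhases_sub_mem_Ioo (hl : l ∈ Ioo 0 1) {j k : Fin (n + 1)} (hkj : k < j) :
    initialPhases n l j - initialPhases n l k ∈ Ioo 0 (2 * π) := by
  obtain ⟨hj₀, hj⟩ := initialPhases_mem_Icc hl.2.le j
  obtain ⟨hk₀, hk⟩ := initialPhases_mem_Icc hl.2.le k
  exact (chordSimilar_initialPhases hl).sub_mem_Ioo (splayPhases_sub_mem_Ioo hkj)
    ⟨by linarith, by linarith⟩

theorem strictMono_initialPhases (hl : l ∈ Ioo 0 1) : StrictMono (initialPhases n l) :=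
  fun _ _ hjk ↦ sub_pos.1 (initialPhases_sub_mem_Ioo hl hjk).1

theorem initialPhases_lt_two_pi (hl : l ∈ Ioo 0 1) (j : Fin (n + 1)) :
    initialPhases n l j < 2 * π := by
  rcases eq_or_ne j 0 with rfl | hj
  · simp [initialPhases_zero, pi_pos]
  · simpa only [initialPhases_zero, sub_zero] using
      (initialPhases_sub_mem_Ioo hl (Fin.pos_of_ne_zero hj)).2

theorem continuous_initialPhases : Continuous fun l : unitInterval ↦ initialPhases n l := by
  refine continuous_pi fun j ↦ ?_
  rcases eq_or_ne j 0 with rfl | hj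
  · simpa only [initialPhases_zero] using continuous_const
  · simp only [initialPhases_of_ne_zero hj]
    obtain ⟨hpos, hlt⟩ := splayPhases_mem_Ioo hj
    exact continuous_mobiusPhase (sin_pos_of_pos_of_lt_pi (by linarith) (by linarith))

theorem initialPhases_zero_left {j : Fin (n + 1)} (hj : j ≠ 0) : initialPhases n 0 j = π := by
  rw [initialPhases_of_ne_zero hj, mobiusPhase_zero_left (splayPhases_mem_Icc j)]

theorem initialPhases_le_pi (hl : 0 ≤ l) {j : Fin (n + 1)} (hj : 2 * (j : ℕ) ≤ n + 1) :
    initialPhases n l j ≤ π := by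
  rcases eq_or_ne j 0 with rfl | hj₀
  · simp [initialPhases_zero, pi_pos.le]
  · exact initialPhases_of_ne_zero hj₀ ▸ mobiusPhase_le_pi hl (cos_half_splayPhases_nonneg hj)

theorem initialPhases_one_left {j : Fin (n + 1)} (hj : 2 * (j : ℕ) < n + 1) :
    initialPhases n 1 j = 0 := by
  rcases eq_or_ne j 0 with rfl | hj₀
  · exact initialPhases_zero
  · rw [initialPhases_of_ne_zero hj₀, mobiusPhase_one_left (cos_half_splayPhases_pos hj)]

end InitialPhases

theorem exists_continuous_hitting_family {ι Λ : Type*} [Fintype ι] [Nonempty ι]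
    [TopologicalSpace Λ] {I c : ℝ} (hI : 1 < I) {p : Λ → ι → ℝ} (hp : Continuous p)
    (hpc : ∀ l, 𝔼 j, p l j < c) :
    ∃ (Y : Λ → ℝ → ι → ℝ) (τ : Λ → ℝ), (∀ l, Y l 0 = p l) ∧
      (∀ l, IsIntegralCurve (Y l) fun _ ↦ arrayField I) ∧ (∀ l, 0 < τ l) ∧
      (∀ l, 𝔼 j, Y l (τ l) j = c) ∧ Continuous fun l ↦ Y l (τ l) := by
  obtain ⟨φ, hφ₀, hφ, hφc⟩ :=
    exists_continuous_flow_of_lipschitzWith (E := ι → ℝ) lipschitzWith_arrayField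
      (contDiff_arrayField (I := I))
  choose τ hτ_pos hτ using fun l ↦ exists_pos_expect_eq hI (hφ (p l)) (by rw [hφ₀]; exact hpc l)
  have hτc : Continuous τ := by
    refine continuous_of_strictMono_of_eq (F := fun l t ↦ 𝔼 j, φ (p l) t j) (fun t ↦ ?_)
      (fun l ↦ strictMono_expect hI (hφ (p l))) hτ
    simp only [Fintype.expect_eq_sum_div_card]
    have : Continuous fun l ↦ φ (p l) t := hφc.comp (hp.prodMk continuous_const)
    fun_prop
  exact ⟨fun l ↦ φ (p l), τ, fun l ↦ hφ₀ _, fun l ↦ hφ _, hτ_pos, hτ, hφc.comp (hp.prodMk hτc)⟩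

section Shooting

variable {n : ℕ} {I : ℝ} {y : ℝ → Fin (n + 1) → ℝ}

theorem zero_add_last_lt_of_initialPhases_zero (hn : 2 ≤ n)
    (hy : IsIntegralCurve y fun _ ↦ arrayField I) (hy₀ : y 0 = initialPhases n 0) (t : ℝ) :
    y t 0 + y t (Fin.last n) < 2 * 𝔼 j, y t j := by
  have last_ne_zero : Fin.last n ≠ 0 := by simp [Fin.ext_iff]; omega
  have initial_eq {j : Fin (n + 1)} (hj : j ≠ 0) : y 0 j = π := by
    rw [hy₀, initialPhases_zero_left hj]
  have eq_last {j : Fin (n + 1)} (hj : j ≠ 0) : y t j = y t (Fin.last n) := by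
    have heq : y 0 j = y 0 (Fin.last n) := (initial_eq hj).trans (initial_eq last_ne_zero).symm
    exact (le_of_isIntegralCurve_arrayField hy heq.le t).antisymm
      (le_of_isIntegralCurve_arrayField hy heq.ge t)
  have zero_lt : y t 0 < y t (Fin.last n) := by
    refine lt_of_isIntegralCurve_arrayField hy ?_ t
    rw [initial_eq last_ne_zero, hy₀, initialPhases_zero]
    exact pi_pos
  have zero_le (j : Fin (n + 1)) : y t 0 ≤ y t j := by
    rcases eq_or_ne j 0 with rfl | hj
    · rfl
    · exact eq_last hj ▸ zero_lt.le
  rw [← expect_add_perm (y t) Fin.revPerm]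
  let one : Fin (n + 1) := ⟨1, by omega⟩
  have one_ne_zero : one ≠ 0 := by simp [one, Fin.ext_iff]
  have rev_one_ne_zero : one.rev ≠ 0 := by simp [one, Fin.ext_iff, Fin.val_rev]; omega
  refine Finset.lt_expect (fun j _ ↦ ?_) ⟨one, Finset.mem_univ _, ?_⟩
  · rcases eq_or_ne j 0 with rfl | hj
    · rw [Fin.revPerm_apply, Fin.rev_zero]
    · linarith [eq_last hj, zero_le (Fin.revPerm j)]
  · rw [Fin.revPerm_apply, eq_last one_ne_zero, eq_last rev_one_ne_zero]
    linarith

theorem lt_zero_add_last_of_initialPhases_one (hn : 2 ≤ n)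
    (hy : IsIntegralCurve y fun _ ↦ arrayField I) (hy₀ : y 0 = initialPhases n 1) (t : ℝ) :
    2 * 𝔼 j, y t j < y t 0 + y t (Fin.last n) := by
  have initial_last : initialPhases n 1 (Fin.last n) = 2 * π := by
    rw [initialPhases_eq_sub_neg le_rfl, neg_eq_of_add_eq_zero_right (Fin.last_add_one n),
      if_neg (by simp [Fin.ext_iff]; omega), initialPhases_one_left, sub_zero]
    rw [Fin.val_one', Nat.mod_eq_of_lt] <;> omega
  have last_eq : y t (Fin.last n) = y t 0 + 2 * π := by
    refine eq_add_two_pi_of_isIntegralCurve_arrayField hy ?_ t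
    rw [hy₀, initial_last, initialPhases_zero, zero_add]
  have le_last (j : Fin (n + 1)) : y t j ≤ y t (Fin.last n) := by
    refine le_of_isIntegralCurve_arrayField hy ?_ t
    rw [hy₀, initial_last]
    exact (initialPhases_mem_Icc le_rfl j).2
  have eq_zero {j : Fin (n + 1)} (hj : 2 * (j : ℕ) < n + 1) : y t j = y t 0 := by
    have heq : y 0 j = y 0 0 := by rw [hy₀, initialPhases_one_left hj, initialPhases_zero]
    exact (le_of_isIntegralCurve_arrayField hy heq.le t).antisymm
      (le_of_isIntegralCurve_arrayField hy heq.ge t)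
  rw [← expect_add_perm (y t) Fin.revPerm]
  refine Finset.expect_lt (fun j _ ↦ ?_) ⟨⟨(n + 1) / 2, by omega⟩, Finset.mem_univ _, ?_⟩
  · rw [Fin.revPerm_apply]
    by_cases hj : 2 * (j : ℕ) < n + 1
    · linarith [eq_zero hj, le_last j.rev]
    · linarith [eq_zero (j := j.rev) (by rw [Fin.val_rev]; omega), le_last j]
  · set m : Fin (n + 1) := ⟨(n + 1) / 2, by omega⟩ with hm
    have middle_lt : y t m < y t 0 + 2 * π := by
      refine lt_add_two_pi_of_isIntegralCurve_arrayField hy ?_ t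
      rw [hy₀, initialPhases_zero, zero_add]
      linarith [pi_pos, initialPhases_le_pi zero_le_one (j := m) (by simp only [hm]; omega)]
    rw [Fin.revPerm_apply]
    linarith [eq_zero (j := m.rev) (by simp only [hm, Fin.val_rev]; omega)]

theorem add_rev_eq_two_pi_of_initialPhases {l : ℝ} (hl : l ∈ Ioo 0 1)
    (hy : IsIntegralCurve y fun _ ↦ arrayField I) (hy₀ : y 0 = initialPhases n l) {t : ℝ}
    (hmean : 𝔼 j, y t j = π) (hends : y t 0 + y t (Fin.last n) = 2 * π) (j : Fin (n + 1)) :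
    y t j + y t j.rev = 2 * π := by
  have monotone_phases {j k : Fin (n + 1)} (hjk : j ≤ k) : y t j ≤ y t k :=
    le_of_isIntegralCurve_arrayField hy
      (hy₀ ▸ (strictMono_initialPhases hl).monotone hjk) t
  have last_lt : y t (Fin.last n) < y t 0 + 2 * π := by
    refine lt_add_two_pi_of_isIntegralCurve_arrayField hy ?_ t
    rw [hy₀, initialPhases_zero, zero_add]
    exact initialPhases_lt_two_pi hl _
  have similar : ChordSimilar (y t) (splayPhases n) :=
    (chordSimilar_of_isIntegralCurve hy t).trans (hy₀ ▸ chordSimilar_initialPhases hl)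
  refine similar.add_perm_eq_two_pi Fin.revPerm (o := 0) splayPhases_add_rev (fun j ↦ ?_)
    (fun j ↦ ⟨monotone_phases (Fin.zero_le j), ?_⟩) ?_ ?_ hmean j
  · simpa only [splayPhases_zero, sub_zero] using splayPhases_mem_Icc j
  all_goals rw [Fin.revPerm_apply, Fin.rev_zero]
  exacts [monotone_phases (Fin.le_last j), last_lt, hends]

theorem add_rev_eq_two_mul_expect_of_le_one (hn : n ≤ 1) (x : Fin (n + 1) → ℝ)
    (j : Fin (n + 1)) : x j + x j.rev = 2 * 𝔼 i, x i := by
  have add_rev_const (i : Fin (n + 1)) : x i + x (Fin.revPerm i) = x j + x j.rev := by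
    interval_cases n
    · rw [Fin.revPerm_apply, Subsingleton.elim (α := Fin 1) i j]
    · rw [Fin.revPerm_apply]
      fin_cases i <;> fin_cases j <;> simp [Fin.rev, add_comm]
  rw [← expect_add_perm x Fin.revPerm, Finset.expect_congr rfl fun i _ ↦ add_rev_const i,
    Fintype.expect_const]

theorem exists_symmetric_orbit (n : ℕ) (hI : 1 < I) :
    ∃ (y : ℝ → Fin (n + 1) → ℝ) (t₁ : ℝ), (IsIntegralCurve y fun _ ↦ arrayField I) ∧ 0 < t₁ ∧
      (∀ j, y 0 j = (if j = 0 then 0 else 2 * π) - y 0 (-j)) ∧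
      ∀ j, y t₁ j = 2 * π - y t₁ j.rev := by
  obtain ⟨Y, τ, hY₀, hY, hτ_pos, hmean, hcont⟩ := exists_continuous_hitting_family hI
    (continuous_initialPhases (n := n)) fun l ↦ expect_initialPhases_lt_pi l.2.2
  suffices ∃ l, ∀ j, Y l (τ l) j + Y l (τ l) j.rev = 2 * π by
    obtain ⟨l, hl⟩ := this
    exact ⟨Y l, τ l, hY l, hτ_pos l, fun j ↦ hY₀ l ▸ initialPhases_eq_sub_neg l.2.2 j,
      fun j ↦ eq_sub_of_add_eq (hl j)⟩
  rcases le_or_gt n 1 with hn | hn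
  · exact ⟨0, fun j ↦ by rw [add_rev_eq_two_mul_expect_of_le_one hn, hmean]⟩
  let ends : unitInterval → ℝ := fun l ↦ Y l (τ l) 0 + Y l (τ l) (Fin.last n)
  have ends_zero_lt : ends 0 < 2 * π :=
    hmean 0 ▸ zero_add_last_lt_of_initialPhases_zero hn (hY 0) (hY₀ 0) _
  have lt_ends_one : 2 * π < ends 1 :=
    hmean 1 ▸ lt_zero_add_last_of_initialPhases_one hn (hY 1) (hY₀ 1) _
  have continuous_ends : Continuous ends :=
    (continuous_pi_iff.1 hcont 0).add (continuous_pi_iff.1 hcont (Fin.last n))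
  obtain ⟨l, hl⟩ := mem_range_of_exists_le_of_exists_ge continuous_ends
    ⟨0, ends_zero_lt.le⟩ ⟨1, lt_ends_one.le⟩
  have l_pos : 0 < l := unitInterval.pos_iff_ne_zero.2 (by rintro rfl; exact ends_zero_lt.ne hl)
  have l_lt_one : l < 1 := unitInterval.lt_one_iff_ne_one.2 (by
    rintro rfl; exact lt_ends_one.ne' hl)
  exact ⟨l, add_rev_eq_two_pi_of_initialPhases ⟨l_pos, l_lt_one⟩ (hY l) (hY₀ l) (hmean l) hl⟩

end Shooting

/-- After time `s` each oscillator has taken over the phase of its successor, the last one that of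
the first advanced by a full turn. -/
def IsRotatingWave {n : ℕ} (y : ℝ → Fin (n + 1) → ℝ) (s : ℝ) : Prop :=
  ∀ t j, y (t + s) j = y t (j + 1) + if j = Fin.last n then 2 * π else 0

section RotatingWave

variable {n : ℕ} {I : ℝ} {y : ℝ → Fin (n + 1) → ℝ}

theorem isRotatingWave_of_symmetric (hy : IsIntegralCurve y fun _ ↦ arrayField I) {t₁ : ℝ}
    (h₀ : ∀ j, y 0 j = (if j = 0 then 0 else 2 * π) - y 0 (-j))
    (h₁ : ∀ j, y t₁ j = 2 * π - y t₁ j.rev) : IsRotatingWave y (2 * t₁) := by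
  intro t j
  have reflect_zero := eq_sub_of_isIntegralCurve_arrayField hy (Equiv.neg _)
    (c := fun j ↦ if j = 0 then 0 else 2 * π)
    (fun j x ↦ by split_ifs <;> simp [cos_two_pi_sub]) h₀ (-t) j.rev
  have reflect_t₁ := eq_sub_of_isIntegralCurve_arrayField hy Fin.revPerm (c := fun _ ↦ 2 * π)
    (fun _ ↦ cos_two_pi_sub) h₁ (t + 2 * t₁) j
  have neg_rev : -j.rev = j + 1 := by
    rw [← Fin.last_sub, neg_sub, sub_eq_add_neg, neg_eq_of_add_eq_zero_right (Fin.last_add_one n)]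
  have rev_eq_zero : j.rev = 0 ↔ j = Fin.last n := by
    rw [← Fin.rev_last, Fin.rev_inj]
  rw [mul_zero, zero_sub, neg_neg, Equiv.neg_apply, neg_rev] at reflect_zero
  rw [sub_add_cancel_right, Fin.revPerm_apply] at reflect_t₁
  simp only [reflect_t₁, reflect_zero, rev_eq_zero]
  split_ifs <;> ring

theorem exists_isRotatingWave (n : ℕ) (hI : 1 < I) :
    ∃ (y : ℝ → Fin (n + 1) → ℝ) (s : ℝ), (IsIntegralCurve y fun _ ↦ arrayField I) ∧ 0 < s ∧
      IsRotatingWave y s := by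
  obtain ⟨y, t₁, hy, ht₁, h₀, h₁⟩ := exists_symmetric_orbit n hI
  exact ⟨y, 2 * t₁, hy, mul_pos two_pos ht₁, isRotatingWave_of_symmetric hy h₀ h₁⟩

namespace IsRotatingWave

variable {s : ℝ}

theorem apply_add_mul (hw : IsRotatingWave y s) (t : ℝ) (k : Fin (n + 1)) :
    y (t + k * s) 0 = y t k := by
  induction k using Fin.induction generalizing t with
  | zero => simp
  | succ k ih =>
    have hk := hw t k.castSucc
    rw [if_neg (Fin.castSucc_ne_last k), add_zero, Fin.coeSucc_eq_succ] at hk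
    rw [← hk, ← ih (t + s), Fin.val_succ, Fin.val_castSucc]
    congr 1
    push_cast
    ring

theorem isRunning (hw : IsRotatingWave y s) (c : ℝ) :
    IsRunning (fun t ↦ y t 0 + c) ((n + 1 : ℕ) * s) := by
  intro t
  have hperiod : y (t + (n + 1 : ℕ) * s) 0 = y t 0 + 2 * π := by
    have hlast := hw t (Fin.last n)
    rw [if_pos rfl, Fin.last_add_one] at hlast
    rw [← hlast, ← hw.apply_add_mul (t + s), Fin.val_last]
    congr 1
    push_cast
    ring
  simp only [hperiod]
  ring

theorem apply_sub_mul (hw : IsRotatingWave y s) (t : ℝ) (k : Fin (n + 1)) :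
    y (t - k * s) 0 = y (t - n * s) k.rev := by
  rw [← hw.apply_add_mul _ k.rev, Fin.val_rev, Nat.cast_sub (by omega)]
  congr 1
  push_cast
  ring

theorem deriv_add_sin_add_expect_deriv (hw : IsRotatingWave y s)
    (hy : IsIntegralCurve y fun _ ↦ arrayField I) (t : ℝ) (k : Fin (n + 1)) :
    deriv (fun r ↦ y (r - k * s) 0 + π / 2) t + sin (y (t - k * s) 0 + π / 2) +
      𝔼 j : Fin (n + 1), deriv (fun r ↦ y (r - j * s) 0 + π / 2) t = I := by
  set x := y (t - n * s)
  have deriv_eq (j : Fin (n + 1)) :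
      deriv (fun r ↦ y (r - j * s) 0 + π / 2) t = arrayField I x j.rev := by
    simp only [hw.apply_sub_mul]
    exact (((hasDerivAt_pi.1 (hy _) j.rev).comp_sub_const t _).add_const _).deriv
  have expect_reindex : 𝔼 j, arrayField I x (Fin.rev j) = 𝔼 j, arrayField I x j :=
    Fintype.expect_equiv Fin.revPerm _ _ fun _ ↦ rfl
  simp only [deriv_eq]
  rw [expect_reindex, expect_arrayField, hw.apply_sub_mul, sin_add_pi_div_two, arrayField]
  ring

end IsRotatingWave

end RotatingWave

theorem contDiff_apply_of_isIntegralCurve {ι : Type*} [Fintype ι] {I : ℝ} {y : ℝ → ι → ℝ}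
    (hy : IsIntegralCurve y fun _ ↦ arrayField I) (j : ι) : ContDiff ℝ 1 fun t ↦ y t j := by
  have contDiff_y : ContDiff ℝ 1 y := by
    refine contDiff_one_iff_deriv.2 ⟨fun t ↦ (hy t).differentiableAt, ?_⟩
    rw [funext fun t ↦ (hy t).deriv]
    exact contDiff_arrayField.continuous.comp hy.continuous
  exact contDiff_pi.1 contDiff_y j

/-- **(Mirollo.)** For `N ≥ 1` and `I > 1` the zero-capacitance (`β = 0`) Josephson
junction array with pure resistive load,
`φ_k' + sin (φ_k) + (1/N) ∑_j φ_j' = I`, admits a splay-phase (discrete rotating wave)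
solution: there are `T > 0` and a running function `ψ` of period `T` such that
`φ_j(t) = ψ(t − (j−1)T/N)` is a solution. -/
theorem mirollo_splay_phase (N : ℕ) (hN : 1 ≤ N) (I : ℝ) (hI : 1 < I) :
    ∃ (T : ℝ) (ψ : ℝ → ℝ), 0 < T ∧ ContDiff ℝ 1 ψ ∧ IsRunning ψ T ∧
      (∀ k : Fin N, ∀ t : ℝ,
        deriv (fun s => ψ (s - ((k : ℕ) : ℝ) * T / (N : ℝ))) t +
          Real.sin (ψ (t - ((k : ℕ) : ℝ) * T / (N : ℝ))) +
          (1 / (N : ℝ)) *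
            ∑ j : Fin N, deriv (fun s => ψ (s - ((j : ℕ) : ℝ) * T / (N : ℝ))) t = I) := by
  obtain ⟨n, rfl⟩ := Nat.exists_eq_add_of_le' hN
  obtain ⟨y, s, hy, hs, hw⟩ := exists_isRotatingWave n hI
  refine ⟨(n + 1 : ℕ) * s, fun t ↦ y t 0 + π / 2, by positivity,
    (contDiff_apply_of_isIntegralCurve hy 0).add contDiff_const, hw.isRunning _, fun k t ↦ ?_⟩
  have delay_eq (j : Fin (n + 1)) : j * ((n + 1 : ℕ) * s) / (n + 1 : ℕ) = j * s := by
    rw [mul_left_comm, mul_div_cancel_left₀ _ (by positivity)]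
  simpa only [delay_eq, one_div_mul_eq_div, Fintype.expect_eq_sum_div_card, Fintype.card_fin]
    using hw.deriv_add_sin_add_expect_deriv hy t k
end
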